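/- Let d ≥ 2, κ > 0, μ > 0, and let b : [0,∞) → ℝ be smooth with b(0) > 0, satisfying κ y b''(y) + b'(y) + (μ − κ y) b(y) = 0 for y > 0, and such that b and all its derivatives are rapidly decreasing. Let ψ ∈ C_c^∞(ℝ^{d−1}) be supported in {η : 0 < c₀ ≤ |η| ≤ c₁}, and let q > 2, r ≥ 2 with 1/q = ((d−1)/2)(1/2 − 1/r). Then there is C > 0, depending only on d, κ, μ, b, ψ, q, r, such that for every j ≥ 0 and every φ₀ ∈ 𝒮(ℝ^{d−1}), the gallery wave solution u(t, x_d, x′) = (2π)^{1−d} ∫ e^{i x′·ξ′} b(|ξ′| x_d) cos(t μ^{1/2}|ξ′|^{1/2}) ψ(2^{−2j}ξ′) φ̂₀(ξ′) dξ′ of (∂_t² − κ x_d Δ − ∂_d)u = 0 with data (u(0), ∂_t u(0)) = (u₀, 0) satisfies ‖u‖_{L^q([0,1]; L^r(Ω))} ≤ C (2^{2j})^{((3d+1)/4)(1/2 − 1/r) + 1/(2κ) − 1} ‖(0, ∇_x u₀)‖_ℋ, where u₀(x) = (2π)^{1−d} ∫ e^{i x′·ξ′} b(|ξ′| x_d)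 ψ(2^{−2j}ξ′) φ̂₀(ξ′) dξ′. -/

import Mathlib

open Real MeasureTheory
open scoped RealInnerProductSpace

noncomputable section

/-- The Fourier transform `φ̂(ξ) = ∫ e^{−ix·ξ} φ(x) dx`. -/
def fhat {n : ℕ} (φ : EuclideanSpace ℝ (Fin n) → ℂ)
    (ξ : EuclideanSpace ℝ (Fin n)) : ℂ :=
  ∫ x : EuclideanSpace ℝ (Fin n), Complex.exp (-Complex.I * (⟪x, ξ⟫ : ℝ)) * φ x

/-- The gallery wave
`u(t,x_d,x′) = (2π)^{1−d}∫ e^{ix′·ξ} b(|ξ|x_d) cos(tμ^{1/2}|ξ|^{1/2}) ψ(2^{−2j}ξ) φ̂₀(ξ) dξ`. -/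
def gw (d : ℕ) (μ : ℝ) (b : ℝ → ℝ) (ψ : EuclideanSpace ℝ (Fin (d - 1)) → ℝ)
    (j : ℕ) (φ₀ : EuclideanSpace ℝ (Fin (d - 1)) → ℂ)
    (t xd : ℝ) (x' : EuclideanSpace ℝ (Fin (d - 1))) : ℂ :=
  (((2 * π) ^ ((1 : ℤ) - (d : ℤ)) : ℝ) : ℂ) *
    ∫ ξ : EuclideanSpace ℝ (Fin (d - 1)),
      Complex.exp (Complex.I * (⟪x', ξ⟫ : ℝ)) * (b (‖ξ‖ * xd) : ℂ) *
        (Real.cos (t * Real.sqrt μ * Real.sqrt ‖ξ‖) : ℂ) *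
        (ψ (((2 : ℝ) ^ (2 * j))⁻¹ • ξ) : ℂ) * fhat φ₀ ξ

/-- Squared norm `∑ᵢ |∂ᵢ u₀|² + |∂_{x_d} u₀|²` of the spatial gradient. -/
def gradSq (d : ℕ) (u₀ : ℝ → EuclideanSpace ℝ (Fin (d - 1)) → ℂ)
    (xd : ℝ) (x' : EuclideanSpace ℝ (Fin (d - 1))) : ℝ :=
  (∑ i : Fin (d - 1),
      ‖fderiv ℝ (fun y => u₀ xd y) x' (EuclideanSpace.single i 1)‖ ^ 2)
    + ‖deriv (fun s => u₀ s x') xd‖ ^ 2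

/-!
For Fourier data `h` at frequency `l`, the wave at `(t, x, y)` is the `L²` pairing of `h` with a
wave packet, so the estimate follows by `T T*` from two bounds. The first is dispersive: pairing two
packets gives an oscillatory integral whose phase is, after rescaling to unit frequency, a multiple
of `√‖η‖`, whose gradient has a Lipschitz inverse on annuli. Cutting the integral into pieces at the
scale `|τ|^{-1/2}` on which the phase `τ √‖η‖` is affine up to `O(1)` shows that only pieces in one
ball of that size fail to decay, hence the bound `O(|τ|^{-(d-1)/2})`. The second is Plancherel in
`y` together with the decay of the profile `b` in `x`. Marcinkiewicz interpolation turns these into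
an `L^{r'} → L^r` bound that decays in `|t - s|`, and Hardy–Littlewood–Sobolev in time into the
`L^q L^r` estimate by `‖h‖_{L²}`.

On the other side, Plancherel and the substitution `s = ‖ξ‖ x` evaluate the energy of the initial
data as a moment of `b² + b'²` times `∫ ‖ξ‖^{1 - 1/κ} ‖h‖²`, which is comparable to
`l^{1 - 1/κ} ‖h‖²_{L²}`.
-/

theorem norm_cexp_I_mul_ofReal (x : ℝ) : ‖Complex.exp (Complex.I * x)‖ = 1 := by
  rw [mul_comm, Complex.norm_exp_ofReal_mul_I]

theorem lintegral_comp_smul {E : Type*} [NormedAddCommGroup E] [NormedSpace ℝ E]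
    [FiniteDimensional ℝ E] [MeasurableSpace E] [BorelSpace E] (ν : Measure E)
    [ν.IsAddHaarMeasure] (f : E → ENNReal) {R : ℝ} (hR : R ≠ 0) :
    ∫⁻ x, f (R • x) ∂ν
      = ENNReal.ofReal |(R ^ Module.finrank ℝ E)⁻¹| * ∫⁻ x, f x ∂ν := by
  have hmap := (Homeomorph.smulOfNeZero R hR).measurableEmbedding.lintegral_map (μ := ν) f
  simp only [Homeomorph.smulOfNeZero_apply] at hmap
  rw [← hmap, Measure.map_addHaar_smul ν hR, lintegral_smul_measure, smul_eq_mul]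

theorem enorm_sq_eq_ofReal_norm_sq {E : Type*} [SeminormedAddGroup E] (x : E) :
    ‖x‖ₑ ^ 2 = ENNReal.ofReal (‖x‖ ^ 2) := by
  rw [ENNReal.ofReal_pow (norm_nonneg x), ofReal_norm]

theorem lintegral_enorm_sq_coeFn_eq {α E : Type*} [MeasurableSpace α] {ν : Measure α}
    [NormedAddCommGroup E] (g : Lp E 2 ν) : ∫⁻ x, ‖g x‖ₑ ^ 2 ∂ν = ‖g‖ₑ ^ 2 := by
  rw [Lp.enorm_def, eLpNorm_eq_lintegral_rpow_enorm_toReal (by norm_num) (by norm_num),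
    ← ENNReal.rpow_natCast (n := 2), ← ENNReal.rpow_mul]
  norm_num

section FourierSynthesis

open FourierTransform SchwartzMap

variable {V : Type*} [NormedAddCommGroup V] [InnerProductSpace ℝ V] [FiniteDimensional ℝ V]
  [MeasurableSpace V] [BorelSpace V] {a : V → ℂ}

theorem integral_smul_fourier_eq (ha : Integrable a) (g : 𝓢(V, ℂ)) :
    ∫ x, g x • 𝓕 a x = ∫ x, 𝓕 g x • a x := by
  have hflip := VectorFourier.integral_fourierIntegral_smul_eq_flip (μ := volume) (ν := volume)
    (L := innerₗ V) Real.continuous_fourierChar continuous_inner ha g.integrable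
  simp only [flip_innerₗ, smul_eq_mul] at hflip
  simp only [smul_eq_mul, mul_comm _ (a _), mul_comm (g _)]
  exact hflip

theorem continuous_fourier_of_integrable (ha : Integrable a) : Continuous (𝓕 a) :=
  VectorFourier.fourierIntegral_continuous Real.continuous_fourierChar
    (L := innerₗ V) continuous_inner ha

theorem fourier_ae_eq_fourier_toLp (ha : Integrable a) (ha₂ : MemLp a 2 volume) :
    𝓕 a =ᵐ[volume] (𝓕 (ha₂.toLp a) : Lp ℂ 2 (volume : Measure V)) := by
  refine ae_eq_of_integral_contDiff_smul_eq
    (continuous_fourier_of_integrable ha).locallyIntegrable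
    ((Lp.memLp _).locallyIntegrable (by norm_num)) fun g hg hgc => ?_
  have hgc' : HasCompactSupport fun x => (g x : ℂ) := hgc.comp_left (g := Complex.ofReal) rfl
  let G : 𝓢(V, ℂ) := hgc'.toSchwartzMap (Complex.ofRealCLM.contDiff.comp hg)
  have hL2 := congrArg (fun T => T G) (Lp.fourier_toTemperedDistribution_eq (ha₂.toLp a))
  simp only [TemperedDistribution.fourier_apply, Lp.toTemperedDistribution_apply] at hL2
  have htoLp : ∫ x, 𝓕 G x • (ha₂.toLp a) x = ∫ x, 𝓕 G x • a x :=
    integral_congr_ae (ha₂.coeFn_toLp.mono fun x hx => by simp only [hx])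
  rw [htoLp, ← integral_smul_fourier_eq ha] at hL2
  exact hL2

theorem lintegral_enorm_sq_fourier_eq (ha : Integrable a) (ha₂ : MemLp a 2 volume) :
    ∫⁻ x, ‖𝓕 a x‖ₑ ^ 2 = ∫⁻ ξ, ‖a ξ‖ₑ ^ 2 := by
  have hnorm : ‖(𝓕 (ha₂.toLp a) : Lp ℂ 2 (volume : Measure V))‖ₑ = ‖ha₂.toLp a‖ₑ := by
    rw [← ofReal_norm, ← ofReal_norm, Lp.norm_fourier_eq]
  calc ∫⁻ x, ‖𝓕 a x‖ₑ ^ 2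
      = ∫⁻ x, ‖(𝓕 (ha₂.toLp a) : Lp ℂ 2 (volume : Measure V)) x‖ₑ ^ 2 :=
        lintegral_congr_ae <| (fourier_ae_eq_fourier_toLp ha ha₂).mono fun x hx => by
          simp only [hx]
    _ = ∫⁻ ξ, ‖ha₂.toLp a ξ‖ₑ ^ 2 := by
        rw [lintegral_enorm_sq_coeFn_eq, lintegral_enorm_sq_coeFn_eq, hnorm]
    _ = ∫⁻ ξ, ‖a ξ‖ₑ ^ 2 :=
        lintegral_congr_ae <| ha₂.coeFn_toLp.mono fun ξ hξ => by simp only [hξ]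

/-- The unnormalised inverse Fourier transform `x ↦ ∫ e^{i⟪x, ξ⟫} a(ξ) dξ` of an amplitude `a`,
in the angular-frequency convention of `fhat` and `gw`. -/
def fourierSynthesis (a : V → ℂ) (x : V) : ℂ :=
  ∫ ξ, Complex.exp (Complex.I * (⟪x, ξ⟫ : ℝ)) * a ξ

theorem fourierSynthesis_eq_fourier (a : V → ℂ) (x : V) :
    fourierSynthesis a x = 𝓕 a (-(2 * π)⁻¹ • x) := by
  rw [fourierSynthesis, Real.fourier_eq]
  refine integral_congr_ae (.of_forall fun ξ => ?_)
  simp only [Circle.smul_def, Real.fourierChar_apply, smul_eq_mul, inner_smul_right,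
    real_inner_comm ξ x]
  congr 2
  push_cast
  have : (π : ℂ) ≠ 0 := by exact_mod_cast Real.pi_ne_zero
  field_simp

theorem continuous_fourierSynthesis (ha : Integrable a) : Continuous (fourierSynthesis a) := by
  simp only [funext (fourierSynthesis_eq_fourier a)]
  exact (continuous_fourier_of_integrable ha).comp (continuous_const_smul _)

theorem fourierSynthesis_add {a' : V → ℂ} (ha : Integrable a) (ha' : Integrable a') (z : V) :
    fourierSynthesis (a + a') z = fourierSynthesis a z + fourierSynthesis a' z := by
  have hint {a : V → ℂ} (ha : Integrable a) :
      Integrable fun ξ => Complex.exp (Complex.I * (⟪z, ξ⟫ : ℝ)) * a ξ :=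
    ha.bdd_mul (by fun_prop :
      Continuous fun ξ : V => Complex.exp (Complex.I * (⟪z, ξ⟫ : ℝ))).aestronglyMeasurable (c := 1)
      (.of_forall fun ξ => (norm_cexp_I_mul_ofReal _).le)
  simp only [fourierSynthesis, Pi.add_apply, mul_add]
  exact integral_add (hint ha) (hint ha')

theorem fourierSynthesis_const_mul (c : ℂ) (a : V → ℂ) (z : V) :
    fourierSynthesis (fun ξ => c * a ξ) z = c * fourierSynthesis a z := by
  simp only [fourierSynthesis, mul_left_comm _ c]
  exact integral_const_mul c _

theorem fourierSynthesis_eq_pow_mul_comp_smul (a : V → ℂ) {l : ℝ} (hl : 0 < l) (z : V) :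
    fourierSynthesis a z
      = (l ^ Module.finrank ℝ V : ℝ) * fourierSynthesis (fun η => a (l • η)) (l • z) := by
  have hscale := Measure.integral_comp_smul volume
    (fun ξ => Complex.exp (Complex.I * (⟪z, ξ⟫ : ℝ)) * a ξ) l
  rw [abs_of_pos (by positivity), eq_inv_smul_iff₀ (by positivity), Complex.real_smul] at hscale
  simp only [fourierSynthesis, ← hscale, real_inner_smul_left, real_inner_smul_right]

theorem fderiv_fourierSynthesis_apply (ha : Integrable a)
    (ha' : Integrable fun ξ => ‖ξ‖ * ‖a ξ‖) (x v : V) :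
    fderiv ℝ (fourierSynthesis a) x v
      = fourierSynthesis (fun ξ => Complex.I * (⟪v, ξ⟫ : ℝ) * a ξ) x := by
  have hscale : HasFDerivAt (fun x : V => -(2 * π)⁻¹ • x)
      (-(2 * π)⁻¹ • ContinuousLinearMap.id ℝ V) x := (hasFDerivAt_id x).const_smul _
  have hderiv := (Real.hasFDerivAt_fourier ha ha' (-(2 * π)⁻¹ • x)).comp x hscale
  have hint : Integrable (VectorFourier.fourierSMulRight (innerSL ℝ) a) := by
    refine (ha'.const_mul (2 * π * ‖(innerSL ℝ : V →L[ℝ] V →L[ℝ] ℝ)‖)).mono'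
      ha.1.fourierSMulRight (.of_forall fun ξ => ?_)
    simpa only [mul_assoc] using VectorFourier.norm_fourierSMulRight_le (innerSL ℝ) a ξ
  have hamp : (fun ξ => VectorFourier.fourierSMulRight (innerSL ℝ) a ξ
      ((-(2 * π)⁻¹ • ContinuousLinearMap.id ℝ V) v))
        = fun ξ => Complex.I * (⟪v, ξ⟫ : ℝ) * a ξ := by
    funext ξ
    have hinner : innerSL ℝ ξ ((-(2 * π)⁻¹ • ContinuousLinearMap.id ℝ V) v)
        = -(2 * π)⁻¹ * ⟪v, ξ⟫ := by
      change ⟪ξ, -(2 * π)⁻¹ • v⟫ = _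
      rw [inner_smul_right, real_inner_comm]
    rw [VectorFourier.fourierSMulRight_apply, hinner]
    simp only [smul_eq_mul, Complex.real_smul]
    push_cast
    have : (π : ℂ) ≠ 0 := by exact_mod_cast Real.pi_ne_zero
    field_simp
  have hfun : fourierSynthesis a = 𝓕 a ∘ fun x : V => -(2 * π)⁻¹ • x :=
    funext (fourierSynthesis_eq_fourier a)
  rw [hfun, hderiv.fderiv, ContinuousLinearMap.comp_apply,
    Real.fourier_continuousLinearMap_apply hint, fourierSynthesis_eq_fourier, hamp]

theorem lintegral_enorm_sq_fourierSynthesis (ha : Integrable a) (ha₂ : MemLp a 2 volume) :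
    ∫⁻ x, ‖fourierSynthesis a x‖ₑ ^ 2
      = ENNReal.ofReal ((2 * π) ^ Module.finrank ℝ V) * ∫⁻ ξ, ‖a ξ‖ₑ ^ 2 := by
  have hne : -(2 * π)⁻¹ ≠ 0 := neg_ne_zero.2 (by positivity)
  simp only [fourierSynthesis_eq_fourier]
  rw [lintegral_comp_smul volume (fun x => ‖𝓕 a x‖ₑ ^ 2) hne,
    lintegral_enorm_sq_fourier_eq ha ha₂]
  congr 2
  rw [abs_inv, abs_pow, abs_neg, abs_of_pos (by positivity : 0 < (2 * π)⁻¹), inv_pow, inv_inv]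

theorem integrable_norm_sq_fourierSynthesis (ha : Integrable a) (ha₂ : MemLp a 2 volume) :
    Integrable fun x => ‖fourierSynthesis a x‖ ^ 2 := by
  refine (memLp_two_iff_integrable_sq_norm
    (continuous_fourierSynthesis ha).aestronglyMeasurable).1
    ⟨(continuous_fourierSynthesis ha).aestronglyMeasurable, ?_⟩
  have hfin : ∫⁻ ξ, ‖a ξ‖ₑ ^ 2 ≠ ⊤ := by
    have := lintegral_rpow_enorm_lt_top_of_eLpNorm_lt_top two_ne_zero ENNReal.ofNat_ne_top ha₂.2
    simpa using this.ne
  refine (eLpNorm_lt_top_iff_lintegral_rpow_enorm_lt_top two_ne_zero ENNReal.ofNat_ne_top).2 ?_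
  simpa [lintegral_enorm_sq_fourierSynthesis ha ha₂] using
    ENNReal.mul_lt_top ENNReal.ofReal_lt_top hfin.lt_top

theorem integral_norm_sq_fourierSynthesis (ha : Integrable a) (ha₂ : MemLp a 2 volume) :
    ∫ x, ‖fourierSynthesis a x‖ ^ 2 = (2 * π) ^ Module.finrank ℝ V * ∫ ξ, ‖a ξ‖ ^ 2 := by
  rw [integral_eq_lintegral_of_nonneg_ae (.of_forall fun _ => by positivity)
      (integrable_norm_sq_fourierSynthesis ha ha₂).1,
    integral_eq_lintegral_of_nonneg_ae (.of_forall fun _ => by positivity)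
      ((memLp_two_iff_integrable_sq_norm ha₂.1).1 ha₂).1]
  simp only [← enorm_sq_eq_ofReal_norm_sq]
  rw [lintegral_enorm_sq_fourierSynthesis ha ha₂, ENNReal.toReal_mul,
    ENNReal.toReal_ofReal (by positivity)]

end FourierSynthesis

theorem continuous_fhat {n : ℕ} {φ : EuclideanSpace ℝ (Fin n) → ℂ} (hφ : Integrable φ) :
    Continuous (fhat φ) := by
  have hfhat : fhat φ = fun ξ => fourierSynthesis φ (-ξ) := by
    funext ξ
    simp only [fhat, fourierSynthesis, inner_neg_left, real_inner_comm ξ, Complex.ofReal_neg,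
      mul_neg, neg_mul]
  exact hfhat ▸ (continuous_fourierSynthesis hφ).comp continuous_neg

section HardyLittlewoodSobolev

theorem lintegral_comp_abs_sub (f : ℝ → ENNReal) (t : ℝ) :
    ∫⁻ s, f |t - s| = 2 * ∫⁻ s in Set.Ioi 0, f s := by
  have hneg : ∫⁻ s in Set.Iio 0, f |s| = ∫⁻ s in Set.Ioi 0, f s := by
    have h := (Measure.measurePreserving_neg (volume : Measure ℝ)).setLIntegral_comp_preimage_emb
      (Homeomorph.neg ℝ).measurableEmbedding (fun s => f |s|) (Set.Iio 0)
    rw [← h, Set.neg_preimage, Set.neg_Iio, neg_zero]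
    exact setLIntegral_congr_fun measurableSet_Ioi fun x hx => by
      simp only [abs_neg, abs_of_pos (Set.mem_Ioi.1 hx)]
  have hpos : ∫⁻ s in Set.Ioi 0, f |s| = ∫⁻ s in Set.Ioi 0, f s :=
    setLIntegral_congr_fun measurableSet_Ioi fun x hx => by
      simp only [abs_of_pos (Set.mem_Ioi.1 hx)]
  rw [lintegral_sub_left_eq_self (fun s => f |s|) t,
    ← lintegral_add_compl _ (measurableSet_Ioi (a := (0 : ℝ))), two_mul, Set.compl_Ioi,
    setLIntegral_congr (Iio_ae_eq_Iic (a := (0 : ℝ))).symm, hneg, hpos]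

theorem lintegral_Ioc_ofReal_rpow_neg {α R : ℝ} (hα : α < 1) (hR : 0 ≤ R) :
    ∫⁻ x in Set.Ioc 0 R, ENNReal.ofReal (x ^ (-α)) = ENNReal.ofReal (R ^ (1 - α) / (1 - α)) := by
  have hint := intervalIntegral.intervalIntegrable_rpow' (a := 0) (b := R) (r := -α) (by linarith)
  rw [intervalIntegrable_iff_integrableOn_Ioc_of_le hR] at hint
  rw [← ofReal_integral_eq_lintegral_ofReal hint, ← intervalIntegral.integral_of_le hR,
    integral_rpow (Or.inl (by linarith)), Real.zero_rpow (by linarith), sub_zero,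
    neg_add_eq_sub]
  filter_upwards [ae_restrict_mem measurableSet_Ioc] with x hx
  exact Real.rpow_nonneg hx.1.le _

theorem lintegral_Ioi_ofReal_rpow_neg {β R : ℝ} (hβ : 1 < β) (hR : 0 < R) :
    ∫⁻ x in Set.Ioi R, ENNReal.ofReal (x ^ (-β)) = ENNReal.ofReal (R ^ (1 - β) / (β - 1)) := by
  rw [← ofReal_integral_eq_lintegral_ofReal (integrableOn_Ioi_rpow_of_lt (by linarith) hR),
    integral_Ioi_rpow_of_lt (by linarith) hR, neg_add_eq_sub, ← neg_sub β 1, div_neg, neg_div,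
    neg_neg]
  filter_upwards [ae_restrict_mem measurableSet_Ioi] with x hx
  exact Real.rpow_nonneg (hR.le.trans (Set.mem_Ioi.1 hx).le) _

theorem lintegral_near_rpow_abs_sub {α R : ℝ} (hα : α < 1) (hR : 0 ≤ R) (t : ℝ) :
    ∫⁻ s, (Set.Ioc 0 R).indicator (fun x => ENNReal.ofReal (x ^ (-α))) |t - s|
      = ENNReal.ofReal (2 / (1 - α) * R ^ (1 - α)) := by
  rw [lintegral_comp_abs_sub, setLIntegral_indicator measurableSet_Ioc,
    Set.inter_eq_left.2 Set.Ioc_subset_Ioi_self, lintegral_Ioc_ofReal_rpow_neg hα hR,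
    ← ENNReal.ofReal_ofNat 2, ← ENNReal.ofReal_mul zero_le_two]
  congr 1
  ring

theorem lintegral_far_rpow_abs_sub_rpow {α β R : ℝ} (hβ : 0 < β) (hαβ : 1 < α * β)
    (hR : 0 < R) (t : ℝ) :
    ∫⁻ s, (Set.Ioi R).indicator (fun x => ENNReal.ofReal (x ^ (-α))) |t - s| ^ β
      = ENNReal.ofReal (2 / (α * β - 1) * R ^ (1 - α * β)) := by
  have hpow (x : ℝ) : (Set.Ioi R).indicator (fun x => ENNReal.ofReal (x ^ (-α))) x ^ β
      = (Set.Ioi R).indicator (fun x => ENNReal.ofReal (x ^ (-(α * β)))) x := by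
    by_cases hx : x ∈ Set.Ioi R
    · have hx0 : 0 < x := hR.trans hx
      rw [Set.indicator_of_mem hx, Set.indicator_of_mem hx,
        ENNReal.ofReal_rpow_of_pos (by positivity), ← Real.rpow_mul hx0.le, neg_mul]
    · rw [Set.indicator_of_notMem hx, Set.indicator_of_notMem hx, ENNReal.zero_rpow_of_pos hβ]
  simp only [hpow]
  rw [lintegral_comp_abs_sub, setLIntegral_indicator measurableSet_Ioi,
    Set.inter_eq_left.2 (Set.Ioi_subset_Ioi hR.le), lintegral_Ioi_ofReal_rpow_neg hαβ hR,
    ← ENNReal.ofReal_ofNat 2, ← ENNReal.ofReal_mul zero_le_two]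
  congr 1
  ring

theorem ofReal_rpow_abs_mul_le_near_add_far {α : ℝ} (hα : α ≠ 0) (R : ℝ) {x y a : ℝ}
    (hya : y ≤ a) :
    ENNReal.ofReal (|x| ^ (-α) * y)
      ≤ (Set.Ioc 0 R).indicator (fun x => ENNReal.ofReal (x ^ (-α))) |x| * ENNReal.ofReal a
        + (Set.Ioi R).indicator (fun x => ENNReal.ofReal (x ^ (-α))) |x| * ENNReal.ofReal y := by
  rcases (abs_nonneg x).eq_or_lt with h0 | h0
  · simp [← h0, Real.zero_rpow (neg_ne_zero.2 hα)]
  rw [ENNReal.ofReal_mul (by positivity)]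
  rcases le_or_gt |x| R with hR | hR
  · refine le_trans ?_ le_self_add
    rw [Set.indicator_of_mem (Set.mem_Ioc.2 ⟨h0, hR⟩)]
    gcongr
  · refine le_trans ?_ le_add_self
    rw [Set.indicator_of_mem (Set.mem_Ioi.2 hR)]

variable {α S : ℝ} {g : ℝ → ℝ}

theorem lintegral_far_rpow_abs_sub_mul_le (hα₀ : 0 < α) (hα₁ : α < 1) (hg : Measurable g)
    (hg₀ : ∀ t, 0 ≤ g t) (hS : 0 < S)
    (hgS : ∫⁻ t, ENNReal.ofReal (g t ^ (2 / (2 - α))) ≤ ENNReal.ofReal S) {R : ℝ} (hR : 0 < R)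
    (t : ℝ) :
    ∫⁻ s, (Set.Ioi R).indicator (fun x => ENNReal.ofReal (x ^ (-α))) |t - s|
        * ENNReal.ofReal (g s) ≤ ENNReal.ofReal ((2 / R) ^ (α / 2) * S ^ (1 - α / 2)) := by
  have h2α : 0 < 2 - α := by linarith
  have hconj : (2 / α).HolderConjugate (2 / (2 - α)) := by
    rw [Real.holderConjugate_iff]
    exact ⟨by rw [lt_div_iff₀ hα₀]; linarith, by field_simp; ring⟩
  have hkernel : Measurable fun s =>
      (Set.Ioi R).indicator (fun x => ENNReal.ofReal (x ^ (-α))) |t - s| :=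
    (Measurable.indicator (by fun_prop) measurableSet_Ioi).comp (by fun_prop)
  have hαβ : α * (2 / α) = 2 := by field_simp
  refine (ENNReal.lintegral_mul_le_Lp_mul_Lq volume hconj hkernel.aemeasurable
    (by fun_prop)).trans ?_
  have hfar : 2 / ((2 : ℝ) - 1) * R ^ ((1 : ℝ) - 2) = 2 / R := by
    rw [show (1 : ℝ) - 2 = -1 by norm_num, Real.rpow_neg_one]
    ring
  have hexp : 1 / (2 / (2 - α)) = 1 - α / 2 := by field_simp
  rw [lintegral_far_rpow_abs_sub_rpow (by positivity) (by rw [hαβ]; norm_num) hR t, hαβ, hfar,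
    hexp, one_div_div, ENNReal.ofReal_mul (by positivity),
    ← ENNReal.ofReal_rpow_of_pos (by positivity), ← ENNReal.ofReal_rpow_of_pos hS]
  gcongr
  · linarith
  · refine le_of_eq_of_le (lintegral_congr fun s => ?_) hgS
    exact ENNReal.ofReal_rpow_of_nonneg (hg₀ s) (by positivity)

-- The splitting radius `S * a ^ (-2 / (2 - α))` balances the near and the far part of the kernel.
theorem near_add_far_le_of_balanced (hα₀ : 0 < α) (hα₁ : α < 1) (hS : 0 < S) {a : ℝ} (ha : 0 < a) :
    2 / (1 - α) * (S * a ^ (-(2 / (2 - α)))) ^ (1 - α) * a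
        + (2 / (S * a ^ (-(2 / (2 - α))))) ^ (α / 2) * S ^ (1 - α / 2)
      ≤ (2 / (1 - α) + 2) * S ^ (1 - α) * a ^ (α / (2 - α)) := by
  have h2α : 0 < 2 - α := by linarith
  have hnear : (S * a ^ (-(2 / (2 - α)))) ^ (1 - α) * a = S ^ (1 - α) * a ^ (α / (2 - α)) := by
    rw [Real.mul_rpow hS.le (by positivity), ← Real.rpow_mul ha.le, mul_assoc,
      ← Real.rpow_add_one ha.ne']
    congr 2
    field_simp
    ring
  have hfar : (2 / (S * a ^ (-(2 / (2 - α))))) ^ (α / 2) * S ^ (1 - α / 2)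
      = 2 ^ (α / 2) * (S ^ (1 - α) * a ^ (α / (2 - α))) := by
    rw [div_eq_mul_inv, mul_inv, ← Real.rpow_neg ha.le, neg_neg, Real.mul_rpow (by positivity)
      (by positivity), Real.mul_rpow (by positivity) (by positivity), ← Real.rpow_neg_one S,
      ← Real.rpow_mul hS.le, ← Real.rpow_mul ha.le, mul_assoc, mul_right_comm,
      ← Real.rpow_add hS]
    congr 3
    · ring
    · field_simp
  have htwo : (2 : ℝ) ^ (α / 2) ≤ 2 :=
    Real.rpow_le_self_of_one_le one_le_two (by linarith)
  rw [mul_assoc, hnear, hfar, mul_assoc (_ + _), add_mul]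
  gcongr

theorem lintegral_rpow_abs_sub_mul_of_le_le (hα₀ : 0 < α) (hα₁ : α < 1) (hg : Measurable g)
    (hg₀ : ∀ t, 0 ≤ g t) (hS : 0 < S)
    (hgS : ∫⁻ t, ENNReal.ofReal (g t ^ (2 / (2 - α))) ≤ ENNReal.ofReal S) (t : ℝ) :
    ∫⁻ s in {s | g s ≤ g t}, ENNReal.ofReal (|t - s| ^ (-α) * g s)
      ≤ ENNReal.ofReal ((2 / (1 - α) + 2) * S ^ (1 - α) * g t ^ (α / (2 - α))) := by
  have hmeas : MeasurableSet {s | g s ≤ g t} := measurableSet_le hg measurable_const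
  rcases (hg₀ t).eq_or_lt with hzero | hpos
  · refine le_of_eq_of_le (setLIntegral_congr_fun (g := fun _ => 0) hmeas fun s hs => ?_) (by simp)
    have : g s = 0 := le_antisymm (hzero ▸ hs) (hg₀ s)
    simp [this]
  set R := S * g t ^ (-(2 / (2 - α)))
  have hR : 0 < R := by positivity
  have hnear : Measurable fun s =>
      (Set.Ioc 0 R).indicator (fun x => ENNReal.ofReal (x ^ (-α))) |t - s| :=
    (Measurable.indicator (by fun_prop) measurableSet_Ioc).comp (by fun_prop)
  calc ∫⁻ s in {s | g s ≤ g t}, ENNReal.ofReal (|t - s| ^ (-α) * g s)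
      ≤ ∫⁻ s, ((Set.Ioc 0 R).indicator (fun x => ENNReal.ofReal (x ^ (-α))) |t - s|
            * ENNReal.ofReal (g t)
          + (Set.Ioi R).indicator (fun x => ENNReal.ofReal (x ^ (-α))) |t - s|
            * ENNReal.ofReal (g s)) :=
        (setLIntegral_mono' hmeas fun s hs =>
          ofReal_rpow_abs_mul_le_near_add_far hα₀.ne' R hs).trans (setLIntegral_le_lintegral _ _)
    _ ≤ ENNReal.ofReal (2 / (1 - α) * R ^ (1 - α) * g t)
          + ENNReal.ofReal ((2 / R) ^ (α / 2) * S ^ (1 - α / 2)) := by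
        have := sub_pos.2 hα₁
        rw [lintegral_add_left (by fun_prop), lintegral_mul_const _ hnear,
          lintegral_near_rpow_abs_sub hα₁ hR.le, ← ENNReal.ofReal_mul (by positivity)]
        gcongr
        exact lintegral_far_rpow_abs_sub_mul_le hα₀ hα₁ hg hg₀ hS hgS hR t
    _ ≤ _ := by
        have := sub_pos.2 hα₁
        rw [← ENNReal.ofReal_add (by positivity) (by positivity)]
        exact ENNReal.ofReal_le_ofReal (near_add_far_le_of_balanced hα₀ hα₁ hS hpos)

theorem lintegral_lintegral_rpow_abs_sub_mul_of_le_le (hα₀ : 0 < α) (hα₁ : α < 1)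
    (hg : Measurable g) (hg₀ : ∀ t, 0 ≤ g t) (hS : 0 < S)
    (hgS : ∫⁻ t, ENNReal.ofReal (g t ^ (2 / (2 - α))) ≤ ENNReal.ofReal S) :
    ∫⁻ t, ∫⁻ s in {s | g s ≤ g t}, ENNReal.ofReal (|t - s| ^ (-α) * g s * g t)
      ≤ ENNReal.ofReal ((2 / (1 - α) + 2) * S ^ (2 - α)) := by
  have := sub_pos.2 hα₁
  have h2α : 0 < 2 - α := by linarith
  have hexp (t : ℝ) : g t ^ (α / (2 - α)) * g t = g t ^ (2 / (2 - α)) := by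
    rw [← Real.rpow_add_one' (hg₀ t) (by positivity)]
    congr 1
    field_simp
    ring
  calc ∫⁻ t, ∫⁻ s in {s | g s ≤ g t}, ENNReal.ofReal (|t - s| ^ (-α) * g s * g t)
      ≤ ∫⁻ t, ENNReal.ofReal ((2 / (1 - α) + 2) * S ^ (1 - α))
          * ENNReal.ofReal (g t ^ (2 / (2 - α))) := by
        refine lintegral_mono fun t => ?_
        simp only [ENNReal.ofReal_mul' (hg₀ t)]
        rw [lintegral_mul_const' _ _ ENNReal.ofReal_ne_top, ← hexp, ENNReal.ofReal_mul' (hg₀ t),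
          ← mul_assoc, ← ENNReal.ofReal_mul (by positivity)]
        gcongr
        exact lintegral_rpow_abs_sub_mul_of_le_le hα₀ hα₁ hg hg₀ hS hgS t
    _ ≤ ENNReal.ofReal ((2 / (1 - α) + 2) * S ^ (1 - α)) * ENNReal.ofReal S := by
        rw [lintegral_const_mul' _ _ ENNReal.ofReal_ne_top]
        gcongr
    _ = ENNReal.ofReal ((2 / (1 - α) + 2) * S ^ (2 - α)) := by
        rw [← ENNReal.ofReal_mul (by positivity), mul_assoc, ← Real.rpow_add_one hS.ne']
        ring_nf

theorem hardyLittlewoodSobolev (hα₀ : 0 < α) (hα₁ : α < 1) (hg : Measurable g)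
    (hg₀ : ∀ t, 0 ≤ g t) (hS : 0 < S)
    (hgS : ∫⁻ t, ENNReal.ofReal (g t ^ (2 / (2 - α))) ≤ ENNReal.ofReal S) :
    ∫⁻ t, ∫⁻ s, ENNReal.ofReal (|t - s| ^ (-α) * g s * g t)
      ≤ ENNReal.ofReal (2 * (2 / (1 - α) + 2) * S ^ (2 - α)) := by
  set K : ℝ × ℝ → ENNReal := fun z =>
    {z : ℝ × ℝ | g z.2 ≤ g z.1}.indicator
      (fun z => ENNReal.ofReal (|z.1 - z.2| ^ (-α) * g z.2 * g z.1)) z with hK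
  have hKmeas : Measurable K :=
    Measurable.indicator (by fun_prop) (measurableSet_le (by fun_prop) (by fun_prop))
  have hsplit (t s : ℝ) :
      ENNReal.ofReal (|t - s| ^ (-α) * g s * g t) ≤ K (t, s) + K (s, t) := by
    rcases le_total (g s) (g t) with h | h
    · refine le_trans (le_of_eq ?_) le_self_add
      simp [hK, Set.indicator_of_mem, h]
    · refine le_trans (le_of_eq ?_) le_add_self
      simp [hK, Set.indicator_of_mem, h, abs_sub_comm s t, mul_right_comm]
  have hhalf : ∫⁻ t, ∫⁻ s, K (t, s) ≤ ENNReal.ofReal ((2 / (1 - α) + 2) * S ^ (2 - α)) := by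
    refine le_trans (le_of_eq (lintegral_congr fun t => ?_))
      (lintegral_lintegral_rpow_abs_sub_mul_of_le_le hα₀ hα₁ hg hg₀ hS hgS)
    rw [← lintegral_indicator (measurableSet_le hg measurable_const)]
    rfl
  calc ∫⁻ t, ∫⁻ s, ENNReal.ofReal (|t - s| ^ (-α) * g s * g t)
      ≤ ∫⁻ t, ∫⁻ s, (K (t, s) + K (s, t)) := lintegral_mono fun t => lintegral_mono (hsplit t)
    _ = (∫⁻ t, ∫⁻ s, K (t, s)) + ∫⁻ t, ∫⁻ s, K (s, t) := by
        rw [← lintegral_add_left hKmeas.lintegral_prod_right']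
        exact lintegral_congr fun t => lintegral_add_left (hKmeas.comp measurable_prodMk_left) _
    _ = (∫⁻ t, ∫⁻ s, K (t, s)) + ∫⁻ t, ∫⁻ s, K (t, s) := by
        rw [lintegral_lintegral_swap (f := fun t s => K (s, t))
          (hKmeas.comp measurable_swap).aemeasurable]
    _ ≤ ENNReal.ofReal ((2 / (1 - α) + 2) * S ^ (2 - α))
          + ENNReal.ofReal ((2 / (1 - α) + 2) * S ^ (2 - α)) := add_le_add hhalf hhalf
    _ = ENNReal.ofReal (2 * (2 / (1 - α) + 2) * S ^ (2 - α)) := by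
        have := sub_pos.2 hα₁
        rw [← two_mul, ← ENNReal.ofReal_ofNat 2, ← ENNReal.ofReal_mul zero_le_two, ← mul_assoc]

end HardyLittlewoodSobolev

section Marcinkiewicz

variable {X Y : Type*} [MeasurableSpace X] [MeasurableSpace Y]

/-- `h` is controlled by the truncations of `w ≥ 0`: at every height `a`, the part of `w` above
`a` contributes at most `A` times its `L¹` norm pointwise, and the part below `a` contributes a
function with squared `L²` norm at most `B` times that of the part. Endpoint bounds `L¹ → L^∞` and
`L² → L²` of a linear operator enter Marcinkiewicz interpolation in this form. -/
def TruncationBound (m : Measure X) (n : Measure Y) (A B : ℝ) (h : X → ℝ) (w : Y → ℝ) : Prop :=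
  ∀ a : ℝ, 0 < a → ∃ k : X → ENNReal, Measurable k ∧
    (∀ x, ENNReal.ofReal (h x)
      ≤ ENNReal.ofReal A * ∫⁻ y in {y | a < w y}, ENNReal.ofReal (w y) ∂n + k x) ∧
    ∫⁻ x, k x ^ 2 ∂m ≤ ENNReal.ofReal B * ∫⁻ y in {y | w y ≤ a}, ENNReal.ofReal (w y ^ 2) ∂n

theorem lintegral_superlevel_le_rpow_mul {n : Measure Y} {w : Y → ℝ} (hw : Measurable w)
    {p a : ℝ} (hp : 1 ≤ p) (ha : 0 < a) :
    ∫⁻ y in {y | a < w y}, ENNReal.ofReal (w y) ∂n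
      ≤ ENNReal.ofReal (a ^ (1 - p)) * ∫⁻ y, ENNReal.ofReal (w y ^ p) ∂n := by
  rw [← lintegral_const_mul _ (hw.pow_const p).ennreal_ofReal]
  refine (setLIntegral_mono' (measurableSet_lt measurable_const hw) fun y hy => ?_).trans
    (setLIntegral_le_lintegral _ _)
  have hwy : 0 < w y := ha.trans hy
  rw [← ENNReal.ofReal_mul (by positivity)]
  refine ENNReal.ofReal_le_ofReal ?_
  calc w y = w y ^ (1 - p) * w y ^ p := by rw [← Real.rpow_add hwy, sub_add_cancel, rpow_one]
    _ ≤ a ^ (1 - p) * w y ^ p := by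
      gcongr ?_ * _
      exact Real.rpow_le_rpow_of_nonpos ha hy.le (by linarith)

theorem measure_lt_le_of_truncationBound {m : Measure X} {n : Measure Y} {A B : ℝ} {h : X → ℝ}
    {w : Y → ℝ} (hhw : TruncationBound m n A B h w) {a τ : ℝ} (ha : 0 < a) (hτ : 0 < τ)
    (hsmall : ENNReal.ofReal A * ∫⁻ y in {y | a < w y}, ENNReal.ofReal (w y) ∂n
      ≤ ENNReal.ofReal (τ / 2)) :
    m {x | τ < h x} ≤ ENNReal.ofReal (4 * B * τ ^ (-2 : ℝ))
      * ∫⁻ y in {y | w y ≤ a}, ENNReal.ofReal (w y ^ 2) ∂n := by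
  obtain ⟨k, hk, hpointwise, hL2⟩ := hhw a ha
  have hsub : {x | τ < h x} ⊆ {x | ENNReal.ofReal ((τ / 2) ^ 2) ≤ k x ^ 2} := by
    intro x hx
    have hsum : ENNReal.ofReal (τ / 2) + ENNReal.ofReal (τ / 2)
        ≤ ENNReal.ofReal (τ / 2) + k x := by
      rw [← ENNReal.ofReal_add (by positivity) (by positivity), add_halves]
      exact (ENNReal.ofReal_le_ofReal (le_of_lt hx)).trans
        ((hpointwise x).trans (add_le_add_left hsmall _))
    rw [Set.mem_ofPred_eq, ENNReal.ofReal_pow (by positivity)]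
    gcongr
    exact (ENNReal.add_le_add_iff_left ENNReal.ofReal_ne_top).1 hsum
  have hconst : ((τ / 2) ^ 2)⁻¹ = 4 * τ ^ (-2 : ℝ) := by
    rw [Real.rpow_neg hτ.le, Real.rpow_two, div_pow]
    field_simp
    norm_num
  calc m {x | τ < h x}
      ≤ m {x | ENNReal.ofReal ((τ / 2) ^ 2) ≤ k x ^ 2} := measure_mono hsub
    _ ≤ (∫⁻ x, k x ^ 2 ∂m) / ENNReal.ofReal ((τ / 2) ^ 2) :=
        meas_ge_le_lintegral_div (hk.pow_const 2).aemeasurable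
          (by rw [ne_eq, ENNReal.ofReal_eq_zero, not_le]; positivity) ENNReal.ofReal_ne_top
    _ ≤ (ENNReal.ofReal B * ∫⁻ y in {y | w y ≤ a}, ENNReal.ofReal (w y ^ 2) ∂n)
          / ENNReal.ofReal ((τ / 2) ^ 2) := by gcongr
    _ = _ := by
        rw [ENNReal.div_eq_inv_mul, ← ENNReal.ofReal_inv_of_pos (by positivity), hconst,
          mul_right_comm 4 B, ENNReal.ofReal_mul (p := 4 * τ ^ (-2 : ℝ)) (by positivity), mul_assoc]

theorem le_div_rpow_iff {D τ w s : ℝ} (hD : 0 ≤ D) (hτ : 0 < τ) (hw : 0 < w) (hs : 0 < s) :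
    w ≤ (D / τ) ^ s ↔ τ ≤ D * w ^ (-s⁻¹) := by
  rw [← Real.rpow_inv_le_iff_of_pos hw.le (by positivity) hs, le_div_iff₀ hτ,
    Real.rpow_neg hw.le, ← div_eq_mul_inv, le_div_iff₀ (by positivity), mul_comm]

theorem lintegral_rpow_mul_indicator_eq {r D w : ℝ} (hr : 2 < r) (hD : 0 < D) (hw : 0 ≤ w) :
    ∫⁻ τ in Set.Ioi (0 : ℝ), ENNReal.ofReal (τ ^ (r - 3))
        * {τ | w ≤ (D / τ) ^ (r - 1)}.indicator (fun _ => ENNReal.ofReal (w ^ 2)) τ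
      = ENNReal.ofReal (D ^ (r - 2) / (r - 2) * w ^ (r / (r - 1))) := by
  have hr₁ : 0 < r - 1 := by linarith
  have : 0 < r - 2 := by linarith
  rcases hw.eq_or_lt with rfl | hw
  · simp [Set.indicator, zero_rpow (div_pos (by linarith : 0 < r) hr₁).ne']
  set T := D * w ^ (-(r - 1)⁻¹) with hT
  have hT₀ : 0 < T := by positivity
  have hpow : T ^ (r - 2) * w ^ 2 = D ^ (r - 2) * w ^ (r / (r - 1)) := by
    rw [hT, mul_rpow hD.le (by positivity), ← rpow_mul hw.le, mul_assoc, ← rpow_two,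
      ← rpow_add hw]
    congr 2
    field_simp
    ring
  calc _ = ∫⁻ τ in Set.Ioi (0 : ℝ), (Set.Ioc 0 T).indicator
          (fun τ => ENNReal.ofReal (τ ^ (r - 3)) * ENNReal.ofReal (w ^ 2)) τ := by
        refine setLIntegral_congr_fun measurableSet_Ioi fun τ hτ => ?_
        have hτT : w ≤ (D / τ) ^ (r - 1) ↔ τ ∈ Set.Ioc 0 T := by
          rw [le_div_rpow_iff hD.le hτ hw hr₁, Set.mem_Ioc, and_iff_right (Set.mem_Ioi.1 hτ)]
        simp only [Set.indicator, Set.mem_ofPred_eq, hτT, mul_ite, mul_zero]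
    _ = ENNReal.ofReal (T ^ (r - 2) / (r - 2)) * ENNReal.ofReal (w ^ 2) := by
        rw [setLIntegral_indicator measurableSet_Ioc,
          Set.inter_eq_left.2 Set.Ioc_subset_Ioi_self,
          lintegral_mul_const' _ _ ENNReal.ofReal_ne_top]
        have := lintegral_Ioc_ofReal_rpow_neg (α := 3 - r) (by linarith) hT₀.le
        rw [neg_sub, show 1 - (3 - r) = r - 2 by ring] at this
        rw [this]
    _ = ENNReal.ofReal (D ^ (r - 2) / (r - 2) * w ^ (r / (r - 1))) := by
        rw [← ENNReal.ofReal_mul (by positivity), div_mul_eq_mul_div, hpow, div_mul_eq_mul_div]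

theorem measure_lt_mul_rpow_le {m : Measure X} {n : Measure Y} {r A B S : ℝ} (hr : 2 < r)
    (hA : 0 < A) (hB : 0 ≤ B) (hS : 0 < S) {h : X → ℝ} {w : Y → ℝ} (hw : Measurable w)
    (hwS : ∫⁻ y, ENNReal.ofReal (w y ^ (r / (r - 1))) ∂n ≤ ENNReal.ofReal S)
    (hhw : TruncationBound m n A B h w) {τ : ℝ} (hτ : 0 < τ) :
    m {x | τ < h x} * ENNReal.ofReal (τ ^ (r - 1))
      ≤ ENNReal.ofReal (4 * B) * ∫⁻ y, ENNReal.ofReal (τ ^ (r - 3))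
          * {τ | w y ≤ (2 * A * S / τ) ^ (r - 1)}.indicator
              (fun _ => ENNReal.ofReal (w y ^ 2)) τ ∂n := by
  have hr₁ : 0 < r - 1 := by linarith
  have hsmall : ENNReal.ofReal A
      * ∫⁻ y in {y | (2 * A * S / τ) ^ (r - 1) < w y}, ENNReal.ofReal (w y) ∂n
        ≤ ENNReal.ofReal (τ / 2) := by
    have hp : 1 ≤ r / (r - 1) := by rw [le_div_iff₀ hr₁]; linarith
    have hheight : ((2 * A * S / τ) ^ (r - 1)) ^ (1 - r / (r - 1)) = τ / (2 * A * S) := by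
      rw [← rpow_mul (by positivity), show (r - 1) * (1 - r / (r - 1)) = -1 by field_simp; ring,
        rpow_neg_one, inv_div]
    calc _ ≤ ENNReal.ofReal A * (ENNReal.ofReal (τ / (2 * A * S)) * ENNReal.ofReal S) := by
          gcongr
          refine (lintegral_superlevel_le_rpow_mul hw hp (by positivity)).trans ?_
          rw [hheight]
          gcongr
      _ = ENNReal.ofReal (τ / 2) := by
          rw [← ENNReal.ofReal_mul (by positivity), ← ENNReal.ofReal_mul (by positivity)]
          congr 1
          field_simp
  have hind : ∫⁻ y in {y | w y ≤ (2 * A * S / τ) ^ (r - 1)}, ENNReal.ofReal (w y ^ 2) ∂n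
      = ∫⁻ y, {τ | w y ≤ (2 * A * S / τ) ^ (r - 1)}.indicator
          (fun _ => ENNReal.ofReal (w y ^ 2)) τ ∂n := by
    rw [← lintegral_indicator (measurableSet_le hw measurable_const)]
    rfl
  have hτpow : τ ^ (-2 : ℝ) * τ ^ (r - 1) = τ ^ (r - 3) := by
    rw [← rpow_add hτ]
    ring_nf
  refine (mul_le_mul_left
    (measure_lt_le_of_truncationBound hhw (by positivity) hτ hsmall) _).trans_eq ?_
  rw [lintegral_const_mul' _ _ ENNReal.ofReal_ne_top, hind, ← hτpow,
    ENNReal.ofReal_mul (p := 4 * B) (by positivity),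
    ENNReal.ofReal_mul (p := τ ^ (-2 : ℝ)) (by positivity)]
  ring

-- Layer-cake formula in `τ`, truncating `w` at the height `(2 * A * S / τ) ^ (r - 1)` at which the
-- `L¹ → L^∞` contribution is at most `τ / 2`.
theorem lintegral_rpow_le_of_truncationBound {m : Measure X} {n : Measure Y} [SFinite n]
    {r A B S : ℝ} (hr : 2 < r) (hA : 0 < A) (hB : 0 ≤ B) (hS : 0 < S) {h : X → ℝ} {w : Y → ℝ}
    (hh : Measurable h) (hh₀ : ∀ x, 0 ≤ h x) (hw : Measurable w) (hw₀ : ∀ y, 0 ≤ w y)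
    (hwS : ∫⁻ y, ENNReal.ofReal (w y ^ (r / (r - 1))) ∂n ≤ ENNReal.ofReal S)
    (hhw : TruncationBound m n A B h w) :
    ∫⁻ x, ENNReal.ofReal (h x ^ r) ∂m
      ≤ ENNReal.ofReal (4 * r / (r - 2) * B * (2 * A) ^ (r - 2) * S ^ (r - 1)) := by
  have : 0 < r - 2 := by linarith
  set K : ℝ → Y → ENNReal := fun τ y => ENNReal.ofReal (τ ^ (r - 3))
    * {τ | w y ≤ (2 * A * S / τ) ^ (r - 1)}.indicator (fun _ => ENNReal.ofReal (w y ^ 2)) τ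
  have hK : Measurable (Function.uncurry K) := by
    refine Measurable.mul (by fun_prop) ?_
    exact Measurable.indicator (s := {z : ℝ × Y | w z.2 ≤ (2 * A * S / z.1) ^ (r - 1)})
      (f := fun z => ENNReal.ofReal (w z.2 ^ 2)) (by fun_prop)
      (measurableSet_le (by fun_prop) (by fun_prop))
  have hSpow : S ^ (r - 1) = S ^ (r - 2) * S := by
    rw [← rpow_add_one hS.ne']
    ring_nf
  rw [lintegral_rpow_eq_lintegral_meas_lt_mul m (.of_forall hh₀) hh.aemeasurable (by linarith)]
  calc ENNReal.ofReal r * ∫⁻ τ in Set.Ioi 0, m {x | τ < h x} * ENNReal.ofReal (τ ^ (r - 1))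
      ≤ ENNReal.ofReal r * ∫⁻ τ in Set.Ioi 0, ENNReal.ofReal (4 * B) * ∫⁻ y, K τ y ∂n := by
        gcongr _ * ?_
        exact setLIntegral_mono' measurableSet_Ioi fun τ hτ =>
          measure_lt_mul_rpow_le hr hA hB hS hw hwS hhw hτ
    _ = ENNReal.ofReal r * (ENNReal.ofReal (4 * B) * ∫⁻ y, (∫⁻ τ in Set.Ioi 0, K τ y) ∂n) := by
        rw [lintegral_const_mul' _ _ ENNReal.ofReal_ne_top,
          lintegral_lintegral_swap hK.aemeasurable]
    _ ≤ ENNReal.ofReal r * (ENNReal.ofReal (4 * B)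
          * (ENNReal.ofReal ((2 * A * S) ^ (r - 2) / (r - 2)) * ENNReal.ofReal S)) := by
        gcongr _ * (_ * ?_)
        simp only [K, lintegral_rpow_mul_indicator_eq hr (D := 2 * A * S) (by positivity) (hw₀ _),
          ENNReal.ofReal_mul (p := (2 * A * S) ^ (r - 2) / (r - 2)) (by positivity)]
        rw [lintegral_const_mul' _ _ ENNReal.ofReal_ne_top]
        gcongr
    _ = ENNReal.ofReal (4 * r / (r - 2) * B * (2 * A) ^ (r - 2) * S ^ (r - 1)) := by
        rw [← ENNReal.ofReal_mul (by positivity), ← ENNReal.ofReal_mul (by positivity),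
          ← ENNReal.ofReal_mul (by linarith), hSpow, mul_rpow (by positivity) hS.le]
        ring_nf

end Marcinkiewicz

section BesselFamily

variable {H : Type*} [NormedAddCommGroup H] [InnerProductSpace ℂ H]
  {X Y : Type*} [MeasurableSpace X] [MeasurableSpace Y]

theorem enorm_inner_symm (x y : H) : ‖inner ℂ x y‖ₑ = ‖inner ℂ y x‖ₑ := by
  rw [← ofReal_norm, norm_inner_symm, ofReal_norm]

theorem enorm_inner_self (x : H) : ‖inner ℂ x x‖ₑ = ‖x‖ₑ ^ 2 := by
  rw [← ofReal_norm, inner_self_eq_norm_sq_to_K, norm_pow, RCLike.norm_ofReal, abs_norm,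
    ENNReal.ofReal_pow (norm_nonneg _), ofReal_norm]

/-- The analysis operator `h ↦ ⟪v ·, h⟫` maps `H` to `L²(m)` with squared norm at most `B`. -/
def IsBesselFamily (m : Measure X) (B : ℝ) (v : X → H) : Prop :=
  ∀ h : H, ∫⁻ x, ‖inner ℂ (v x) h‖ₑ ^ 2 ∂m ≤ ENNReal.ofReal B * ‖h‖ₑ ^ 2

variable {m : Measure X} {n : Measure Y} {A B : ℝ} {v : X → H} {w : Y → H}

theorem IsBesselFamily.restrict (hv : IsBesselFamily m B v) (D : Set X) :
    IsBesselFamily (m.restrict D) B v :=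
  fun h => (setLIntegral_le_lintegral D _).trans (hv h)

theorem integral_smul_eq_zero_of_lintegral_rpow_le_zero {p : ℝ} {f : X → ℂ} (hf : Measurable f)
    (hf₀ : ∫⁻ x, ENNReal.ofReal (‖f x‖ ^ p) ∂m ≤ 0) : ∫ x, f x • v x ∂m = 0 := by
  rw [nonpos_iff_eq_zero, lintegral_eq_zero_iff (by fun_prop)] at hf₀
  refine integral_eq_zero_of_ae (hf₀.mono fun x hx => ?_)
  have hfx : ‖f x‖ ^ p ≤ 0 := ENNReal.ofReal_eq_zero.1 hx
  have : f x = 0 := by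
    by_contra hne
    exact absurd hfx (rpow_pos_of_pos (norm_pos_iff.2 hne) p).not_ge
  simp [this]

variable [CompleteSpace H]

theorem enorm_inner_integral_smul_le {f : X → ℂ} (hfv : Integrable (fun x => f x • v x) m)
    (h : H) :
    ‖inner ℂ h (∫ x, f x • v x ∂m)‖ₑ ≤ ∫⁻ x, ‖f x‖ₑ * ‖inner ℂ (v x) h‖ₑ ∂m := by
  rw [← integral_inner hfv]
  refine (enorm_integral_le_lintegral_enorm _).trans_eq (lintegral_congr fun x => ?_)
  rw [inner_smul_right, enorm_mul, enorm_inner_symm]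

-- Duality: test the integral against itself.
theorem IsBesselFamily.enorm_integral_smul_sq_le (hv : IsBesselFamily m B v)
    (hvm : StronglyMeasurable v) {f : X → ℂ} (hf : Measurable f)
    (hfv : Integrable (fun x => f x • v x) m) :
    ‖∫ x, f x • v x ∂m‖ₑ ^ 2 ≤ ENNReal.ofReal B * ∫⁻ x, ‖f x‖ₑ ^ 2 ∂m := by
  set F := ∫ x, f x • v x ∂m
  rcases eq_or_ne F 0 with hF₀ | hF₀
  · simp [hF₀]
  have hholder : ‖F‖ₑ ^ 2 ≤ (∫⁻ x, ‖f x‖ₑ ^ (2 : ℝ) ∂m) ^ (1 / 2 : ℝ)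
      * (∫⁻ x, ‖inner ℂ (v x) F‖ₑ ^ (2 : ℝ) ∂m) ^ (1 / 2 : ℝ) := by
    rw [← enorm_inner_self]
    refine (enorm_inner_integral_smul_le hfv F).trans ?_
    exact ENNReal.lintegral_mul_le_Lp_mul_Lq m Real.HolderConjugate.two_two
      hf.enorm.aemeasurable (hvm.inner stronglyMeasurable_const).enorm.aemeasurable
  simp only [ENNReal.rpow_two] at hholder
  have hsq : ‖F‖ₑ ^ 2 * ‖F‖ₑ ^ 2
      ≤ (ENNReal.ofReal B * ∫⁻ x, ‖f x‖ₑ ^ 2 ∂m) * ‖F‖ₑ ^ 2 := by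
    calc ‖F‖ₑ ^ 2 * ‖F‖ₑ ^ 2
        ≤ ((∫⁻ x, ‖f x‖ₑ ^ 2 ∂m) ^ (1 / 2 : ℝ)
            * (∫⁻ x, ‖inner ℂ (v x) F‖ₑ ^ 2 ∂m) ^ (1 / 2 : ℝ)) ^ 2 := by
          rw [← sq]
          gcongr
      _ = (∫⁻ x, ‖f x‖ₑ ^ 2 ∂m) * ∫⁻ x, ‖inner ℂ (v x) F‖ₑ ^ 2 ∂m := by
          simp only [mul_pow, ← ENNReal.rpow_natCast, ← ENNReal.rpow_mul]
          norm_num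
      _ ≤ (∫⁻ x, ‖f x‖ₑ ^ 2 ∂m) * (ENNReal.ofReal B * ‖F‖ₑ ^ 2) := by
          gcongr
          exact hv F
      _ = _ := by ring
  exact (ENNReal.mul_le_mul_iff_left (by simp [hF₀]) (by simp)).1 hsq

theorem truncationBound_norm_inner_integral_smul (hv : IsBesselFamily m B v)
    (hvm : StronglyMeasurable v) (hw : IsBesselFamily n B w) (hwm : StronglyMeasurable w)
    (hB : 0 ≤ B) (hA : ∀ x y, ‖inner ℂ (v x) (w y)‖ ≤ A) {f : Y → ℂ} (hf : Measurable f)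
    (hfw : Integrable (fun y => f y • w y) n) :
    TruncationBound m n A (B ^ 2) (fun x => ‖inner ℂ (v x) (∫ y, f y • w y ∂n)‖)
      (fun y => ‖f y‖) := by
  intro a _
  have hD : MeasurableSet {y | ‖f y‖ ≤ a} := measurableSet_le hf.norm measurable_const
  have hDc : {y | a < ‖f y‖} = {y | ‖f y‖ ≤ a}ᶜ := by
    ext y
    simp
  set D := {y | ‖f y‖ ≤ a}
  refine ⟨fun x => ‖inner ℂ (v x) (∫ y in D, f y • w y ∂n)‖ₑ,
    (hvm.inner stronglyMeasurable_const).enorm, fun x => ?_, ?_⟩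
  · beta_reduce
    rw [hDc, ← integral_add_compl hD hfw, inner_add_right, ofReal_norm, add_comm]
    refine (enorm_add_le _ _).trans ?_
    gcongr
    refine (enorm_inner_integral_smul_le hfw.restrict _).trans ?_
    rw [← lintegral_const_mul' _ _ ENNReal.ofReal_ne_top]
    refine lintegral_mono fun y => ?_
    rw [mul_comm, enorm_inner_symm, ofReal_norm, ← ofReal_norm (inner ℂ _ _)]
    gcongr
    exact hA x y
  · refine (hv _).trans ?_
    rw [ENNReal.ofReal_pow hB, sq (ENNReal.ofReal B), mul_assoc]
    gcongr
    refine ((hw.restrict D).enorm_integral_smul_sq_le hwm hf hfw.restrict).trans_eq ?_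
    simp only [enorm_sq_eq_ofReal_norm_sq]

/-- The constant with which an `L¹ → L^∞` bound `A` and an `L² → L²` bound `B²` interpolate to an
`L^{r'} → L^r` bound. -/
def interpolationConst (r A B : ℝ) : ℝ :=
  (4 * r / (r - 2)) ^ (1 / r) * B ^ (2 / r) * (2 * A) ^ (1 - 2 / r)

theorem interpolationConst_nonneg {r : ℝ} (hr : 2 < r) (hA : 0 ≤ A) (hB : 0 ≤ B) :
    0 ≤ interpolationConst r A B := by
  have : 0 < r - 2 := by linarith
  unfold interpolationConst
  positivity

theorem interpolationConst_mul_left (r B : ℝ) {c : ℝ} (hA : 0 ≤ A) (hc : 0 ≤ c) :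
    interpolationConst r (A * c) B = interpolationConst r A B * c ^ (1 - 2 / r) := by
  rw [interpolationConst, ← mul_assoc 2 A c, mul_rpow (by positivity) hc, ← mul_assoc,
    interpolationConst]

theorem rpow_one_div_mul_interpolation {r a : ℝ} (hr : 2 < r) (hA : 0 ≤ A) (hB : 0 ≤ B)
    (ha : 0 ≤ a) :
    (4 * r / (r - 2) * B ^ 2 * (2 * A) ^ (r - 2) * (a ^ (r / (r - 1))) ^ (r - 1)) ^ (1 / r)
      = interpolationConst r A B * a := by
  have hr₂ : 0 < r - 2 := by linarith
  have hr₁ : r - 1 ≠ 0 := by linarith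
  have hr₀ : r ≠ 0 := by linarith
  rw [mul_rpow (by positivity) (by positivity), mul_rpow (by positivity) (by positivity),
    mul_rpow (by positivity) (by positivity), ← rpow_natCast B 2, ← rpow_mul hB,
    ← rpow_mul (by positivity), ← rpow_mul ha, ← rpow_mul ha, interpolationConst]
  congr 1
  · congr 2
    · push_cast
      ring_nf
    · field_simp
  · rw [div_mul_cancel₀ _ hr₁, mul_one_div_cancel hr₀, rpow_one]

theorem lintegral_inner_integral_smul_rpow_le {r a : ℝ} (hr : 2 < r) (hv : IsBesselFamily m B v)
    (hvm : StronglyMeasurable v) [SFinite n] (hw : IsBesselFamily n B w)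
    (hwm : StronglyMeasurable w) (hB : 0 ≤ B) (hA₀ : 0 < A)
    (hA : ∀ x y, ‖inner ℂ (v x) (w y)‖ ≤ A) {f : Y → ℂ} (hf : Measurable f)
    (hfw : Integrable (fun y => f y • w y) n) (ha : 0 < a)
    (hfa : ∫⁻ y, ENNReal.ofReal (‖f y‖ ^ (r / (r - 1))) ∂n ≤ ENNReal.ofReal (a ^ (r / (r - 1)))) :
    (∫⁻ x, ‖inner ℂ (v x) (∫ y, f y • w y ∂n)‖ₑ ^ r ∂m) ^ (1 / r)
      ≤ ENNReal.ofReal (interpolationConst r A B * a) := by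
  have hr₀ : 0 < r := by linarith
  have : 0 < r - 2 := by linarith
  rw [← rpow_one_div_mul_interpolation hr hA₀.le hB ha.le,
    ← ENNReal.ofReal_rpow_of_nonneg (by positivity) (by positivity)]
  gcongr
  simp only [← ofReal_norm, ENNReal.ofReal_rpow_of_nonneg (norm_nonneg _) hr₀.le]
  exact lintegral_rpow_le_of_truncationBound hr hA₀ (by positivity) (by positivity)
    (hvm.inner stronglyMeasurable_const).norm.measurable (fun _ => norm_nonneg _) hf.norm
    (fun _ => norm_nonneg _) hfa
    (truncationBound_norm_inner_integral_smul hv hvm hw hwm hB hA hf hfw)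

theorem norm_inner_integral_smul_le {r a a' : ℝ} (hr : 2 < r) (hv : IsBesselFamily m B v)
    (hvm : StronglyMeasurable v) [SFinite n] (hw : IsBesselFamily n B w)
    (hwm : StronglyMeasurable w) (hB : 0 ≤ B) (hA₀ : 0 < A)
    (hA : ∀ x y, ‖inner ℂ (v x) (w y)‖ ≤ A) {g : X → ℂ} {f : Y → ℂ} (hg : Measurable g)
    (hgv : Integrable (fun x => g x • v x) m) (hf : Measurable f)
    (hfw : Integrable (fun y => f y • w y) n) (ha : 0 ≤ a) (ha' : 0 ≤ a')
    (hga : ∫⁻ x, ENNReal.ofReal (‖g x‖ ^ (r / (r - 1))) ∂m ≤ ENNReal.ofReal (a ^ (r / (r - 1))))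
    (hfa : ∫⁻ y, ENNReal.ofReal (‖f y‖ ^ (r / (r - 1))) ∂n
      ≤ ENNReal.ofReal (a' ^ (r / (r - 1)))) :
    ‖inner ℂ (∫ x, g x • v x ∂m) (∫ y, f y • w y ∂n)‖ ≤ interpolationConst r A B * a * a' := by
  have hr₁ : 0 < r - 1 := by linarith
  have hp : 0 < r / (r - 1) := div_pos (by linarith) hr₁
  have hconst := interpolationConst_nonneg hr hA₀.le hB
  rcases ha'.eq_or_lt with rfl | ha'
  · rw [zero_rpow hp.ne', ENNReal.ofReal_zero] at hfa
    simp [integral_smul_eq_zero_of_lintegral_rpow_le_zero hf hfa]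
  have hconj : (r / (r - 1)).HolderConjugate r := by
    rw [Real.holderConjugate_iff]
    exact ⟨by rw [lt_div_iff₀ hr₁]; linarith, by field_simp; ring⟩
  have hga' : (∫⁻ x, ‖g x‖ₑ ^ (r / (r - 1)) ∂m) ^ (1 / (r / (r - 1))) ≤ ENNReal.ofReal a := by
    rw [one_div, ENNReal.rpow_inv_le_iff hp, ENNReal.ofReal_rpow_of_nonneg ha hp.le]
    simpa only [← ofReal_norm, ENNReal.ofReal_rpow_of_nonneg (norm_nonneg _) hp.le] using hga
  rw [norm_inner_symm, ← ENNReal.ofReal_le_ofReal_iff (by positivity), ofReal_norm]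
  calc _ ≤ ∫⁻ x, ‖g x‖ₑ * ‖inner ℂ (v x) (∫ y, f y • w y ∂n)‖ₑ ∂m :=
        enorm_inner_integral_smul_le hgv _
    _ ≤ (∫⁻ x, ‖g x‖ₑ ^ (r / (r - 1)) ∂m) ^ (1 / (r / (r - 1)))
          * (∫⁻ x, ‖inner ℂ (v x) (∫ y, f y • w y ∂n)‖ₑ ^ r ∂m) ^ (1 / r) :=
        ENNReal.lintegral_mul_le_Lp_mul_Lq m hconj hg.enorm.aemeasurable
          (hvm.inner stronglyMeasurable_const).enorm.aemeasurable
    _ ≤ ENNReal.ofReal a * ENNReal.ofReal (interpolationConst r A B * a') := by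
        gcongr
        exact lintegral_inner_integral_smul_rpow_le hr hv hvm hw hwm hB hA₀ hA hf hfw ha' hfa
    _ = _ := by
        rw [← ENNReal.ofReal_mul ha]
        ring_nf

end BesselFamily

section DualityPower

/-- The duality map `z ↦ |z|^{r-2} z` from `L^r` to its dual. -/
def dualityPower (r : ℝ) (z : ℂ) : ℂ := ((‖z‖ ^ (r - 2) : ℝ) : ℂ) * z

theorem measurable_dualityPower (r : ℝ) : Measurable (dualityPower r) := by
  unfold dualityPower
  fun_prop

theorem norm_dualityPower {r : ℝ} (hr : 1 < r) (z : ℂ) : ‖dualityPower r z‖ = ‖z‖ ^ (r - 1) := by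
  rw [dualityPower, norm_mul, Complex.norm_real, norm_of_nonneg (by positivity),
    show r - 1 = r - 2 + 1 by ring, rpow_add_one' (norm_nonneg z) (by linarith)]

theorem dualityPower_mul_conj {r : ℝ} (hr : 0 < r) (z : ℂ) :
    dualityPower r z * (starRingEnd ℂ) z = ((‖z‖ ^ r : ℝ) : ℂ) := by
  rw [dualityPower, mul_assoc, Complex.mul_conj, Complex.normSq_eq_norm_sq, ← Complex.ofReal_mul,
    ← rpow_two, ← rpow_add' (norm_nonneg z) (by linarith), sub_add_cancel]

variable {Ω H : Type*} [MeasurableSpace Ω] [NormedAddCommGroup H] [InnerProductSpace ℂ H]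
  {m : Measure Ω} [IsFiniteMeasure m] {v : Ω → H} {M r : ℝ}

theorem integrable_norm_inner_rpow (hr : 0 ≤ r) (hv : StronglyMeasurable v)
    (hM : ∀ x, ‖v x‖ ≤ M) (h : H) : Integrable (fun x => ‖inner ℂ (v x) h‖ ^ r) m := by
  refine .of_bound ((hv.inner stronglyMeasurable_const).norm.measurable.pow_const
    r).aestronglyMeasurable ((M * ‖h‖) ^ r) (.of_forall fun x => ?_)
  rw [norm_of_nonneg (by positivity)]
  gcongr
  exact (norm_inner_le_norm _ _).trans (by gcongr; exact hM x)

theorem integrable_dualityPower_inner_smul (hr : 1 < r) (hv : StronglyMeasurable v)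
    (hM : ∀ x, ‖v x‖ ≤ M) (h : H) :
    Integrable (fun x => dualityPower r (inner ℂ (v x) h) • v x) m := by
  have hu : Measurable fun x => inner ℂ (v x) h :=
    (hv.inner stronglyMeasurable_const).measurable
  have hf : Integrable (fun x => dualityPower r (inner ℂ (v x) h)) m := by
    refine (integrable_norm_inner_rpow (by linarith : 0 ≤ r - 1) hv hM h).mono'
      ((measurable_dualityPower r).comp hu).aestronglyMeasurable
      (.of_forall fun x => (norm_dualityPower hr _).le)
  exact hf.smul_bdd M hv.aestronglyMeasurable (.of_forall hM)

theorem inner_integral_dualityPower_smul [CompleteSpace H] (hr : 1 < r)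
    (hv : StronglyMeasurable v) (hM : ∀ x, ‖v x‖ ≤ M) (h : H) :
    inner ℂ h (∫ x, dualityPower r (inner ℂ (v x) h) • v x ∂m)
      = ((∫ x, ‖inner ℂ (v x) h‖ ^ r ∂m : ℝ) : ℂ) := by
  rw [← integral_inner (integrable_dualityPower_inner_smul hr hv hM h), ← integral_complex_ofReal]
  refine integral_congr_ae (.of_forall fun x => ?_)
  beta_reduce
  rw [inner_smul_right, ← inner_conj_symm h (v x), dualityPower_mul_conj (by linarith)]

theorem lintegral_mul_dualityPower_rpow (hr : 1 < r) (hv : StronglyMeasurable v)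
    (hM : ∀ x, ‖v x‖ ≤ M) (h : H) {c : ℝ} (hc : 0 ≤ c) :
    ∫⁻ x, ENNReal.ofReal (‖(c : ℂ) * dualityPower r (inner ℂ (v x) h)‖ ^ (r / (r - 1))) ∂m
      = ENNReal.ofReal
          ((c * (∫ x, ‖inner ℂ (v x) h‖ ^ r ∂m) ^ ((r - 1) / r)) ^ (r / (r - 1))) := by
  have hr₁ : r - 1 ≠ 0 := by linarith
  have hr₀ : r ≠ 0 := by linarith
  have hpow (x) : ‖(c : ℂ) * dualityPower r (inner ℂ (v x) h)‖ ^ (r / (r - 1))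
      = c ^ (r / (r - 1)) * ‖inner ℂ (v x) h‖ ^ r := by
    rw [norm_mul, Complex.norm_real, norm_of_nonneg hc, norm_dualityPower hr,
      mul_rpow hc (by positivity), ← rpow_mul (norm_nonneg _), mul_div_cancel₀ _ hr₁]
  simp only [hpow]
  rw [← ofReal_integral_eq_lintegral_ofReal
    ((integrable_norm_inner_rpow (by linarith) hv hM h).const_mul _)
    (.of_forall fun x => by positivity), integral_const_mul, mul_rpow hc (by positivity),
    ← rpow_mul (by positivity), div_mul_div_cancel₀' hr₁, div_self hr₀, rpow_one]

theorem norm_integral_dualityPower_smul_le [CompleteSpace H] {B : ℝ} (hr : 2 < r)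
    (hv : StronglyMeasurable v) (hM : ∀ x, ‖v x‖ ≤ M) (hB : 0 ≤ B) (hvB : IsBesselFamily m B v)
    (h : H) :
    ‖∫ x, dualityPower r (inner ℂ (v x) h) • v x ∂m‖
      ≤ √(interpolationConst r (M ^ 2 + 1) B)
        * (∫ x, ‖inner ℂ (v x) h‖ ^ r ∂m) ^ ((r - 1) / r) := by
  have hu : Measurable fun x => dualityPower r (inner ℂ (v x) h) :=
    (measurable_dualityPower r).comp (hv.inner stronglyMeasurable_const).measurable
  have hint : Integrable (fun x => dualityPower r (inner ℂ (v x) h) • v x) m :=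
    integrable_dualityPower_inner_smul (by linarith) hv hM h
  have hkernel (x y) : ‖inner ℂ (v x) (v y)‖ ≤ M ^ 2 + 1 := by
    have hM₀ : 0 ≤ M := (norm_nonneg _).trans (hM x)
    calc ‖inner ℂ (v x) (v y)‖ ≤ ‖v x‖ * ‖v y‖ := norm_inner_le_norm _ _
      _ ≤ M * M := by gcongr <;> exact hM _
      _ ≤ M ^ 2 + 1 := by linarith [sq M]
  have hlp := lintegral_mul_dualityPower_rpow (by linarith : 1 < r) hv hM h zero_le_one (m := m)
  simp only [Complex.ofReal_one, one_mul] at hlp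
  have hself := norm_inner_integral_smul_le hr hvB hv hvB hv hB (by positivity) hkernel hu hint
    hu hint (by positivity) (by positivity) hlp.le hlp.le
  rw [inner_self_eq_norm_sq_to_K, norm_pow, RCLike.norm_ofReal, abs_norm, mul_assoc, ← sq] at hself
  refine (Real.le_sqrt_of_sq_le hself).trans_eq ?_
  rw [sqrt_mul (interpolationConst_nonneg hr (by positivity) hB), sqrt_sq (by positivity)]

end DualityPower

section AbstractStrichartz

theorem setLIntegral_hardyLittlewoodSobolev {α S : ℝ} {g : ℝ → ℝ} {I : Set ℝ}
    (hI : MeasurableSet I) (hα₀ : 0 < α) (hα₁ : α < 1) (hg : Measurable g) (hg₀ : ∀ t, 0 ≤ g t)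
    (hS : 0 < S) (hgS : ∫⁻ t in I, ENNReal.ofReal (g t ^ (2 / (2 - α))) ≤ ENNReal.ofReal S) :
    ∫⁻ t in I, ∫⁻ s in I, ENNReal.ofReal (|t - s| ^ (-α) * g s * g t)
      ≤ ENNReal.ofReal (2 * (2 / (1 - α) + 2) * S ^ (2 - α)) := by
  have hp : 2 / (2 - α) ≠ 0 := (div_pos two_pos (by linarith)).ne'
  refine le_trans ?_ (hardyLittlewoodSobolev hα₀ hα₁ (hg.indicator hI)
    (fun t => Set.indicator_nonneg (fun t _ => hg₀ t) t) hS ?_)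
  · refine le_trans (setLIntegral_mono' hI fun t ht => ?_) (setLIntegral_le_lintegral I _)
    refine le_trans (setLIntegral_mono' hI fun s hs => ?_) (setLIntegral_le_lintegral I _)
    rw [Set.indicator_of_mem ht, Set.indicator_of_mem hs]
  · refine le_trans (le_of_eq ?_) hgS
    rw [← lintegral_indicator hI]
    refine lintegral_congr fun t => ?_
    by_cases ht : t ∈ I <;> simp [ht, zero_rpow hp]

variable {Ω H : Type*} [MeasurableSpace Ω] [NormedAddCommGroup H] [InnerProductSpace ℂ H]

/-- Decay of order `σ` in `|t - s|` of the kernel `⟪e t x, e s y⟫` of `T T*`, where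
`T h (t, x) = ⟪e t x, h⟫`. -/
def HasDispersiveDecay (I : Set ℝ) (A σ : ℝ) (e : ℝ → Ω → H) : Prop :=
  ∀ t ∈ I, ∀ s ∈ I, t ≠ s → ∀ x y, ‖inner ℂ (e t x) (e s y)‖ ≤ A * |t - s| ^ (-σ)

/-- The constant of the Strichartz estimate in `L^q L^r` obtained from a dispersive bound `A` and a
Bessel bound `B`: the interpolation constant times the Hardy–Littlewood–Sobolev constant. -/
def strichartzConst (q r A B : ℝ) : ℝ :=
  interpolationConst r A B * (2 * (2 / (1 - 2 / q) + 2))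

theorem strichartzConst_nonneg {q r A B : ℝ} (hq : 2 < q) (hr : 2 < r) (hA : 0 ≤ A)
    (hB : 0 ≤ B) : 0 ≤ strichartzConst q r A B := by
  have : 0 < 1 - 2 / q := by rw [sub_pos, div_lt_one (by linarith)]; exact hq
  have := interpolationConst_nonneg hr hA hB
  unfold strichartzConst
  positivity

variable [CompleteSpace H] {m : Measure Ω} {e : ℝ → Ω → H} {A B σ q r : ℝ} {I : Set ℝ}

theorem enorm_integral_sq_le {T : Type*} [MeasurableSpace T] {ν : Measure T} {V : T → H}
    (hV : Integrable V ν) :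
    ‖∫ t, V t ∂ν‖ₑ ^ 2 ≤ ∫⁻ t, ∫⁻ s, ‖inner ℂ (V t) (V s)‖ₑ ∂ν ∂ν := by
  rw [← enorm_inner_self, ← integral_inner hV]
  refine (enorm_integral_le_lintegral_enorm _).trans (lintegral_mono fun t => ?_)
  rw [enorm_inner_symm, ← integral_inner hV]
  exact enorm_integral_le_lintegral_enorm _

theorem HasDispersiveDecay.enorm_integral_sq_le (hdisp : HasDispersiveDecay I A σ e) [SFinite m]
    (hI : MeasurableSet I) (hq : 2 < q) (hr : 2 < r) (hqr : 1 / q = σ * (1 / 2 - 1 / r))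
    (hA : 0 < A) (hB : 0 ≤ B) (he : ∀ t, StronglyMeasurable (e t))
    (hBessel : ∀ t ∈ I, IsBesselFamily m B (e t)) {F : ℝ → Ω → ℂ} (hF : ∀ t, Measurable (F t))
    (hFe : ∀ t, Integrable (fun x => F t x • e t x) m)
    (hV : IntegrableOn (fun t => ∫ x, F t x • e t x ∂m) I) {g : ℝ → ℝ} (hg : Measurable g)
    (hg₀ : ∀ t, 0 ≤ g t) (hFg : ∀ t, ∫⁻ x, ENNReal.ofReal (‖F t x‖ ^ (r / (r - 1))) ∂m
      ≤ ENNReal.ofReal (g t ^ (r / (r - 1)))) {S : ℝ} (hS : 0 < S)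
    (hgS : ∫⁻ t in I, ENNReal.ofReal (g t ^ (q / (q - 1))) ≤ ENNReal.ofReal S) :
    ‖∫ t in I, ∫ x, F t x • e t x ∂m‖ₑ ^ 2
      ≤ ENNReal.ofReal (strichartzConst q r A B * S ^ (2 - 2 / q)) := by
  have hα : 2 / q < 1 := by rw [div_lt_one (by linarith)]; exact hq
  have hconst := interpolationConst_nonneg hr hA.le hB
  have hexp : -σ * (1 - 2 / r) = -(2 / q) := by linear_combination 2 * hqr
  have hHLS := setLIntegral_hardyLittlewoodSobolev hI (by positivity) hα hg hg₀ hS (by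
    rwa [show 2 / (2 - 2 / q) = q / (q - 1) by field_simp])
  rw [strichartzConst, mul_assoc, ENNReal.ofReal_mul hconst]
  refine le_trans ?_ (mul_le_mul_right hHLS _)
  rw [← lintegral_const_mul' _ _ ENNReal.ofReal_ne_top]
  refine (_root_.enorm_integral_sq_le hV).trans (setLIntegral_mono' hI fun t ht => ?_)
  rw [← lintegral_const_mul' _ _ ENNReal.ofReal_ne_top]
  have hne : ∀ᵐ s ∂volume.restrict I, s ≠ t :=
    ae_restrict_of_ae ((Set.countable_singleton t).ae_notMem _)
  refine lintegral_mono_ae ?_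
  filter_upwards [ae_restrict_mem hI, hne] with s hs hst
  have hts : 0 < |t - s| := abs_pos.2 (sub_ne_zero.2 hst.symm)
  rw [← ENNReal.ofReal_mul hconst, ← ofReal_norm]
  refine ENNReal.ofReal_le_ofReal ?_
  refine (norm_inner_integral_smul_le hr (hBessel t ht) (he t) (hBessel s hs) (he s) hB
    (by positivity) (hdisp t ht s hs hst.symm) (hF t) (hFe t) (hF s) (hFe s) (hg₀ t) (hg₀ s)
    (hFg t) (hFg s)).trans_eq ?_
  rw [interpolationConst_mul_left r B hA.le (by positivity), ← rpow_mul hts.le, hexp]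
  ring

theorem le_rpow_of_sq_le_mul_rpow {S k : ℝ} (hq : 0 < q) (hS : 0 < S)
    (hSk : S ^ 2 ≤ k * S ^ (2 - 2 / q)) : S ≤ k ^ (q / 2) := by
  have hsq : S ^ 2 = S ^ (2 / q) * S ^ (2 - 2 / q) := by
    rw [← rpow_add hS, ← rpow_two]
    ring_nf
  have hSk' : S ^ (2 / q) ≤ k := le_of_mul_le_mul_right (hsq ▸ hSk) (by positivity)
  calc S = (S ^ (2 / q)) ^ (q / 2) := by
        rw [← rpow_mul hS.le, show 2 / q * (q / 2) = 1 by field_simp, rpow_one]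
    _ ≤ k ^ (q / 2) := by gcongr


end AbstractStrichartz

section MixedDuality

variable {Ω H : Type*} [MeasurableSpace Ω] [NormedAddCommGroup H] [InnerProductSpace ℂ H]
  {m : Measure Ω} {e : ℝ → Ω → H} {A B M σ q r : ℝ} {I : Set ℝ}

/-- The function `t, x ↦ ‖u t‖_{L^r}^{q-r} |u t x|^{r-2} u t x` dual to `u t x = ⟪e t x, h⟫` for the
pairing of `L^q L^r` with its dual. -/
def mixedDualityPower (q r : ℝ) (m : Measure Ω) (e : ℝ → Ω → H) (h : H) (t : ℝ) (x : Ω) : ℂ :=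
  (((∫ y, ‖inner ℂ (e t y) h‖ ^ r ∂m) ^ ((q - r) / r) : ℝ) : ℂ)
    * dualityPower r (inner ℂ (e t x) h)

theorem stronglyMeasurable_inner_const (he : StronglyMeasurable (Function.uncurry e)) (h : H) :
    StronglyMeasurable fun p : ℝ × Ω => inner ℂ (e p.1 p.2) h :=
  he.inner stronglyMeasurable_const

theorem measurable_integral_norm_inner_rpow [SFinite m]
    (he : StronglyMeasurable (Function.uncurry e)) (r : ℝ) (h : H) :
    Measurable fun t => ∫ x, ‖inner ℂ (e t x) h‖ ^ r ∂m :=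
  ((stronglyMeasurable_inner_const he h).norm.measurable.pow_const
    r).stronglyMeasurable.integral_prod_right.measurable

theorem measurable_uncurry_mixedDualityPower [SFinite m]
    (he : StronglyMeasurable (Function.uncurry e)) (h : H) :
    Measurable (Function.uncurry (mixedDualityPower q r m e h)) :=
  (Complex.measurable_ofReal.comp (((measurable_integral_norm_inner_rpow he r h).pow_const
    _).comp measurable_fst)).mul
    ((measurable_dualityPower r).comp (stronglyMeasurable_inner_const he h).measurable)

theorem integral_mixedDualityPower_smul (h : H) (t : ℝ) :
    ∫ x, mixedDualityPower q r m e h t x • e t x ∂m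
      = (((∫ y, ‖inner ℂ (e t y) h‖ ^ r ∂m) ^ ((q - r) / r) : ℝ) : ℂ)
        • ∫ x, dualityPower r (inner ℂ (e t x) h) • e t x ∂m := by
  simp only [mixedDualityPower, mul_smul]
  exact integral_smul _ _

variable [IsFiniteMeasure m]

theorem integrable_mixedDualityPower_smul (hr : 1 < r) (he : ∀ t, StronglyMeasurable (e t))
    (hM : ∀ t x, ‖e t x‖ ≤ M) (h : H) (t : ℝ) :
    Integrable (fun x => mixedDualityPower q r m e h t x • e t x) m := by
  simp only [mixedDualityPower, mul_smul]
  exact (integrable_dualityPower_inner_smul hr (he t) (hM t) h).smul (_ : ℂ)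

theorem lintegral_mixedDualityPower_rpow (hq : 1 < q) (hr : 1 < r)
    (he : ∀ t, StronglyMeasurable (e t)) (hM : ∀ t x, ‖e t x‖ ≤ M) (h : H) (t : ℝ) :
    ∫⁻ x, ENNReal.ofReal (‖mixedDualityPower q r m e h t x‖ ^ (r / (r - 1))) ∂m
      = ENNReal.ofReal
          (((∫ x, ‖inner ℂ (e t x) h‖ ^ r ∂m) ^ ((q - 1) / r)) ^ (r / (r - 1))) := by
  have hexp : (q - r) / r + (r - 1) / r = (q - 1) / r := by ring
  have hpos : 0 < (q - 1) / r := div_pos (by linarith) (by linarith)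
  simp only [mixedDualityPower]
  rw [lintegral_mul_dualityPower_rpow hr (he t) (hM t) h (by positivity),
    ← rpow_add' (by positivity) (hexp ▸ hpos.ne'), hexp]

theorem integrableOn_integral_norm_inner_rpow_rpow (hq : 0 ≤ q) (hr : 0 ≤ r)
    (hI : volume I ≠ ⊤) (he : StronglyMeasurable (Function.uncurry e))
    (hM : ∀ t x, ‖e t x‖ ≤ M) (h : H) :
    IntegrableOn (fun t => (∫ x, ‖inner ℂ (e t x) h‖ ^ r ∂m) ^ q) I := by
  refine .of_bound (lt_top_iff_ne_top.2 hI)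
    ((measurable_integral_norm_inner_rpow he r h).pow_const q).aestronglyMeasurable
    (((M * ‖h‖) ^ r * m.real Set.univ) ^ q) (.of_forall fun t => ?_)
  have hint : ‖∫ x, ‖inner ℂ (e t x) h‖ ^ r ∂m‖ ≤ (M * ‖h‖) ^ r * m.real Set.univ := by
    refine norm_integral_le_of_norm_le_const (.of_forall fun x => ?_)
    rw [norm_of_nonneg (by positivity)]
    gcongr
    exact (norm_inner_le_norm _ _).trans (by gcongr; exact hM t x)
  rw [norm_rpow_of_nonneg (by positivity)]
  gcongr

variable [CompleteSpace H]

theorem integrableOn_integral_mixedDualityPower_smul (hq : 1 < q) (hr : 2 < r) (hB : 0 ≤ B)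
    (hI : MeasurableSet I) (hI' : volume I ≠ ⊤) (he : StronglyMeasurable (Function.uncurry e))
    (hM : ∀ t x, ‖e t x‖ ≤ M) (hBessel : ∀ t ∈ I, IsBesselFamily m B (e t)) (h : H) :
    IntegrableOn (fun t => ∫ x, mixedDualityPower q r m e h t x • e t x ∂m) I := by
  have hpos : 0 < (q - 1) / r := div_pos (by linarith) (by linarith)
  have hexp : (q - r) / r + (r - 1) / r = (q - 1) / r := by ring
  have hmeas : StronglyMeasurable fun t => ∫ x, mixedDualityPower q r m e h t x • e t x ∂m :=
    ((measurable_uncurry_mixedDualityPower he h).stronglyMeasurable.smul he).integral_prod_right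
  refine ((integrableOn_integral_norm_inner_rpow_rpow hpos.le (by linarith) hI' he hM
    h (m := m) (r := r)).const_mul (√(interpolationConst r (M ^ 2 + 1) B))).mono'
    hmeas.aestronglyMeasurable ?_
  filter_upwards [ae_restrict_mem hI] with t ht
  rw [integral_mixedDualityPower_smul, norm_smul, Complex.norm_real, norm_of_nonneg (by positivity),
    ← hexp, rpow_add' (by positivity) (hexp ▸ hpos.ne'), mul_left_comm]
  gcongr
  exact norm_integral_dualityPower_smul_le hr (he.of_uncurry_left (x := t)) (hM t) hB
    (hBessel t ht) h

theorem inner_integral_mixedDualityPower_smul (hq : 1 < q) (hr : 2 < r) (hB : 0 ≤ B)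
    (hI : MeasurableSet I) (hI' : volume I ≠ ⊤) (he : StronglyMeasurable (Function.uncurry e))
    (hM : ∀ t x, ‖e t x‖ ≤ M) (hBessel : ∀ t ∈ I, IsBesselFamily m B (e t)) (h : H) :
    inner ℂ h (∫ t in I, ∫ x, mixedDualityPower q r m e h t x • e t x ∂m)
      = ((∫ t in I, (∫ x, ‖inner ℂ (e t x) h‖ ^ r ∂m) ^ (q / r) : ℝ) : ℂ) := by
  have hexp : (q - r) / r + 1 = q / r := by field_simp; ring
  have hpos : 0 < q / r := div_pos (by linarith) (by linarith)
  rw [← integral_inner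
    (integrableOn_integral_mixedDualityPower_smul hq hr hB hI hI' he hM hBessel h),
    ← integral_complex_ofReal]
  refine integral_congr_ae (.of_forall fun t => ?_)
  beta_reduce
  rw [integral_mixedDualityPower_smul, inner_smul_right, inner_integral_dualityPower_smul
    (by linarith) (he.of_uncurry_left (x := t)) (hM t), ← Complex.ofReal_mul, ← hexp,
    rpow_add' (by positivity) (hexp ▸ hpos.ne'), rpow_one]

end MixedDuality

section Strichartz

variable {Ω H : Type*} [MeasurableSpace Ω] [NormedAddCommGroup H] [InnerProductSpace ℂ H]
  [CompleteSpace H] {m : Measure Ω} {e : ℝ → Ω → H} {A B M σ q r : ℝ} {I : Set ℝ}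

theorem HasDispersiveDecay.integral_le_of_isFiniteMeasure (hdisp : HasDispersiveDecay I A σ e)
    [IsFiniteMeasure m] (hI : MeasurableSet I) (hI' : volume I ≠ ⊤) (hq : 2 < q) (hr : 2 < r)
    (hqr : 1 / q = σ * (1 / 2 - 1 / r)) (hA : 0 < A) (hB : 0 ≤ B)
    (he : StronglyMeasurable (Function.uncurry e)) (hM : ∀ t x, ‖e t x‖ ≤ M)
    (hBessel : ∀ t ∈ I, IsBesselFamily m B (e t)) (h : H) :
    ∫ t in I, (∫ x, ‖inner ℂ (e t x) h‖ ^ r ∂m) ^ (q / r)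
      ≤ (strichartzConst q r A B * ‖h‖ ^ 2) ^ (q / 2) := by
  set S : ℝ := ∫ t in I, (∫ x, ‖inner ℂ (e t x) h‖ ^ r ∂m) ^ (q / r)
  have hconst := strichartzConst_nonneg hq hr hA.le hB
  have hS : 0 ≤ S := integral_nonneg fun t => by positivity
  rcases hS.eq_or_lt with hS | hS
  · rw [← hS]; positivity
  have he' (t) : StronglyMeasurable (e t) := he.of_uncurry_left (x := t)
  have hq₁ : 1 < q := by linarith
  have hr₁ : 1 < r := by linarith
  set Z : H := ∫ t in I, ∫ x, mixedDualityPower q r m e h t x • e t x ∂m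
  have hdual : ‖Z‖ₑ ^ 2 ≤ ENNReal.ofReal (strichartzConst q r A B * S ^ (2 - 2 / q)) := by
    refine hdisp.enorm_integral_sq_le hI hq hr hqr hA hB he' hBessel
      (fun t => (measurable_uncurry_mixedDualityPower he h).of_uncurry_left)
      (integrable_mixedDualityPower_smul hr₁ he' hM h)
      (integrableOn_integral_mixedDualityPower_smul hq₁ hr hB hI hI' he hM hBessel h)
      ((measurable_integral_norm_inner_rpow he r h).pow_const _) (fun t => by positivity)
      (fun t => (lintegral_mixedDualityPower_rpow hq₁ hr₁ he' hM h t).le) hS (le_of_eq ?_)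
    rw [ofReal_integral_eq_lintegral_ofReal (integrableOn_integral_norm_inner_rpow_rpow
      (by positivity) (by linarith) hI' he hM h) (.of_forall fun t => by positivity)]
    refine lintegral_congr fun t => ?_
    rw [← rpow_mul (by positivity), div_mul_div_comm, mul_comm, mul_div_mul_right _ _ (by linarith)]
  have hpair : S ≤ ‖h‖ * ‖Z‖ := by
    have := norm_inner_le_norm (𝕜 := ℂ) h Z
    rwa [inner_integral_mixedDualityPower_smul hq₁ hr hB hI hI' he hM hBessel h,
      Complex.norm_real, norm_of_nonneg hS.le] at this
  rw [enorm_sq_eq_ofReal_norm_sq, ENNReal.ofReal_le_ofReal_iff (by positivity)] at hdual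
  refine le_rpow_of_sq_le_mul_rpow (by linarith) hS ?_
  calc S ^ 2 ≤ (‖h‖ * ‖Z‖) ^ 2 := by gcongr
    _ = ‖h‖ ^ 2 * ‖Z‖ ^ 2 := mul_pow _ _ _
    _ ≤ ‖h‖ ^ 2 * (strichartzConst q r A B * S ^ (2 - 2 / q)) := by gcongr
    _ = _ := by ring

theorem HasDispersiveDecay.lintegral_le_of_isFiniteMeasure (hdisp : HasDispersiveDecay I A σ e)
    [IsFiniteMeasure m] (hI : MeasurableSet I) (hI' : volume I ≠ ⊤) (hq : 2 < q) (hr : 2 < r)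
    (hqr : 1 / q = σ * (1 / 2 - 1 / r)) (hA : 0 < A) (hB : 0 ≤ B)
    (he : StronglyMeasurable (Function.uncurry e)) (hM : ∀ t x, ‖e t x‖ ≤ M)
    (hBessel : ∀ t ∈ I, IsBesselFamily m B (e t)) (h : H) :
    ∫⁻ t in I, (∫⁻ x, ‖inner ℂ (e t x) h‖ₑ ^ r ∂m) ^ (q / r)
      ≤ ENNReal.ofReal ((strichartzConst q r A B * ‖h‖ ^ 2) ^ (q / 2)) := by
  have hr₀ : 0 ≤ r := by linarith
  refine le_trans (le_of_eq ?_) (ENNReal.ofReal_le_ofReal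
    (hdisp.integral_le_of_isFiniteMeasure hI hI' hq hr hqr hA hB he hM hBessel h))
  rw [ofReal_integral_eq_lintegral_ofReal (integrableOn_integral_norm_inner_rpow_rpow
    (by positivity) hr₀ hI' he hM h) (.of_forall fun t => by positivity)]
  refine lintegral_congr fun t => ?_
  rw [← ENNReal.ofReal_rpow_of_nonneg (by positivity) (by positivity),
    ofReal_integral_eq_lintegral_ofReal (integrable_norm_inner_rpow hr₀
      (he.of_uncurry_left (x := t)) (hM t) h) (.of_forall fun x => by positivity)]
  simp only [← ENNReal.ofReal_rpow_of_nonneg (norm_nonneg _) hr₀, ofReal_norm]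

theorem HasDispersiveDecay.lintegral_le (hdisp : HasDispersiveDecay I A σ e) [SigmaFinite m]
    (hI : MeasurableSet I) (hI' : volume I ≠ ⊤) (hq : 2 < q) (hr : 2 < r)
    (hqr : 1 / q = σ * (1 / 2 - 1 / r)) (hA : 0 < A) (hB : 0 ≤ B)
    (he : StronglyMeasurable (Function.uncurry e)) (hM : ∀ t x, ‖e t x‖ ≤ M)
    (hBessel : ∀ t ∈ I, IsBesselFamily m B (e t)) (h : H) :
    ∫⁻ t in I, (∫⁻ x, ‖inner ℂ (e t x) h‖ₑ ^ r ∂m) ^ (q / r)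
      ≤ ENNReal.ofReal ((strichartzConst q r A B * ‖h‖ ^ 2) ^ (q / 2)) := by
  have hpos : 0 < q / r := by positivity
  have hmono : Monotone (spanningSets m) := monotone_spanningSets m
  have hmeas : Measurable fun p : ℝ × Ω => ‖inner ℂ (e p.1 p.2) h‖ₑ ^ r :=
    (stronglyMeasurable_inner_const he h).enorm.pow_const _
  have hexhaust (t) : (∫⁻ x, ‖inner ℂ (e t x) h‖ₑ ^ r ∂m) ^ (q / r)
      = ⨆ k, (∫⁻ x in spanningSets m k, ‖inner ℂ (e t x) h‖ₑ ^ r ∂m) ^ (q / r) := by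
    rw [← setLIntegral_univ, ← iUnion_spanningSets m,
      setLIntegral_iUnion_of_directed _ hmono.directed_le]
    exact (ENNReal.orderIsoRpow (q / r) hpos).map_iSup _
  simp_rw [hexhaust]
  rw [lintegral_iSup
    (fun k => (hmeas.lintegral_prod_right' (ν := m.restrict (spanningSets m k))).pow_const _)
    fun i k hik t => ENNReal.rpow_le_rpow (lintegral_mono_set (hmono hik)) hpos.le]
  refine iSup_le fun k => ?_
  have : IsFiniteMeasure (m.restrict (spanningSets m k)) :=
    isFiniteMeasure_restrict.2 (measure_spanningSets_lt_top m k).ne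
  exact hdisp.lintegral_le_of_isFiniteMeasure hI hI' hq hr hqr hA hB he hM
    (fun t ht => (hBessel t ht).restrict _) h

end Strichartz

theorem norm_toLp_sq {α E : Type*} [MeasurableSpace α] {ν : Measure α} [NormedAddCommGroup E]
    {f : α → E} (hf : MemLp f 2 ν) : ‖hf.toLp f‖ ^ 2 = ∫ x, ‖f x‖ ^ 2 ∂ν := by
  have hint := (memLp_two_iff_integrable_sq_norm hf.1).1 hf
  have hofReal : ENNReal.ofReal (‖hf.toLp f‖ ^ 2) = ENNReal.ofReal (∫ x, ‖f x‖ ^ 2 ∂ν) := by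
    rw [← enorm_sq_eq_ofReal_norm_sq, ← lintegral_enorm_sq_coeFn_eq,
      ofReal_integral_eq_lintegral_ofReal hint (.of_forall fun x => by positivity)]
    refine lintegral_congr_ae (hf.coeFn_toLp.mono fun x hx => ?_)
    beta_reduce
    rw [hx, enorm_sq_eq_ofReal_norm_sq]
  rwa [ENNReal.ofReal_eq_ofReal_iff (by positivity) (by positivity)] at hofReal

section Amplitude

variable {V Y : Type*} [NormedAddCommGroup V] [TopologicalSpace Y] {S : Set V} {a : Y → V → ℝ}

/-- A continuous family of real amplitudes, indexed by `Y`, supported in a fixed compact set `S` of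
frequencies. -/
structure IsAmplitude (S : Set V) (a : Y → V → ℝ) : Prop where
  isCompact : IsCompact S
  continuous_uncurry : Continuous (Function.uncurry a)
  support_subset : ∀ y, Function.support (a y) ⊆ S

theorem IsAmplitude.continuous (ha : IsAmplitude S a) (y : Y) : Continuous (a y) :=
  ha.continuous_uncurry.uncurry_left y

variable [InnerProductSpace ℝ V]

theorem IsAmplitude.continuous_uncurry_modulate (ha : IsAmplitude S a) :
    Continuous (Function.uncurry fun (p : Y × V) ξ =>
      Complex.exp (-Complex.I * (⟪p.2, ξ⟫ : ℝ)) * a p.1 ξ) := by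
  have hphase : Continuous fun p : (Y × V) × V =>
      Complex.exp (-Complex.I * (⟪p.1.2, p.2⟫ : ℝ)) := by fun_prop
  exact hphase.mul (Complex.continuous_ofReal.comp (ha.continuous_uncurry.comp
    (by fun_prop : Continuous fun p : (Y × V) × V => (p.1.1, p.2))))

theorem IsAmplitude.support_modulate_subset (ha : IsAmplitude S a) (p : Y × V) : Function.support
    (fun ξ => Complex.exp (-Complex.I * (⟪p.2, ξ⟫ : ℝ)) * a p.1 ξ) ⊆ S := by
  refine fun ξ hξ => ha.support_subset p.1 fun h => hξ ?_
  beta_reduce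
  rw [h, Complex.ofReal_zero, mul_zero]

variable [FiniteDimensional ℝ V] [MeasurableSpace V] [BorelSpace V]

theorem memLp_two_of_support_subset_isCompact (hS : IsCompact S) {f : V → ℂ} (hf : Continuous f)
    (hfS : Function.support f ⊆ S) : MemLp f 2 volume :=
  hf.memLp_of_hasCompactSupport (.of_support_subset_isCompact hS hfS)

theorem continuous_toLp_of_support_subset_isCompact [FirstCountableTopology Y]
    [LocallyCompactSpace Y] (hS : IsCompact S) {F : Y → V → ℂ}
    (hF : Continuous (Function.uncurry F))
    (hFS : ∀ y, Function.support (F y) ⊆ S) :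
    Continuous fun y => (memLp_two_of_support_subset_isCompact hS
      (hF.uncurry_left y) (hFS y)).toLp (F y) := by
  refine continuous_iff_continuousAt.2 fun y₀ => ?_
  rw [ContinuousAt, tendsto_iff_norm_sub_tendsto_zero]
  have hcont : Continuous fun y => ∫ ξ in S, ‖F y ξ - F y₀ ξ‖ ^ 2 := by
    have := hF.uncurry_left y₀
    exact continuous_parametric_integral_of_continuous (by fun_prop) hS
  have hlim := (hcont.tendsto y₀).sqrt
  simp only [sub_self, norm_zero, zero_pow two_ne_zero, integral_zero, sqrt_zero] at hlim
  refine hlim.congr fun y => ?_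
  rw [← MemLp.toLp_sub, ← sqrt_sq (norm_nonneg (MemLp.toLp _ _)), norm_toLp_sq,
    setIntegral_eq_integral_of_forall_compl_eq_zero fun ξ hξ => ?_]
  · rfl
  · rw [Function.notMem_support.1 fun h => hξ (hFS y h),
      Function.notMem_support.1 fun h => hξ (hFS y₀ h), sub_zero, norm_zero, zero_pow two_ne_zero]

namespace IsAmplitude

/-- The element `ξ ↦ e^{-i z·ξ} a_y(ξ)` of `L²`; pairing `h` with it gives the value at `z` of the
function with Fourier transform `(2π)^n a_y h`. -/
def wavePacket (ha : IsAmplitude S a) (p : Y × V) : Lp ℂ 2 (volume : Measure V) :=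
  (memLp_two_of_support_subset_isCompact ha.isCompact
    (ha.continuous_uncurry_modulate.uncurry_left p) (ha.support_modulate_subset p)).toLp

theorem coeFn_wavePacket (ha : IsAmplitude S a) (p : Y × V) : ha.wavePacket p =ᵐ[volume]
    fun ξ => Complex.exp (-Complex.I * (⟪p.2, ξ⟫ : ℝ)) * a p.1 ξ :=
  MemLp.coeFn_toLp _

theorem continuous_wavePacket [FirstCountableTopology Y] [LocallyCompactSpace Y]
    (ha : IsAmplitude S a) :
    Continuous ha.wavePacket :=
  continuous_toLp_of_support_subset_isCompact ha.isCompact ha.continuous_uncurry_modulate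
    ha.support_modulate_subset

theorem norm_wavePacket_le (ha : IsAmplitude S a) {M : ℝ} (hM : ∀ y ξ, |a y ξ| ≤ M) (p : Y × V) :
    ‖ha.wavePacket p‖ ≤ √(∫ _ in S, M ^ 2) := by
  refine le_sqrt_of_sq_le ?_
  rw [wavePacket, norm_toLp_sq, ← setIntegral_eq_integral_of_forall_compl_eq_zero (s := S)
    fun ξ hξ => by
      rw [Function.notMem_support.1 fun h => hξ (ha.support_modulate_subset p h), norm_zero,
        zero_pow two_ne_zero]]
  refine integral_mono_of_nonneg (.of_forall fun ξ => by positivity)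
    (integrableOn_const ha.isCompact.measure_lt_top.ne) (.of_forall fun ξ => ?_)
  beta_reduce
  rw [norm_mul, neg_mul, ← mul_neg, ← Complex.ofReal_neg, norm_cexp_I_mul_ofReal, one_mul,
    Complex.norm_real, norm_eq_abs]
  gcongr
  exact hM _ _

theorem inner_wavePacket (ha : IsAmplitude S a) (p : Y × V) (f : Lp ℂ 2 (volume : Measure V)) :
    inner ℂ (ha.wavePacket p) f = fourierSynthesis (fun ξ => a p.1 ξ * f ξ) p.2 := by
  rw [L2.inner_def]
  refine integral_congr_ae ((ha.coeFn_wavePacket p).mono fun ξ hξ => ?_)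
  beta_reduce
  rw [hξ, RCLike.inner_apply, map_mul, ← Complex.exp_conj, map_mul, map_neg, Complex.conj_I,
    Complex.conj_ofReal, Complex.conj_ofReal, neg_neg]
  ring

theorem inner_wavePacket_toLp (ha : IsAmplitude S a) (p : Y × V) {h : V → ℂ}
    (hh : MemLp h 2 volume) :
    inner ℂ (ha.wavePacket p) hh.toLp = fourierSynthesis (fun ξ => a p.1 ξ * h ξ) p.2 := by
  rw [inner_wavePacket]
  refine integral_congr_ae (hh.coeFn_toLp.mono fun ξ hξ => ?_)
  beta_reduce
  rw [hξ]

theorem inner_wavePacket_wavePacket (ha : IsAmplitude S a) (p p' : Y × V) :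
    inner ℂ (ha.wavePacket p) (ha.wavePacket p')
      = fourierSynthesis (fun ξ => a p.1 ξ * a p'.1 ξ) (p.2 - p'.2) := by
  rw [inner_wavePacket]
  refine integral_congr_ae ((ha.coeFn_wavePacket p').mono fun ξ hξ => ?_)
  beta_reduce
  rw [hξ, inner_sub_left, Complex.ofReal_sub, mul_sub, sub_eq_add_neg, Complex.exp_add, ← neg_mul]
  ring

theorem memLp_mul (ha : IsAmplitude S a) (y : Y) {h : V → ℂ} (hh : MemLp h 2 volume) :
    MemLp (fun ξ => a y ξ * h ξ) 2 volume := by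
  obtain ⟨M, hM⟩ := (ha.continuous y).bounded_above_of_compact_support
    (.of_support_subset_isCompact ha.isCompact (ha.support_subset y))
  refine .of_le_mul (c := M) hh ((Complex.continuous_ofReal.comp
    (ha.continuous y)).aestronglyMeasurable.mul hh.1) (.of_forall fun ξ => ?_)
  rw [norm_mul, Complex.norm_real]
  gcongr
  exact hM ξ

theorem integrable_mul (ha : IsAmplitude S a) (y : Y) {h : V → ℂ} (hh : MemLp h 2 volume) :
    Integrable fun ξ => a y ξ * h ξ :=
  (((ha.continuous y).memLp_of_hasCompactSupport (.of_support_subset_isCompact ha.isCompact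
    (ha.support_subset y)) (p := 2)).ofReal (K := ℂ)).integrable_mul hh

theorem lintegral_enorm_inner_wavePacket_sq_le (ha : IsAmplitude S a) (y : Y) {β : ℝ}
    (hβ : ∀ ξ, a y ξ ^ 2 ≤ β) (f : Lp ℂ 2 (volume : Measure V)) :
    ∫⁻ z, ‖inner ℂ (ha.wavePacket (y, z)) f‖ₑ ^ 2
      ≤ ENNReal.ofReal β * (ENNReal.ofReal ((2 * π) ^ Module.finrank ℝ V) * ‖f‖ₑ ^ 2) := by
  simp only [inner_wavePacket]
  rw [lintegral_enorm_sq_fourierSynthesis (ha.integrable_mul y (Lp.memLp f))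
    (ha.memLp_mul y (Lp.memLp f)), mul_left_comm, ← lintegral_enorm_sq_coeFn_eq]
  refine mul_le_mul_right ?_ _
  rw [← lintegral_const_mul' _ _ ENNReal.ofReal_ne_top]
  refine lintegral_mono fun ξ => ?_
  rw [enorm_mul, mul_pow, enorm_sq_eq_ofReal_norm_sq, Complex.norm_real, norm_eq_abs, sq_abs]
  gcongr
  exact hβ ξ

variable {X : Type*} [TopologicalSpace X] [LocallyCompactSpace X] [SecondCountableTopology X]
  [MeasurableSpace X] [OpensMeasurableSpace X] {ν : Measure X}
  {T : Type*} [TopologicalSpace T] [LocallyCompactSpace T] [FirstCountableTopology T]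

theorem isBesselFamily_wavePacket {a : T × X → V → ℝ} (ha : IsAmplitude S a) {β : X → ℝ} {B : ℝ}
    (hB : 0 ≤ B) (t : T) (hβ : ∀ᵐ x ∂ν, ∀ ξ, a (t, x) ξ ^ 2 ≤ β x)
    (hβB : ∫⁻ x, ENNReal.ofReal (β x) ∂ν ≤ ENNReal.ofReal B) :
    IsBesselFamily (ν.prod volume) (B * (2 * π) ^ Module.finrank ℝ V)
      fun z : X × V => ha.wavePacket ((t, z.1), z.2) := by
  intro f
  have hcont : Continuous fun z : X × V => ha.wavePacket ((t, z.1), z.2) :=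
    ha.continuous_wavePacket.comp (by fun_prop)
  have hmeas : Measurable fun z : X × V => ‖inner ℂ (ha.wavePacket ((t, z.1), z.2)) f‖ₑ ^ 2 :=
    (hcont.inner continuous_const).measurable.enorm.pow_const 2
  rw [lintegral_prod _ hmeas.aemeasurable, ENNReal.ofReal_mul hB, mul_assoc]
  calc ∫⁻ x, (∫⁻ z, ‖inner ℂ (ha.wavePacket ((t, x), z)) f‖ₑ ^ 2) ∂ν
      ≤ ∫⁻ x, ENNReal.ofReal (β x)
          * (ENNReal.ofReal ((2 * π) ^ Module.finrank ℝ V) * ‖f‖ₑ ^ 2) ∂ν :=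
        lintegral_mono_ae <| hβ.mono fun x hx =>
          ha.lintegral_enorm_inner_wavePacket_sq_le (t, x) hx f
    _ = (∫⁻ x, ENNReal.ofReal (β x) ∂ν)
          * (ENNReal.ofReal ((2 * π) ^ Module.finrank ℝ V) * ‖f‖ₑ ^ 2) :=
        lintegral_mul_const' _ _ (by finiteness)
    _ ≤ _ := by gcongr

theorem lintegral_fourierSynthesis_le [SigmaFinite ν] {a : ℝ × X → V → ℝ} (ha : IsAmplitude S a)
    {M : ℝ} (hM : ∀ y ξ, |a y ξ| ≤ M) {β : X → ℝ} {A B σ q r : ℝ} {I : Set ℝ} (hI : MeasurableSet I)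
    (hI' : volume I ≠ ⊤) (hq : 2 < q) (hr : 2 < r) (hqr : 1 / q = σ * (1 / 2 - 1 / r))
    (hA : 0 < A) (hB : 0 ≤ B) (hβ : ∀ t ∈ I, ∀ᵐ x ∂ν, ∀ ξ, a (t, x) ξ ^ 2 ≤ β x)
    (hβB : ∫⁻ x, ENNReal.ofReal (β x) ∂ν ≤ ENNReal.ofReal B)
    (hdisp : ∀ t ∈ I, ∀ s ∈ I, t ≠ s → ∀ x y z,
      ‖fourierSynthesis (fun ξ => (a (t, x) ξ : ℂ) * a (s, y) ξ) z‖ ≤ A * |t - s| ^ (-σ))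
    {h : V → ℂ} (hh : MemLp h 2 volume) :
    ∫⁻ t in I, (∫⁻ z : X × V,
        ‖fourierSynthesis (fun ξ => a (t, z.1) ξ * h ξ) z.2‖ₑ ^ r ∂ν.prod volume) ^ (q / r)
      ≤ ENNReal.ofReal ((strichartzConst q r A (B * (2 * π) ^ Module.finrank ℝ V)
          * ∫ ξ, ‖h ξ‖ ^ 2) ^ (q / 2)) := by
  set e : ℝ → X × V → Lp ℂ 2 (volume : Measure V) := fun t z => ha.wavePacket ((t, z.1), z.2)
  have hcont : Continuous (Function.uncurry e) := ha.continuous_wavePacket.comp (by fun_prop)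
  have hdecay : HasDispersiveDecay I A σ e := fun t ht s hs hts x y => by
    simpa only [e, inner_wavePacket_wavePacket] using hdisp t ht s hs hts x.1 y.1 (x.2 - y.2)
  have hstrichartz := hdecay.lintegral_le hI hI' hq hr hqr hA (by positivity)
    hcont.stronglyMeasurable (fun t z => ha.norm_wavePacket_le hM _)
    (fun t ht => ha.isBesselFamily_wavePacket hB t (hβ t ht) hβB) hh.toLp
  simpa only [e, inner_wavePacket_toLp, norm_toLp_sq] using hstrichartz

end IsAmplitude

end Amplitude

section DerivsBoundedOn

variable {E F : Type*} [NormedAddCommGroup E] [NormedSpace ℝ E] [NormedAddCommGroup F]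
  [NormedSpace ℝ F]

/-- All derivatives of `f` of order at most `N` are bounded by `C` on `s`, i.e. `‖f‖_{C^N(s)} ≤ C`
for the maximum norm. -/
def DerivsBoundedOn (s : Set E) (N : ℕ) (C : ℝ) (f : E → F) : Prop :=
  ∀ k ≤ N, ∀ x ∈ s, ‖iteratedFDeriv ℝ k f x‖ ≤ C

namespace DerivsBoundedOn

variable {s : Set E} {N : ℕ} {A B C : ℝ} {f : E → F}

theorem norm_le (hf : DerivsBoundedOn s N C f) {x : E} (hx : x ∈ s) : ‖f x‖ ≤ C := by
  simpa only [norm_iteratedFDeriv_zero] using hf 0 N.zero_le x hx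

theorem mono {s' : Set E} {N' : ℕ} {C' : ℝ} (hf : DerivsBoundedOn s N C f) (hs : s' ⊆ s)
    (hN : N' ≤ N) (hC : C ≤ C') : DerivsBoundedOn s' N' C' f :=
  fun k hk x hx => (hf k (hk.trans hN) x (hs hx)).trans hC

theorem mul {R : Type*} [NormedRing R] [NormedAlgebra ℝ R] {f g : E → R}
    (hf : ContDiff ℝ (⊤ : ℕ∞) f) (hg : ContDiff ℝ (⊤ : ℕ∞) g) (hfA : DerivsBoundedOn s N A f)
    (hgB : DerivsBoundedOn s N B g) : DerivsBoundedOn s N (2 ^ N * A * B) fun x => f x * g x := by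
  intro k hk x hx
  have hA : 0 ≤ A := (norm_nonneg _).trans (hfA.norm_le hx)
  have hB : 0 ≤ B := (norm_nonneg _).trans (hgB.norm_le hx)
  calc ‖iteratedFDeriv ℝ k (fun x => f x * g x) x‖
      ≤ ∑ i ∈ Finset.range (k + 1), (k.choose i : ℝ) * ‖iteratedFDeriv ℝ i f x‖
          * ‖iteratedFDeriv ℝ (k - i) g x‖ :=
        norm_iteratedFDeriv_mul_le hf hg x (mod_cast le_top)
    _ ≤ ∑ i ∈ Finset.range (k + 1), (k.choose i : ℝ) * A * B := by
        refine Finset.sum_le_sum fun i hi => ?_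
        gcongr
        · exact hfA i ((Finset.mem_range_succ_iff.1 hi).trans hk) x hx
        · exact hgB _ ((Nat.sub_le _ _).trans hk) x hx
    _ = 2 ^ k * A * B := by
        rw [← Finset.sum_mul, ← Finset.sum_mul]
        exact_mod_cast congrArg (fun m : ℕ => (m : ℝ) * A * B) (Nat.sum_range_choose k)
    _ ≤ 2 ^ N * A * B := by
        gcongr
        norm_num

theorem comp {G : Type*} [NormedAddCommGroup G] [NormedSpace ℝ G] {g : F → G} {t : Set F} {D : ℝ}
    (hg : ContDiff ℝ (⊤ : ℕ∞) g) (hgA : DerivsBoundedOn t N A g) (hf : ContDiff ℝ (⊤ : ℕ∞) f)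
    (hst : Set.MapsTo f s t) (hD : 1 ≤ D)
    (hfD : ∀ k, 1 ≤ k → k ≤ N → ∀ x ∈ s, ‖iteratedFDeriv ℝ k f x‖ ≤ D) :
    DerivsBoundedOn s N (N.factorial * A * D ^ N) fun x => g (f x) := by
  intro k hk x hx
  have hA : 0 ≤ A := (norm_nonneg _).trans (hgA.norm_le (hst hx))
  calc ‖iteratedFDeriv ℝ k (fun x => g (f x)) x‖ ≤ k.factorial * A * D ^ k :=
        norm_iteratedFDeriv_comp_le hg hf (mod_cast le_top) x
          (fun i hi => hgA i (hi.trans hk) _ (hst hx)) fun i hi hik =>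
            (hfD i hi (hik.trans hk) x hx).trans (le_self_pow₀ hD (by lia))
    _ ≤ N.factorial * A * D ^ N := by gcongr

theorem ofReal {f : E → ℝ} (hf : ContDiff ℝ (⊤ : ℕ∞) f) (hfC : DerivsBoundedOn s N C f) :
    DerivsBoundedOn s N C fun x => (f x : ℂ) := fun k hk x hx =>
  (Complex.ofRealLI.norm_iteratedFDeriv_comp_left (hf.contDiffAt.of_le (mod_cast le_top))
    le_rfl).trans_le (hfC k hk x hx)

theorem comp_add_smul (hf : ContDiff ℝ (⊤ : ℕ∞) f) (hfC : DerivsBoundedOn Set.univ N C f) (y : E)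
    {ε : ℝ} (hε : |ε| ≤ 1) : DerivsBoundedOn Set.univ N C fun v => f (y + ε • v) := by
  intro k hk v _
  have hf' : ContDiff ℝ k fun v => f (y + v) :=
    (hf.of_le (mod_cast le_top)).comp (contDiff_const.add contDiff_id)
  rw [iteratedFDeriv_comp_const_smul (f := fun v => f (y + v)) ε hf']
  simp only [iteratedFDeriv_comp_add_left]
  rw [norm_smul, norm_pow, norm_eq_abs]
  exact (mul_le_of_le_one_left (norm_nonneg _) (pow_le_one₀ (abs_nonneg ε) hε)).trans
    (hfC k hk _ trivial)

end DerivsBoundedOn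

theorem exists_forall_le_of_forall_exists_forall_le {ι : Type*} {f : ℕ → ι → ℝ}
    (h : ∀ k, ∃ C, ∀ i, f k i ≤ C) (N : ℕ) : ∃ C, ∀ k ≤ N, ∀ i, f k i ≤ C := by
  choose C hC using h
  refine ⟨∑ k ∈ Finset.range (N + 1), |C k|, fun k hk i => ?_⟩
  exact ((hC k i).trans (le_abs_self _)).trans (Finset.single_le_sum (f := fun k => |C k|)
    (fun _ _ => abs_nonneg _) (Finset.mem_range_succ_iff.2 hk))

theorem exists_derivsBoundedOn_of_hasCompactSupport {f : E → F} (hf : ContDiff ℝ (⊤ : ℕ∞) f)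
    (hfc : HasCompactSupport f) (N : ℕ) : ∃ C, DerivsBoundedOn Set.univ N C f := by
  obtain ⟨C, hC⟩ := exists_forall_le_of_forall_exists_forall_le
    (fun k => (hf.continuous_iteratedFDeriv (mod_cast le_top)).bounded_above_of_compact_support
      (hfc.iteratedFDeriv k)) N
  exact ⟨C, fun k hk x _ => hC k hk x⟩

theorem exists_derivsBoundedOn_of_hasCompactSupport_sub_const {f : E → F} {c : F}
    (hf : ContDiff ℝ (⊤ : ℕ∞) f) (hfc : HasCompactSupport fun x => f x - c) (N : ℕ) :
    ∃ C, DerivsBoundedOn Set.univ N C f := by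
  have hsub : ContDiff ℝ (⊤ : ℕ∞) fun x => f x - c := hf.sub contDiff_const
  obtain ⟨C, hC⟩ := exists_derivsBoundedOn_of_hasCompactSupport hsub hfc N
  refine ⟨C + ‖c‖, fun k hk x hx => ?_⟩
  have hconst : ‖iteratedFDeriv ℝ k (fun _ : E => c) x‖ ≤ ‖c‖ := by
    rcases eq_or_ne k 0 with rfl | hk₀
    · rw [norm_iteratedFDeriv_zero]
    · rw [iteratedFDeriv_const_of_ne hk₀, Pi.zero_apply, norm_zero]
      exact norm_nonneg c
  calc ‖iteratedFDeriv ℝ k f x‖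
      = ‖iteratedFDeriv ℝ k (fun x => f x - c) x + iteratedFDeriv ℝ k (fun _ => c) x‖ := by
        rw [← fun_iteratedFDeriv_add_apply (hsub.of_le (mod_cast le_top)).contDiffAt
          contDiff_const.contDiffAt]
        simp only [sub_add_cancel]
    _ ≤ C + ‖c‖ := (norm_add_le _ _).trans (add_le_add (hC k hk x hx) hconst)

theorem iteratedDeriv_cexp_I_mul (k : ℕ) :
    iteratedDeriv k (fun x : ℝ => Complex.exp (Complex.I * x)) =
      fun x : ℝ => Complex.I ^ k * Complex.exp (Complex.I * x) := by
  induction k with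
  | zero => simp
  | succ k ih =>
    rw [iteratedDeriv_succ, ih]
    funext x
    have hphase : HasDerivAt (fun x : ℝ => Complex.I * (x : ℂ)) (Complex.I * 1) x :=
      (Complex.ofRealCLM.hasDerivAt (x := x)).const_mul Complex.I
    rw [(hphase.cexp.const_mul (Complex.I ^ k)).deriv]
    ring

theorem contDiff_cexp_I_mul : ContDiff ℝ (⊤ : ℕ∞) fun x : ℝ => Complex.exp (Complex.I * x) :=
  (contDiff_const.mul Complex.ofRealCLM.contDiff).cexp

theorem norm_iteratedFDeriv_cexp_I_mul (k : ℕ) (x : ℝ) :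
    ‖iteratedFDeriv ℝ k (fun x : ℝ => Complex.exp (Complex.I * x)) x‖ = 1 := by
  rw [norm_iteratedFDeriv_eq_norm_iteratedDeriv, iteratedDeriv_cexp_I_mul, norm_mul, norm_pow,
    Complex.norm_I, one_pow, norm_cexp_I_mul_ofReal, one_mul]

theorem derivsBoundedOn_cexp_I_mul {s : Set E} {N : ℕ} {D : ℝ} {R : E → ℝ} (hD : 1 ≤ D)
    (hR : ContDiff ℝ (⊤ : ℕ∞) R)
    (hRD : ∀ k, 1 ≤ k → k ≤ N → ∀ x ∈ s, ‖iteratedFDeriv ℝ k R x‖ ≤ D) :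
    DerivsBoundedOn s N (N.factorial * D ^ N) fun x => Complex.exp (Complex.I * R x) := by
  have hexp : DerivsBoundedOn Set.univ N 1 fun x : ℝ => Complex.exp (Complex.I * x) :=
    fun k _ x _ => (norm_iteratedFDeriv_cexp_I_mul k x).le
  simpa only [mul_one] using hexp.comp contDiff_cexp_I_mul hR (Set.mapsTo_univ R s) hD hRD

end DerivsBoundedOn

section ScaledRemainder

variable {E : Type*} [NormedAddCommGroup E] [NormedSpace ℝ E] {φ : E → ℝ} {τ ε : ℝ}

/-- The remainder of the first order expansion of `v ↦ τ φ(y + ε v)` at `v = 0`; at the scale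
`|τ| ε² = 1` its derivatives are bounded uniformly in `τ`. -/
def scaledRemainder (φ : E → ℝ) (τ ε : ℝ) (y v : E) : ℝ :=
  τ * (φ (y + ε • v) - φ y - ε * fderiv ℝ φ y v)

theorem contDiff_scaledRemainder (hφ : ContDiff ℝ (⊤ : ℕ∞) φ) (τ ε : ℝ) (y : E) :
    ContDiff ℝ (⊤ : ℕ∞) (scaledRemainder φ τ ε y) := by
  unfold scaledRemainder
  fun_prop

theorem fderiv_scaledRemainder (hφ : Differentiable ℝ φ) (τ ε : ℝ) (y : E) :
    fderiv ℝ (scaledRemainder φ τ ε y)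
      = fun v => (τ * ε) • (fderiv ℝ φ (y + ε • v) - fderiv ℝ φ y) := by
  funext v
  have hshift : HasFDerivAt (fun v => y + ε • v) (ε • ContinuousLinearMap.id ℝ E) v :=
    ((hasFDerivAt_id v).const_smul ε).const_add y
  refine (((((hφ (y + ε • v)).hasFDerivAt.comp v hshift).sub_const (φ y)).sub
    ((fderiv ℝ φ y).hasFDerivAt.const_mul ε)).const_mul τ).fderiv.trans ?_
  ext u
  simp
  ring

theorem norm_fderiv_scaledRemainder_le {C : ℝ} (hφ : ContDiff ℝ (⊤ : ℕ∞) φ)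
    (hC : ∀ x, ‖iteratedFDeriv ℝ 2 φ x‖ ≤ C) (hε : 0 ≤ ε) (hτ : |τ| * ε ^ 2 = 1) (y v : E) :
    ‖fderiv ℝ (scaledRemainder φ τ ε y) v‖ ≤ C * ‖v‖ := by
  have hφ' : ContDiff ℝ (⊤ : ℕ∞) (fderiv ℝ φ) := hφ.fderiv_right (mod_cast le_top)
  have hlip : ‖fderiv ℝ φ (y + ε • v) - fderiv ℝ φ y‖ ≤ C * ‖(y + ε • v) - y‖ := by
    refine convex_univ.norm_image_sub_le_of_norm_fderiv_le (𝕜 := ℝ)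
      (fun x _ => (hφ'.differentiable (by simp)).differentiableAt) (fun x _ => ?_)
      (Set.mem_univ _) (Set.mem_univ _)
    rw [← norm_iteratedFDeriv_zero (𝕜 := ℝ) (f := fderiv ℝ (fderiv ℝ φ)),
      norm_iteratedFDeriv_fderiv, norm_iteratedFDeriv_fderiv]
    exact hC x
  rw [add_sub_cancel_left, norm_smul, norm_of_nonneg hε] at hlip
  rw [fderiv_scaledRemainder (hφ.differentiable (by simp)), norm_smul, norm_mul, norm_eq_abs,
    norm_of_nonneg hε]
  calc |τ| * ε * ‖fderiv ℝ φ (y + ε • v) - fderiv ℝ φ y‖ ≤ |τ| * ε * (C * (ε * ‖v‖)) := by gcongr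
    _ = |τ| * ε ^ 2 * (C * ‖v‖) := by ring
    _ = C * ‖v‖ := by rw [hτ, one_mul]

theorem norm_iteratedFDeriv_succ_scaledRemainder (hφ : ContDiff ℝ (⊤ : ℕ∞) φ) {k : ℕ} (hk : k ≠ 0)
    (y v : E) : ‖iteratedFDeriv ℝ (k + 1) (scaledRemainder φ τ ε y) v‖
      = |τ| * |ε| ^ (k + 1) * ‖iteratedFDeriv ℝ (k + 1) φ (y + ε • v)‖ := by
  have hφ' : ContDiff ℝ k (fderiv ℝ φ) := hφ.fderiv_right (mod_cast le_top)
  have hshift : ContDiff ℝ k fun v => fderiv ℝ φ (y + v) :=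
    hφ'.comp (contDiff_const.add contDiff_id)
  have hscale : ContDiff ℝ k fun v => fderiv ℝ φ (y + ε • v) :=
    hφ'.comp (contDiff_const.add (contDiff_const.smul contDiff_id))
  have hsub : iteratedFDeriv ℝ k (fun v => fderiv ℝ φ (y + ε • v) - fderiv ℝ φ y) v
      = iteratedFDeriv ℝ k (fun v => fderiv ℝ φ (y + ε • v)) v := by
    have := iteratedFDeriv_sub_apply (𝕜 := ℝ) (i := k) (g := fun _ => fderiv ℝ φ y)
      hscale.contDiffAt (contDiff_const.contDiffAt (x := v))
    rwa [iteratedFDeriv_const_of_ne hk, Pi.zero_apply, sub_zero] at this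
  rw [← norm_iteratedFDeriv_fderiv, fderiv_scaledRemainder (hφ.differentiable (by simp)),
    iteratedFDeriv_const_smul_apply' (hscale.sub contDiff_const).contDiffAt, hsub,
    iteratedFDeriv_comp_const_smul (f := fun v => fderiv ℝ φ (y + v)) ε hshift]
  simp only [iteratedFDeriv_comp_add_left, norm_smul, norm_iteratedFDeriv_fderiv, norm_mul,
    norm_pow, norm_eq_abs]
  ring

theorem norm_iteratedFDeriv_scaledRemainder_le {N : ℕ} {C ρ : ℝ} (hφ : ContDiff ℝ (⊤ : ℕ∞) φ)
    (hC : DerivsBoundedOn Set.univ (N + 1) C φ) (hε₀ : 0 ≤ ε) (hε₁ : ε ≤ 1)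
    (hτ : |τ| * ε ^ 2 = 1) (hρ : 0 ≤ ρ) {k : ℕ} (hk : 1 ≤ k) (hkN : k ≤ N) (y : E) {v : E}
    (hv : ‖v‖ ≤ ρ) : ‖iteratedFDeriv ℝ k (scaledRemainder φ τ ε y) v‖ ≤ C * (1 + ρ) := by
  have hC₀ : 0 ≤ C := (norm_nonneg _).trans (hC.norm_le (Set.mem_univ y))
  obtain ⟨k, rfl⟩ := Nat.exists_eq_add_of_le' hk
  rcases eq_or_ne k 0 with rfl | hk₀
  · rw [zero_add, ← norm_iteratedFDeriv_fderiv, norm_iteratedFDeriv_zero]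
    refine (norm_fderiv_scaledRemainder_le hφ (fun x => hC 2 (by lia) x trivial) hε₀ hτ y
      v).trans ?_
    gcongr
    linarith
  · rw [norm_iteratedFDeriv_succ_scaledRemainder hφ hk₀, abs_of_nonneg hε₀]
    have hpow : |τ| * ε ^ (k + 1) ≤ 1 := hτ ▸ mul_le_mul_of_nonneg_left
      (pow_le_pow_of_le_one hε₀ hε₁ (by lia)) (abs_nonneg τ)
    calc |τ| * ε ^ (k + 1) * ‖iteratedFDeriv ℝ (k + 1) φ (y + ε • v)‖
        ≤ ‖iteratedFDeriv ℝ (k + 1) φ (y + ε • v)‖ :=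
          mul_le_of_le_one_left (norm_nonneg _) hpow
      _ ≤ C := hC _ (by lia) _ trivial
      _ ≤ C * (1 + ρ) := le_mul_of_one_le_right hC₀ (by linarith)

end ScaledRemainder

section LocalizedAmplitude

variable {E : Type*} [NormedAddCommGroup E] [NormedSpace ℝ E] {φ : E → ℝ} {a g : E → ℂ}
  {τ ε ρ : ℝ}

/-- The amplitude of the piece at `y` and scale `ε` of the oscillatory integral with phase `τ φ` and
amplitude `a`, cut off by `g`: the part of the phase that is affine in `v` has been taken out. -/
def localizedAmplitude (φ : E → ℝ) (a g : E → ℂ) (τ ε : ℝ) (y v : E) : ℂ :=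
  Complex.exp (Complex.I * scaledRemainder φ τ ε y v) * (a (y + ε • v) * g v)

theorem contDiff_cexp_I_mul_comp {R : E → ℝ} (hR : ContDiff ℝ (⊤ : ℕ∞) R) :
    ContDiff ℝ (⊤ : ℕ∞) fun v => Complex.exp (Complex.I * R v) :=
  contDiff_cexp_I_mul.comp hR

theorem contDiff_localizedAmplitude (hφ : ContDiff ℝ (⊤ : ℕ∞) φ) (ha : ContDiff ℝ (⊤ : ℕ∞) a)
    (hg : ContDiff ℝ (⊤ : ℕ∞) g) (τ ε : ℝ) (y : E) :
    ContDiff ℝ (⊤ : ℕ∞) (localizedAmplitude φ a g τ ε y) := by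
  have ha' : ContDiff ℝ (⊤ : ℕ∞) fun v => a (y + ε • v) := by fun_prop
  exact (contDiff_cexp_I_mul_comp (contDiff_scaledRemainder hφ τ ε y)).mul (ha'.mul hg)

theorem tsupport_localizedAmplitude_subset (φ : E → ℝ) (a g : E → ℂ) (τ ε : ℝ) (y : E) :
    tsupport (localizedAmplitude φ a g τ ε y) ⊆ tsupport g :=
  closure_mono fun _ hv hgv => hv (by simp [localizedAmplitude, hgv])

theorem iteratedFDeriv_eq_zero_of_notMem_tsupport {F : Type*} [NormedAddCommGroup F]
    [NormedSpace ℝ F] {f : E → F} {v : E} (hv : v ∉ tsupport f) (k : ℕ) :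
    iteratedFDeriv ℝ k f v = 0 := by
  by_contra hne
  exact hv (support_iteratedFDeriv_subset k hne)

theorem derivsBoundedOn_localizedAmplitude {N : ℕ} {C A G : ℝ} (hφ : ContDiff ℝ (⊤ : ℕ∞) φ)
    (hφC : DerivsBoundedOn Set.univ (N + 1) C φ) (hC : 1 ≤ C) (ha : ContDiff ℝ (⊤ : ℕ∞) a)
    (haA : DerivsBoundedOn Set.univ N A a) (hg : ContDiff ℝ (⊤ : ℕ∞) g)
    (hgG : DerivsBoundedOn Set.univ N G g) (hgρ : tsupport g ⊆ Metric.closedBall 0 ρ) (hρ : 0 ≤ ρ)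
    (hε₀ : 0 ≤ ε) (hε₁ : ε ≤ 1) (hτ : |τ| * ε ^ 2 = 1) (y : E) :
    DerivsBoundedOn Set.univ N (2 ^ N * (N.factorial * (C * (1 + ρ)) ^ N) * (2 ^ N * A * G))
      (localizedAmplitude φ a g τ ε y) := by
  have hA : 0 ≤ A := (norm_nonneg _).trans (haA.norm_le (Set.mem_univ y))
  have hG : 0 ≤ G := (norm_nonneg _).trans (hgG.norm_le (Set.mem_univ y))
  have hphase : DerivsBoundedOn (Metric.closedBall 0 ρ) N (N.factorial * (C * (1 + ρ)) ^ N)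
      fun v => Complex.exp (Complex.I * scaledRemainder φ τ ε y v) :=
    derivsBoundedOn_cexp_I_mul (by nlinarith) (contDiff_scaledRemainder hφ τ ε y)
      fun k hk hkN v hv => norm_iteratedFDeriv_scaledRemainder_le hφ hφC hε₀ hε₁ hτ hρ hk hkN y
        (mem_closedBall_zero_iff.1 hv)
  have hamp : DerivsBoundedOn (Metric.closedBall 0 ρ) N (2 ^ N * A * G)
      fun v => a (y + ε • v) * g v :=
    ((haA.comp_add_smul ha y (abs_le.2 ⟨by linarith, hε₁⟩)).mul (by fun_prop) hg hgG).mono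
      (Set.subset_univ _) le_rfl le_rfl
  intro k hk v _
  by_cases hv : v ∈ Metric.closedBall 0 ρ
  · exact hphase.mul (contDiff_cexp_I_mul_comp (contDiff_scaledRemainder hφ τ ε y))
      (by fun_prop) hamp k hk v hv
  · rw [iteratedFDeriv_eq_zero_of_notMem_tsupport
      (fun h => hv (hgρ (tsupport_localizedAmplitude_subset φ a g τ ε y h))), norm_zero]
    positivity

end LocalizedAmplitude

section FourierDecay

variable {V : Type*} [NormedAddCommGroup V] [InnerProductSpace ℝ V] [FiniteDimensional ℝ V]
  [MeasurableSpace V] [BorelSpace V]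

theorem integral_norm_iteratedFDeriv_le {F : V → ℂ} {N : ℕ} {C ρ : ℝ}
    (hFρ : tsupport F ⊆ Metric.closedBall 0 ρ) (hFC : DerivsBoundedOn Set.univ N C F) {k : ℕ}
    (hk : k ≤ N) :
    ∫ v, ‖iteratedFDeriv ℝ k F v‖ ≤ C * volume.real (Metric.closedBall (0 : V) ρ) := by
  have hzero : ∀ v ∉ Metric.closedBall (0 : V) ρ, ‖iteratedFDeriv ℝ k F v‖ = 0 := fun v hv => by
    rw [iteratedFDeriv_eq_zero_of_notMem_tsupport (fun h => hv (hFρ h)), norm_zero]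
  rw [← setIntegral_eq_integral_of_forall_compl_eq_zero hzero]
  exact (le_norm_self _).trans (norm_setIntegral_le_of_norm_le_const measure_closedBall_lt_top
    fun v _ => (norm_norm _).trans_le (hFC k hk v trivial))

open scoped FourierTransform in
theorem pow_mul_norm_fourier_le {F : V → ℂ} {N : ℕ} {C ρ : ℝ} (hF : ContDiff ℝ (⊤ : ℕ∞) F)
    (hFρ : tsupport F ⊆ Metric.closedBall 0 ρ) (hFC : DerivsBoundedOn Set.univ N C F) {k : ℕ}
    (hk : k ≤ N) (ξ : V) :
    ‖ξ‖ ^ k * ‖𝓕 F ξ‖ ≤ 2 ^ k * ((k + 1) * (C * volume.real (Metric.closedBall (0 : V) ρ))) := by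
  have hcs : HasCompactSupport F :=
    (isCompact_closedBall 0 ρ).of_isClosed_subset isClosed_closure hFρ
  have hint (i m : ℕ) : Integrable fun v : V => ‖v‖ ^ i * ‖iteratedFDeriv ℝ m F v‖ := by
    have := hF.continuous_iteratedFDeriv (m := m) (mod_cast le_top)
    exact Continuous.integrable_of_hasCompactSupport (by fun_prop)
      (hcs.iteratedFDeriv (𝕜 := ℝ) m).norm.mul_left
  have hfourier := Real.pow_mul_norm_iteratedFDeriv_fourier_le (K := ⊤) (N := ⊤) hF
    (fun i m _ _ => hint i m) (k := 0) (n := k) le_top le_top ξ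
  simp only [norm_iteratedFDeriv_zero, pow_zero, zero_add, Nat.cast_zero, mul_zero, one_mul,
    Finset.range_one, Finset.sum_product, Finset.sum_singleton] at hfourier
  calc ‖ξ‖ ^ k * ‖𝓕 F ξ‖ ≤ 2 ^ k * ∑ i ∈ Finset.range (k + 1), ∫ v, ‖iteratedFDeriv ℝ i F v‖ :=
        hfourier
    _ ≤ 2 ^ k * ∑ _i ∈ Finset.range (k + 1), C * volume.real (Metric.closedBall (0 : V) ρ) := by
        gcongr with i hi
        exact integral_norm_iteratedFDeriv_le hFρ hFC ((Finset.mem_range_succ_iff.1 hi).trans hk)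
    _ = 2 ^ k * ((k + 1) * (C * volume.real (Metric.closedBall (0 : V) ρ))) := by simp

theorem one_add_pow_le_two_pow_mul {x : ℝ} (hx : 0 ≤ x) (N : ℕ) :
    (1 + x) ^ N ≤ 2 ^ N * (1 + x ^ N) := by
  refine (add_pow_le zero_le_one hx N).trans ?_
  rw [one_pow]
  gcongr
  · norm_num
  · lia

variable (V) in
/-- A constant `K` with `‖fourierSynthesis F w‖ * (1 + ‖w‖) ^ N ≤ K C` whenever `F` is supported in
the ball of radius `ρ` and has `C^N` norm at most `C`. -/
def fourierDecayConst (N : ℕ) (ρ : ℝ) : ℝ :=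
  2 ^ N * (1 + (2 * π) ^ N * (2 ^ N * (N + 1))) * volume.real (Metric.closedBall (0 : V) ρ)

theorem norm_fourierSynthesis_mul_pow_le {F : V → ℂ} {N : ℕ} {C ρ : ℝ}
    (hF : ContDiff ℝ (⊤ : ℕ∞) F) (hFρ : tsupport F ⊆ Metric.closedBall 0 ρ)
    (hFC : DerivsBoundedOn Set.univ N C F) (w : V) :
    ‖fourierSynthesis F w‖ * (1 + ‖w‖) ^ N ≤ fourierDecayConst V N ρ * C := by
  set W := volume.real (Metric.closedBall (0 : V) ρ)
  have hlow : ‖fourierSynthesis F w‖ ≤ C * W := by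
    rw [fourierSynthesis_eq_fourier]
    simpa using pow_mul_norm_fourier_le hF hFρ hFC N.zero_le (-(2 * π)⁻¹ • w)
  have hhigh : ‖w‖ ^ N * ‖fourierSynthesis F w‖
      ≤ (2 * π) ^ N * (2 ^ N * ((N + 1) * (C * W))) := by
    have := pow_mul_norm_fourier_le hF hFρ hFC le_rfl (-(2 * π)⁻¹ • w)
    rw [← fourierSynthesis_eq_fourier, norm_smul, norm_neg, norm_inv,
      norm_of_nonneg two_pi_pos.le, mul_pow, inv_pow, mul_assoc,
      inv_mul_le_iff₀ (by positivity)] at this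
    exact this
  calc ‖fourierSynthesis F w‖ * (1 + ‖w‖) ^ N
      ≤ ‖fourierSynthesis F w‖ * (2 ^ N * (1 + ‖w‖ ^ N)) := by
        gcongr
        exact one_add_pow_le_two_pow_mul (norm_nonneg w) N
    _ = 2 ^ N * (‖fourierSynthesis F w‖ + ‖w‖ ^ N * ‖fourierSynthesis F w‖) := by ring
    _ ≤ 2 ^ N * (C * W + (2 * π) ^ N * (2 ^ N * ((N + 1) * (C * W)))) := by gcongr
    _ = fourierDecayConst V N ρ * C := by
        rw [fourierDecayConst]
        ring

end FourierDecay

section Dispersion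

variable {V : Type*} [NormedAddCommGroup V] [InnerProductSpace ℝ V] [FiniteDimensional ℝ V]
  {φ : V → ℝ} {a g : V → ℂ} {K : Set V} {ρ L C A τ ε : ℝ} {N : ℕ}

/-- The minimizer `y₀` of the local frequency takes the place of a critical point of the phase,
which need not exist in `K`. -/
theorem exists_norm_sub_le_norm_add_smul_gradient (hφ : ContDiff ℝ 1 φ) (hK : IsCompact K)
    (hL : 0 ≤ L)
    (hbl : ∀ y ∈ K, ∀ y' ∈ K, ‖y - y'‖ ≤ L * ‖gradient φ y - gradient φ y'‖) (τ : ℝ) (z : V) :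
    ∃ y₀, ∀ y ∈ K, |τ| * ‖y - y₀‖ ≤ 2 * L * ‖z + τ • gradient φ y‖ := by
  have hcont : Continuous fun y => ‖z + τ • gradient φ y‖ := by
    have := (InnerProductSpace.toDual ℝ V).symm.continuous.comp (hφ.continuous_fderiv one_ne_zero)
    exact (continuous_const.add (this.const_smul τ)).norm
  rcases K.eq_empty_or_nonempty with rfl | hKne
  · exact ⟨0, fun y hy => hy.elim⟩
  obtain ⟨y₀, hy₀, hmin⟩ := hK.exists_isMinOn hKne hcont.continuousOn
  refine ⟨y₀, fun y hy => ?_⟩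
  have hmin' : ‖z + τ • gradient φ y₀‖ ≤ ‖z + τ • gradient φ y‖ := hmin hy
  calc |τ| * ‖y - y₀‖ ≤ |τ| * (L * ‖gradient φ y - gradient φ y₀‖) := by
        gcongr
        exact hbl y hy y₀ hy₀
    _ = L * ‖(z + τ • gradient φ y) - (z + τ • gradient φ y₀)‖ := by
        rw [add_sub_add_left_eq_sub, ← smul_sub, norm_smul, norm_eq_abs]
        ring
    _ ≤ L * (‖z + τ • gradient φ y‖ + ‖z + τ • gradient φ y₀‖) := by
        gcongr
        exact norm_sub_le _ _
    _ ≤ 2 * L * ‖z + τ • gradient φ y‖ := by nlinarith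

variable [MeasurableSpace V] [BorelSpace V]

/-- The average of `f` around `y` at scale `ε` with respect to the weight `g`. -/
def scaledAverage (f g : V → ℂ) (ε : ℝ) (y : V) : ℂ :=
  ∫ v, f (y + ε • v) * g v

theorem integral_scaledAverage {f g : V → ℂ} (hf : Continuous f) (hfs : HasCompactSupport f)
    (hg : Continuous g) (hgs : HasCompactSupport g) (ε : ℝ) :
    ∫ y, scaledAverage f g ε y = (∫ η, f η) * ∫ v, g v := by
  have hfi : Integrable f := hf.integrable_of_hasCompactSupport hfs
  have hgi : Integrable g := hg.integrable_of_hasCompactSupport hgs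
  have hint : Integrable (Function.uncurry fun y v => f (y + ε • v) * g v)
      (volume.prod volume) := by
    refine (integrable_prod_iff' (Continuous.aestronglyMeasurable (by fun_prop))).2
      ⟨.of_forall fun v => (hfi.comp_add_right (ε • v)).mul_const (g v), ?_⟩
    simp only [Function.uncurry, norm_mul, integral_mul_const,
      integral_add_right_eq_self fun y => ‖f y‖]
    exact hgi.norm.const_mul _
  simp only [scaledAverage]
  rw [integral_integral_swap hint]
  simp only [integral_mul_const, integral_add_right_eq_self f, integral_const_mul]

theorem scaledAverage_eq_zero {f g : V → ℂ} {ε ρ : ℝ} {K : Set V}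
    (hgρ : tsupport g ⊆ Metric.closedBall 0 ρ) (hfK : ∀ x, f x ≠ 0 → Metric.closedBall x ρ ⊆ K)
    (hε : |ε| ≤ 1) {y : V} (hy : y ∉ K) : scaledAverage f g ε y = 0 := by
  refine integral_eq_zero_of_ae (.of_forall fun v => ?_)
  by_contra hne
  obtain ⟨hfv, hgv⟩ := mul_ne_zero_iff.1 hne
  have hv : ‖v‖ ≤ ρ := mem_closedBall_zero_iff.1 (hgρ (subset_tsupport _ hgv))
  refine hy (hfK _ hfv ?_)
  rw [Metric.mem_closedBall, dist_self_add_right, norm_smul, norm_eq_abs]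
  exact (mul_le_of_le_one_left (norm_nonneg v) hε).trans hv

/-- The amplitude `a` modulated by the oscillating factor `e^{iτφ}`. -/
def modulate (τ : ℝ) (φ : V → ℝ) (a : V → ℂ) (η : V) : ℂ :=
  Complex.exp (Complex.I * (τ * φ η : ℝ)) * a η

theorem scaledAverage_eq_cexp_mul_fourierSynthesis (φ : V → ℝ) (a g : V → ℂ) (τ ε : ℝ)
    (z y : V) :
    scaledAverage (fun η => Complex.exp (Complex.I * (⟪z, η⟫ : ℝ)) * modulate τ φ a η) g ε y
      = Complex.exp (Complex.I * (⟪z, y⟫ + τ * φ y : ℝ))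
        * fourierSynthesis (localizedAmplitude φ a g τ ε y) (ε • (z + τ • gradient φ y)) := by
  simp only [scaledAverage, modulate, fourierSynthesis, localizedAmplitude]
  rw [← integral_const_mul]
  refine integral_congr_ae (.of_forall fun v => ?_)
  have hlinear : ⟪ε • (z + τ • gradient φ y), v⟫ = ε * (⟪z, v⟫ + τ * fderiv ℝ φ y v) := by
    rw [real_inner_smul_left, inner_add_left, real_inner_smul_left, gradient,
      InnerProductSpace.toDual_symm_apply]
  simp only [← mul_assoc, ← Complex.exp_add, hlinear, inner_add_right, real_inner_smul_right,
    scaledRemainder]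
  congr 3
  push_cast
  ring

variable (V) in
/-- A constant in the bound `‖scaledAverage‖ * (1 + ‖w‖) ^ N ≤ K`, for phases with `C^{N+1}` norm at
most `C`, amplitudes with `C^N` norm at most `A` and weights with `C^N` norm at most `G` supported
in the ball of radius `ρ`. -/
def scaledAverageConst (N : ℕ) (ρ C A G : ℝ) : ℝ :=
  fourierDecayConst V N ρ * (2 ^ N * (N.factorial * (C * (1 + ρ)) ^ N) * (2 ^ N * A * G))

theorem norm_scaledAverage_mul_pow_le {G : ℝ} (hφ : ContDiff ℝ (⊤ : ℕ∞) φ)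
    (hφC : DerivsBoundedOn Set.univ (N + 1) C φ) (hC : 1 ≤ C) (ha : ContDiff ℝ (⊤ : ℕ∞) a)
    (haA : DerivsBoundedOn Set.univ N A a) (hg : ContDiff ℝ (⊤ : ℕ∞) g)
    (hgG : DerivsBoundedOn Set.univ N G g) (hgρ : tsupport g ⊆ Metric.closedBall 0 ρ) (hρ : 0 ≤ ρ)
    (hε₀ : 0 ≤ ε) (hε₁ : ε ≤ 1) (hτ : |τ| * ε ^ 2 = 1) (z y : V) :
    ‖scaledAverage (fun η => Complex.exp (Complex.I * (⟪z, η⟫ : ℝ)) * modulate τ φ a η) g ε y‖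
        * (1 + ‖ε • (z + τ • gradient φ y)‖) ^ N
      ≤ scaledAverageConst V N ρ C A G := by
  rw [scaledAverage_eq_cexp_mul_fourierSynthesis, norm_mul, norm_cexp_I_mul_ofReal, one_mul]
  exact norm_fourierSynthesis_mul_pow_le (contDiff_localizedAmplitude hφ ha hg τ ε y)
    ((tsupport_localizedAmplitude_subset φ a g τ ε y).trans hgρ)
    (derivsBoundedOn_localizedAmplitude hφ hφC hC ha haA hg hgG hgρ hρ hε₀ hε₁ hτ y) _

theorem integral_one_add_norm_smul_sub_rpow {R : ℝ} (hR : 0 < R) (p : ℝ) (y₀ : V) :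
    ∫ y : V, (1 + ‖R⁻¹ • (y - y₀)‖) ^ p
      = R ^ Module.finrank ℝ V * ∫ y : V, (1 + ‖y‖) ^ p := by
  rw [integral_sub_right_eq_self fun y : V => (1 + ‖R⁻¹ • y‖) ^ p,
    Measure.integral_comp_smul volume fun y : V => (1 + ‖y‖) ^ p, smul_eq_mul,
    abs_of_nonneg (by positivity), inv_pow, inv_inv]

theorem exists_contDiff_weight (hρ : 0 < ρ) : ∃ g : V → ℂ, ContDiff ℝ (⊤ : ℕ∞) g ∧
    tsupport g ⊆ Metric.closedBall 0 ρ ∧ ∫ v, g v = 1 := by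
  let bump : ContDiffBump (0 : V) := ⟨ρ / 2, ρ, by positivity, by linarith⟩
  refine ⟨fun v => (bump.normed volume v : ℂ), Complex.ofRealCLM.contDiff.comp bump.contDiff_normed,
    ?_, ?_⟩
  · have hsupp : tsupport (bump.normed volume) = Metric.closedBall 0 ρ := bump.tsupport_normed_eq
    exact (closure_mono fun v hv => by simpa using hv).trans hsupp.subset
  · rw [integral_complex_ofReal, bump.integral_normed, Complex.ofReal_one]

/-- The frequencies at which `fourierSynthesis (modulate τ φ a) z` is not small fill a ball of
radius `O(ε)` around `y₀`. -/
theorem exists_norm_scaledAverage_le {G : ℝ} (hφ : ContDiff ℝ (⊤ : ℕ∞) φ)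
    (hφC : DerivsBoundedOn Set.univ (N + 1) C φ) (hC : 1 ≤ C) (hK : IsCompact K) (hL : 0 < L)
    (hbl : ∀ y ∈ K, ∀ y' ∈ K, ‖y - y'‖ ≤ L * ‖gradient φ y - gradient φ y'‖)
    (ha : ContDiff ℝ (⊤ : ℕ∞) a) (haA : DerivsBoundedOn Set.univ N A a)
    (haK : ∀ x, a x ≠ 0 → Metric.closedBall x ρ ⊆ K) (hg : ContDiff ℝ (⊤ : ℕ∞) g)
    (hgG : DerivsBoundedOn Set.univ N G g) (hgρ : tsupport g ⊆ Metric.closedBall 0 ρ) (hρ : 0 ≤ ρ)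
    (hε₀ : 0 < ε) (hε₁ : ε ≤ 1) (hτ : |τ| * ε ^ 2 = 1) (z : V) :
    ∃ y₀, ∀ y, ‖scaledAverage (fun η => Complex.exp (Complex.I * (⟪z, η⟫ : ℝ))
        * modulate τ φ a η) g ε y‖
      ≤ scaledAverageConst V N ρ C A G * (1 + ‖(2 * L * ε)⁻¹ • (y - y₀)‖) ^ (-(N : ℝ)) := by
  obtain ⟨y₀, hy₀⟩ := exists_norm_sub_le_norm_add_smul_gradient (hφ.of_le (mod_cast le_top)) hK
    hL.le hbl τ z
  refine ⟨y₀, fun y => ?_⟩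
  have hdecay := norm_scaledAverage_mul_pow_le hφ hφC hC ha haA hg hgG hgρ hρ hε₀.le hε₁ hτ z y
  rw [rpow_neg (by positivity), rpow_natCast, ← div_eq_mul_inv, le_div_iff₀ (by positivity)]
  by_cases hy : y ∈ K
  · refine le_trans ?_ hdecay
    gcongr ‖_‖ * (1 + ?_) ^ N
    rw [norm_smul, norm_inv, norm_of_nonneg (by positivity), inv_mul_le_iff₀ (by positivity),
      norm_smul, norm_of_nonneg hε₀.le]
    calc ‖y - y₀‖ = ε ^ 2 * (|τ| * ‖y - y₀‖) := by linear_combination (-‖y - y₀‖) * hτ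
      _ ≤ ε ^ 2 * (2 * L * ‖z + τ • gradient φ y‖) := by
          gcongr ε ^ 2 * ?_
          exact hy₀ y hy
      _ = 2 * L * ε * (ε * ‖z + τ • gradient φ y‖) := by ring
  · rw [scaledAverage_eq_zero hgρ (fun x hx => haK x fun h => hx (by simp [modulate, h]))
      (abs_le.2 ⟨by linarith, hε₁⟩) hy, norm_zero, zero_mul]
    exact (by positivity : (0 : ℝ) ≤ _).trans hdecay

variable (V) in
/-- The volume of the set of frequencies contributing at unit scale in
`norm_fourierSynthesis_modulate_le_of_one_le`. -/
def dispersionVolume (L : ℝ) : ℝ :=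
  (2 * L) ^ Module.finrank ℝ V * ∫ y : V, (1 + ‖y‖) ^ (-((Module.finrank ℝ V + 1 : ℕ) : ℝ))

theorem norm_fourierSynthesis_modulate_le_of_one_le {G : ℝ} (hφ : ContDiff ℝ (⊤ : ℕ∞) φ)
    (hφC : DerivsBoundedOn Set.univ (Module.finrank ℝ V + 2) C φ) (hC : 1 ≤ C) (hK : IsCompact K)
    (hL : 0 < L) (hbl : ∀ y ∈ K, ∀ y' ∈ K, ‖y - y'‖ ≤ L * ‖gradient φ y - gradient φ y'‖)
    (ha : ContDiff ℝ (⊤ : ℕ∞) a) (haA : DerivsBoundedOn Set.univ (Module.finrank ℝ V + 1) A a)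
    (haK : ∀ x, a x ≠ 0 → Metric.closedBall x ρ ⊆ K) (hg : ContDiff ℝ (⊤ : ℕ∞) g)
    (hgG : DerivsBoundedOn Set.univ (Module.finrank ℝ V + 1) G g)
    (hgρ : tsupport g ⊆ Metric.closedBall 0 ρ) (hg₁ : ∫ v, g v = 1) (hρ : 0 ≤ ρ) (hτ : 1 ≤ |τ|)
    (z : V) :
    ‖fourierSynthesis (modulate τ φ a) z‖
      ≤ scaledAverageConst V (Module.finrank ℝ V + 1) ρ C A G * dispersionVolume V L
        * |τ| ^ (-(Module.finrank ℝ V : ℝ) / 2) := by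
  set n := Module.finrank ℝ V
  set ε := |τ| ^ (-(1 / 2) : ℝ)
  have hτ₀ : 0 < |τ| := by linarith
  have hε₁ : ε ≤ 1 := rpow_le_one_of_one_le_of_nonpos hτ (by norm_num)
  have hε₀ : 0 < ε := by positivity
  have hτε : |τ| * ε ^ 2 = 1 := by
    rw [← rpow_natCast, ← rpow_mul hτ₀.le]
    norm_num [rpow_neg_one, hτ₀.ne']
  have hεn : ε ^ n = |τ| ^ (-(n : ℝ) / 2) := by
    rw [← rpow_natCast, ← rpow_mul hτ₀.le]
    ring_nf
  obtain ⟨y₀, hy₀⟩ := exists_norm_scaledAverage_le hφ hφC hC hK hL hbl ha haA haK hg hgG hgρ hρ hε₀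
    hε₁ hτε z
  have hJ : Integrable fun y : V => (1 + ‖y‖) ^ (-((n + 1 : ℕ) : ℝ)) :=
    integrable_one_add_norm (by push_cast; linarith)
  have havg := integral_scaledAverage
    (f := fun η => Complex.exp (Complex.I * (⟪z, η⟫ : ℝ)) * modulate τ φ a η)
    (by have := hφ.continuous; have := ha.continuous; unfold modulate; fun_prop)
    (HasCompactSupport.of_support_subset_isCompact hK fun x hx =>
      haK x hx (Metric.mem_closedBall_self hρ)).mul_left.mul_left hg.continuous
    ((isCompact_closedBall 0 ρ).of_isClosed_subset isClosed_closure hgρ) ε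
  rw [hg₁, mul_one] at havg
  rw [fourierSynthesis, ← havg]
  refine (norm_integral_le_of_norm_le (((hJ.comp_smul (R := (2 * L * ε)⁻¹)
    (by positivity)).comp_sub_right y₀).const_mul _) (.of_forall hy₀)).trans_eq ?_
  rw [integral_const_mul, integral_one_add_norm_smul_sub_rpow (by positivity), mul_pow, hεn,
    dispersionVolume]
  ring

theorem norm_fourierSynthesis_modulate_le_volume (hK : IsCompact K) (haA : ∀ x, ‖a x‖ ≤ A)
    (haK : ∀ x, a x ≠ 0 → x ∈ K) (τ : ℝ) (φ : V → ℝ) (z : V) :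
    ‖fourierSynthesis (modulate τ φ a) z‖ ≤ A * volume.real K := by
  have hzero : ∀ η ∉ K,
      Complex.exp (Complex.I * (⟪z, η⟫ : ℝ)) * modulate τ φ a η = 0 := fun η hη => by
    simp [modulate, not_imp_comm.1 (haK η) hη]
  rw [fourierSynthesis, ← setIntegral_eq_integral_of_forall_compl_eq_zero hzero]
  refine norm_setIntegral_le_of_norm_le_const hK.measure_lt_top fun η _ => ?_
  rw [modulate, norm_mul, norm_mul, norm_cexp_I_mul_ofReal, norm_cexp_I_mul_ofReal, one_mul,
    one_mul]
  exact haA η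

theorem exists_norm_fourierSynthesis_modulate_le (hφ : ContDiff ℝ (⊤ : ℕ∞) φ)
    (hφC : DerivsBoundedOn Set.univ (Module.finrank ℝ V + 2) C φ) (hK : IsCompact K)
    (hL : 0 < L) (hbl : ∀ y ∈ K, ∀ y' ∈ K, ‖y - y'‖ ≤ L * ‖gradient φ y - gradient φ y'‖)
    (hρ : 0 < ρ) (A : ℝ) :
    ∃ D, ∀ a : V → ℂ, ContDiff ℝ (⊤ : ℕ∞) a →
      DerivsBoundedOn Set.univ (Module.finrank ℝ V + 1) A a →
      (∀ x, a x ≠ 0 → Metric.closedBall x ρ ⊆ K) → ∀ (z : V) (τ : ℝ), τ ≠ 0 →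
      ‖fourierSynthesis (modulate τ φ a) z‖ ≤ D * |τ| ^ (-(Module.finrank ℝ V : ℝ) / 2) := by
  obtain ⟨g, hg, hgρ, hg₁⟩ := exists_contDiff_weight (V := V) hρ
  obtain ⟨G, hgG⟩ := exists_derivsBoundedOn_of_hasCompactSupport hg
    ((isCompact_closedBall 0 ρ).of_isClosed_subset isClosed_closure hgρ) (Module.finrank ℝ V + 1)
  refine ⟨max (scaledAverageConst V (Module.finrank ℝ V + 1) ρ (max 1 C) A G * dispersionVolume V L)
    (A * volume.real K), fun a ha haA haK z τ hτ => ?_⟩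
  rcases le_or_gt 1 |τ| with hτ₁ | hτ₁
  · refine (norm_fourierSynthesis_modulate_le_of_one_le hφ
      (hφC.mono subset_rfl le_rfl (le_max_right 1 C)) (le_max_left 1 C) hK hL hbl ha haA haK hg hgG
      hgρ hg₁ hρ.le hτ₁ z).trans ?_
    gcongr
    exact le_max_left _ _
  · have hvol := norm_fourierSynthesis_modulate_le_volume hK
      (fun x => haA.norm_le (Set.mem_univ x))
      (fun x hx => haK x hx (Metric.mem_closedBall_self hρ.le)) τ φ z
    have hpow : 1 ≤ |τ| ^ (-(Module.finrank ℝ V : ℝ) / 2) :=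
      one_le_rpow_of_pos_of_le_one_of_nonpos (abs_pos.2 hτ) hτ₁.le
        (div_nonpos_of_nonpos_of_nonneg (by simp) zero_le_two)
    have hmax := hvol.trans (le_max_right (scaledAverageConst V (Module.finrank ℝ V + 1) ρ
      (max 1 C) A G * dispersionVolume V L) _)
    exact hmax.trans (le_mul_of_one_le_right ((norm_nonneg _).trans hmax) hpow)

end Dispersion

section AnnularCutoff

variable {V : Type*} [NormedAddCommGroup V] {a b : ℝ} {η : V}

/-- A smooth radial cutoff, equal to `1` on `a ≤ ‖η‖ ≤ b` and to `0` off `a / 2 ≤ ‖η‖ ≤ 2 b`. -/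
def annularCutoff (a b : ℝ) (η : V) : ℝ :=
  smoothTransition ((4 * ‖η‖ ^ 2 - a ^ 2) / (3 * a ^ 2))
    * smoothTransition ((4 * b ^ 2 - ‖η‖ ^ 2) / (3 * b ^ 2))

theorem annularCutoff_nonneg (a b : ℝ) (η : V) : 0 ≤ annularCutoff a b η :=
  mul_nonneg (smoothTransition.nonneg _) (smoothTransition.nonneg _)

theorem annularCutoff_le_one (a b : ℝ) (η : V) : annularCutoff a b η ≤ 1 :=
  mul_le_one₀ (smoothTransition.le_one _) (smoothTransition.nonneg _) (smoothTransition.le_one _)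

theorem annularCutoff_eq_one (ha : 0 < a) (hb : 0 < b) (haη : a ≤ ‖η‖) (hηb : ‖η‖ ≤ b) :
    annularCutoff a b η = 1 := by
  rw [annularCutoff, smoothTransition.one_of_one_le, smoothTransition.one_of_one_le, one_mul]
  · rw [le_div_iff₀ (by positivity)]
    nlinarith [norm_nonneg η]
  · rw [le_div_iff₀ (by positivity)]
    nlinarith

theorem le_norm_of_annularCutoff_ne_zero (h : annularCutoff a b η ≠ 0) : a / 2 ≤ ‖η‖ := by
  by_contra! hlt
  refine left_ne_zero_of_mul h (smoothTransition.zero_of_nonpos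
    (div_nonpos_of_nonpos_of_nonneg ?_ (by positivity)))
  nlinarith [norm_nonneg η]

theorem norm_le_of_annularCutoff_ne_zero (hb : 0 < b) (h : annularCutoff a b η ≠ 0) :
    ‖η‖ ≤ 2 * b := by
  by_contra! hlt
  refine right_ne_zero_of_mul h (smoothTransition.zero_of_nonpos
    (div_nonpos_of_nonpos_of_nonneg ?_ (by positivity)))
  nlinarith

/-- A smooth function, bounded away from `0`, that agrees with the norm on `a ≤ ‖η‖ ≤ b`. -/
def regularizedNorm (a b : ℝ) (η : V) : ℝ :=
  a / 2 + annularCutoff a b η * (‖η‖ - a / 2)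

theorem half_le_regularizedNorm (a b : ℝ) (η : V) : a / 2 ≤ regularizedNorm a b η := by
  rw [regularizedNorm, le_add_iff_nonneg_right]
  rcases eq_or_ne (annularCutoff a b η) 0 with h | h
  · rw [h, zero_mul]
  · exact mul_nonneg (annularCutoff_nonneg a b η)
      (sub_nonneg.2 (le_norm_of_annularCutoff_ne_zero h))

theorem regularizedNorm_eq_norm (ha : 0 < a) (hb : 0 < b) (haη : a ≤ ‖η‖) (hηb : ‖η‖ ≤ b) :
    regularizedNorm a b η = ‖η‖ := by
  rw [regularizedNorm, annularCutoff_eq_one ha hb haη hηb]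
  ring

variable [InnerProductSpace ℝ V]

theorem contDiff_annularCutoff (a b : ℝ) :
    ContDiff ℝ (⊤ : ℕ∞) (annularCutoff a b : V → ℝ) := by
  have hsq : ContDiff ℝ (⊤ : ℕ∞) fun η : V => ‖η‖ ^ 2 := contDiff_norm_sq ℝ
  exact (smoothTransition.contDiff.comp (by fun_prop)).mul
    (smoothTransition.contDiff.comp (by fun_prop))

theorem hasCompactSupport_annularCutoff [FiniteDimensional ℝ V] (a : ℝ) (hb : 0 < b) :
    HasCompactSupport (annularCutoff a b : V → ℝ) :=
  .of_support_subset_isCompact (isCompact_closedBall 0 (2 * b)) fun _ hη =>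
    mem_closedBall_zero_iff.2 (norm_le_of_annularCutoff_ne_zero hb hη)

theorem contDiff_regularizedNorm (ha : 0 < a) (b : ℝ) :
    ContDiff ℝ (⊤ : ℕ∞) (regularizedNorm a b : V → ℝ) := by
  refine contDiff_iff_contDiffAt.2 fun η => ?_
  rcases eq_or_ne η 0 with rfl | hη
  · have hconst : (regularizedNorm a b : V → ℝ) =ᶠ[nhds 0] fun _ => a / 2 := by
      filter_upwards [Metric.ball_mem_nhds (0 : V) (half_pos ha)] with ζ hζ
      have hcut : annularCutoff a b ζ = 0 := by
        by_contra h
        exact (mem_ball_zero_iff.1 hζ).not_ge (le_norm_of_annularCutoff_ne_zero h)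
      rw [regularizedNorm, hcut, zero_mul, add_zero]
    exact contDiffAt_const.congr_of_eventuallyEq hconst
  · exact contDiffAt_const.add ((contDiff_annularCutoff a b).contDiffAt.mul
      ((contDiffAt_norm ℝ hη).sub contDiffAt_const))

theorem hasCompactSupport_comp_regularizedNorm_sub [FiniteDimensional ℝ V] (a : ℝ) (hb : 0 < b)
    (f : ℝ → ℝ) :
    HasCompactSupport fun η : V => f (regularizedNorm a b η) - f (a / 2) :=
  (hasCompactSupport_annularCutoff a hb).mono fun η hη hcut => hη (by
    simp only [regularizedNorm, hcut, zero_mul, add_zero, sub_self])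

theorem exists_derivsBoundedOn_comp_regularizedNorm [FiniteDimensional ℝ V] (hb : 0 < b) {f : ℝ → ℝ}
    (hf : ContDiff ℝ (⊤ : ℕ∞) fun η : V => f (regularizedNorm a b η)) (N : ℕ) :
    ∃ C, DerivsBoundedOn Set.univ N C fun η : V => f (regularizedNorm a b η) :=
  exists_derivsBoundedOn_of_hasCompactSupport_sub_const hf
    (hasCompactSupport_comp_regularizedNorm_sub a hb f) N

theorem contDiff_sqrt_regularizedNorm (ha : 0 < a) (b : ℝ) :
    ContDiff ℝ (⊤ : ℕ∞) fun η : V => √(regularizedNorm a b η) :=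
  (contDiff_regularizedNorm ha b).sqrt fun η =>
    ((half_pos ha).trans_le (half_le_regularizedNorm a b η)).ne'

end AnnularCutoff

section SqrtNorm

variable {V : Type*} [NormedAddCommGroup V] [InnerProductSpace ℝ V]

theorem hasGradientAt_sqrt_norm [CompleteSpace V] {y : V} (hy : y ≠ 0) :
    HasGradientAt (fun η : V => √‖η‖) ((1 / (2 * √‖y‖ ^ 3)) • y) y := by
  have hpos : 0 < ‖y‖ := norm_pos_iff.2 hy
  have hsqrt := ((hasStrictFDerivAt_norm_sq y).hasFDerivAt.sqrt (by positivity)).sqrt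
    (by positivity)
  simp only [sqrt_sq (norm_nonneg _)] at hsqrt
  refine hsqrt.congr_fderiv (ContinuousLinearMap.ext fun v => ?_)
  have hsq : ‖y‖ = √‖y‖ ^ 2 := (sq_sqrt hpos.le).symm
  have hne : √‖y‖ ≠ 0 := by positivity
  rw [InnerProductSpace.toDual_apply_apply, real_inner_smul_left]
  simp only [one_div, mul_inv_rev, smul_apply, coe_innerSL_apply, nsmul_eq_mul, Nat.cast_ofNat,
    smul_eq_mul]
  nth_rewrite 2 [hsq]
  field_simp

theorem norm_one_div_two_mul_sqrt_norm_pow_smul (y : V) :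
    ‖(1 / (2 * √‖y‖ ^ 3)) • y‖ = 1 / (2 * √‖y‖) := by
  rcases eq_or_ne y 0 with rfl | hy
  · simp
  have := sqrt_pos.2 (norm_pos_iff.2 hy)
  rw [norm_smul, norm_of_nonneg (by positivity)]
  nth_rewrite 2 [← sq_sqrt (norm_nonneg y)]
  field_simp

theorem abs_pow_three_sub_pow_three_le {s s' S : ℝ} (hs : s ∈ Set.Icc 0 S)
    (hs' : s' ∈ Set.Icc 0 S) : |s ^ 3 - s' ^ 3| ≤ |s - s'| * (3 * S ^ 2) := by
  rw [Set.mem_Icc] at hs hs'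
  have : 0 ≤ s * s' := mul_nonneg hs.1 hs'.1
  rw [show s ^ 3 - s' ^ 3 = (s - s') * (s ^ 2 + s * s' + s' ^ 2) by ring, abs_mul,
    abs_of_nonneg (by positivity : 0 ≤ s ^ 2 + s * s' + s' ^ 2)]
  gcongr
  nlinarith

theorem norm_sub_le_of_sqrt_norm_mem_Icc {m S : ℝ} (hm : 0 < m) {y y' : V}
    (hy : √‖y‖ ∈ Set.Icc m S) (hy' : √‖y'‖ ∈ Set.Icc m S) :
    ‖y - y'‖ ≤ (2 * S ^ 3 + 6 * S ^ 4 / m)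
      * ‖(1 / (2 * √‖y‖ ^ 3)) • y - (1 / (2 * √‖y'‖ ^ 3)) • y'‖ := by
  have hp := norm_one_div_two_mul_sqrt_norm_pow_smul y
  have hp' := norm_one_div_two_mul_sqrt_norm_pow_smul y'
  set s := √‖y‖
  set s' := √‖y'‖
  set p := (1 / (2 * s ^ 3)) • y with hp_def
  set p' := (1 / (2 * s' ^ 3)) • y' with hp'_def
  have hs : 0 < s := hm.trans_le hy.1
  have hs' : 0 < s' := hm.trans_le hy'.1
  have hS : 0 < S := hs.trans_le hy.2
  have hyp : y = (2 * s ^ 3) • p := by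
    rw [hp_def, smul_smul, mul_one_div_cancel (by positivity), one_smul]
  have hyp' : y' = (2 * s' ^ 3) • p' := by
    rw [hp'_def, smul_smul, mul_one_div_cancel (by positivity), one_smul]
  have hdiff : |s - s'| ≤ 2 * S * S * ‖p - p'‖ := by
    have : s - s' = 2 * s * s' * (‖p'‖ - ‖p‖) := by
      rw [hp, hp']
      field_simp
    rw [this, abs_mul, abs_of_nonneg (by positivity), norm_sub_rev]
    gcongr
    exacts [hy.2, hy'.2, abs_norm_sub_norm_le p' p]
  have hcube : |s ^ 3 - s' ^ 3| ≤ 2 * S * S * ‖p - p'‖ * (3 * S ^ 2) :=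
    (abs_pow_three_sub_pow_three_le ⟨hs.le, hy.2⟩ ⟨hs'.le, hy'.2⟩).trans (by gcongr)
  calc ‖y - y'‖ = ‖(2 * s ^ 3) • (p - p') + (2 * (s ^ 3 - s' ^ 3)) • p'‖ := by
        nth_rewrite 1 [hyp, hyp']
        congr 1
        module
    _ ≤ 2 * s ^ 3 * ‖p - p'‖ + 2 * |s ^ 3 - s' ^ 3| * ‖p'‖ := by
        refine (norm_add_le _ _).trans_eq ?_
        rw [norm_smul, norm_smul, norm_of_nonneg (by positivity), norm_mul, norm_eq_abs,
          norm_eq_abs, abs_two]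
    _ ≤ 2 * S ^ 3 * ‖p - p'‖ + 2 * (2 * S * S * ‖p - p'‖ * (3 * S ^ 2)) * (1 / (2 * m)) := by
        rw [hp']
        gcongr
        exacts [hy.2, hy'.1]
    _ = (2 * S ^ 3 + 6 * S ^ 4 / m) * ‖p - p'‖ := by
        field_simp
        ring

theorem gradient_sqrt_regularizedNorm [CompleteSpace V] {a b : ℝ} (ha : 0 < a) {y : V}
    (hay : a < ‖y‖) (hyb : ‖y‖ < b) :
    gradient (fun η : V => √(regularizedNorm a b η)) y = (1 / (2 * √‖y‖ ^ 3)) • y := by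
  have hy : y ≠ 0 := norm_pos_iff.1 (ha.trans hay)
  have hlocal : (fun η : V => √(regularizedNorm a b η)) =ᶠ[nhds y] fun η => √‖η‖ := by
    filter_upwards [continuous_norm.continuousAt.eventually (lt_mem_nhds hay),
      continuous_norm.continuousAt.eventually (gt_mem_nhds hyb)] with η haη hηb
    rw [regularizedNorm_eq_norm ha (ha.trans (hay.trans hyb)) haη.le hηb.le]
  rw [gradient, hlocal.fderiv_eq]
  exact (hasGradientAt_sqrt_norm hy).gradient

theorem norm_sub_le_norm_gradient_sqrt_regularizedNorm_sub [CompleteSpace V] {a b m M : ℝ}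
    (ha : 0 < a) (ham : a < m) (hMb : M < b) {y y' : V} (hy : ‖y‖ ∈ Set.Icc m M)
    (hy' : ‖y'‖ ∈ Set.Icc m M) :
    ‖y - y'‖ ≤ (2 * √M ^ 3 + 6 * √M ^ 4 / √m)
      * ‖gradient (fun η : V => √(regularizedNorm a b η)) y
        - gradient (fun η : V => √(regularizedNorm a b η)) y'‖ := by
  rw [gradient_sqrt_regularizedNorm ha (ham.trans_le hy.1) (hy.2.trans_lt hMb),
    gradient_sqrt_regularizedNorm ha (ham.trans_le hy'.1) (hy'.2.trans_lt hMb)]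
  exact norm_sub_le_of_sqrt_norm_mem_Icc (sqrt_pos.2 (ha.trans ham))
    ⟨sqrt_le_sqrt hy.1, sqrt_le_sqrt hy.2⟩ ⟨sqrt_le_sqrt hy'.1, sqrt_le_sqrt hy'.2⟩

end SqrtNorm

section GalleryProfile

/-- `b` and all its derivatives are rapidly decreasing on `[0, ∞)`. -/
def HasRapidDecay (b : ℝ → ℝ) : Prop :=
  ∀ N k : ℕ, ∃ C : ℝ, ∀ y : ℝ, 0 ≤ y → (1 + y) ^ N * |iteratedDeriv k b y| ≤ C

variable {b : ℝ → ℝ}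

theorem HasRapidDecay.exists_pow_mul_abs_le (hdec : HasRapidDecay b) (k : ℕ) :
    ∃ C, ∀ y, 0 ≤ y → y ^ k * |iteratedDeriv k b y| ≤ C := by
  obtain ⟨C, hC⟩ := hdec k k
  refine ⟨C, fun y hy => le_trans ?_ (hC y hy)⟩
  gcongr
  linarith

theorem HasRapidDecay.exists_derivsBoundedOn_comp_mul (hdec : HasRapidDecay b)
    (hb : ContDiff ℝ (⊤ : ℕ∞) b) {c : ℝ} (hc : 0 < c) (N : ℕ) :
    ∃ A, ∀ s, 0 ≤ s → DerivsBoundedOn (Set.Ici c) N A fun ρ => b (ρ * s) := by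
  have hbound (k : ℕ) : ∃ C, ∀ p : Set.Ici (0 : ℝ) × Set.Ici c,
      ‖iteratedFDeriv ℝ k (fun ρ => b (ρ * (p.1 : ℝ))) (p.2 : ℝ)‖ ≤ C := by
    obtain ⟨C, hC⟩ := hdec.exists_pow_mul_abs_le k
    refine ⟨C / c ^ k, fun ⟨⟨s, hs⟩, ⟨ρ, hρ⟩⟩ => ?_⟩
    have hs : 0 ≤ s := hs
    have hρ : c ≤ ρ := hρ
    simp only [mul_comm _ s]
    rw [norm_iteratedFDeriv_eq_norm_iteratedDeriv,
      iteratedDeriv_comp_const_mul (hb.of_le (mod_cast le_top)), norm_mul, norm_pow,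
      norm_of_nonneg hs, norm_eq_abs, le_div_iff₀ (by positivity)]
    calc s ^ k * |iteratedDeriv k b (s * ρ)| * c ^ k
        ≤ s ^ k * |iteratedDeriv k b (s * ρ)| * ρ ^ k := by gcongr
      _ = (s * ρ) ^ k * |iteratedDeriv k b (s * ρ)| := by ring
      _ ≤ C := hC _ (mul_nonneg hs (hc.le.trans hρ))
  obtain ⟨A, hA⟩ := exists_forall_le_of_forall_exists_forall_le hbound N
  exact ⟨A, fun s hs k hk ρ hρ => hA k hk ⟨⟨s, hs⟩, ⟨ρ, hρ⟩⟩⟩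

variable {V : Type*} [NormedAddCommGroup V] {c₀ c₁ : ℝ}

/-- The normal profile `η ↦ b(‖η‖ s)` at height `s`, cut off to frequencies `‖η‖ ∈ [c₀/2, 2c₁]`. -/
def galleryProfile (b : ℝ → ℝ) (c₀ c₁ s : ℝ) (η : V) : ℝ :=
  b (‖η‖ * s) * annularCutoff c₀ c₁ η

theorem galleryProfile_eq_comp_regularizedNorm (b : ℝ → ℝ) (hc₀ : 0 < c₀) (hc₁ : 0 < c₁) (s : ℝ) :
    (galleryProfile b c₀ c₁ s : V → ℝ) =
      fun η => b (regularizedNorm (c₀ / 8) (4 * c₁) η * s) * annularCutoff c₀ c₁ η := by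
  funext η
  rcases eq_or_ne (annularCutoff c₀ c₁ η) 0 with h | h
  · rw [galleryProfile, h, mul_zero, mul_zero]
  · have := le_norm_of_annularCutoff_ne_zero h
    have := norm_le_of_annularCutoff_ne_zero hc₁ h
    rw [galleryProfile, regularizedNorm_eq_norm] <;> linarith

theorem closedBall_subset_of_galleryProfile_ne_zero (hc₁ : 0 < c₁) (hc₀₁ : c₀ ≤ 4 * c₁) {s : ℝ}
    {η : V} (h : galleryProfile b c₀ c₁ s η ≠ 0) :
    Metric.closedBall η (c₀ / 4) ⊆ {ζ : V | ‖ζ‖ ∈ Set.Icc (c₀ / 4) (3 * c₁)} := by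
  intro ζ hζ
  have hcut := right_ne_zero_of_mul h
  have hlow := le_norm_of_annularCutoff_ne_zero hcut
  have hup := norm_le_of_annularCutoff_ne_zero hc₁ hcut
  have hdist := (abs_norm_sub_norm_le ζ η).trans (mem_closedBall_iff_norm.1 hζ)
  rw [abs_le] at hdist
  exact ⟨by linarith, by linarith⟩

theorem modulate_sqrt_norm_eq (hc₀ : 0 < c₀) (hc₁ : 0 < c₁) {a : V → ℂ}
    (ha : ∀ η, a η ≠ 0 → annularCutoff c₀ c₁ η ≠ 0) (τ : ℝ) :
    modulate τ (fun η => √‖η‖) a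
      = modulate τ (fun η => √(regularizedNorm (c₀ / 8) (4 * c₁) η)) a := by
  funext η
  rcases eq_or_ne (a η) 0 with h | h
  · rw [modulate, modulate, h, mul_zero, mul_zero]
  · have := le_norm_of_annularCutoff_ne_zero (ha η h)
    have := norm_le_of_annularCutoff_ne_zero hc₁ (ha η h)
    rw [modulate, modulate, regularizedNorm_eq_norm] <;> linarith

variable [InnerProductSpace ℝ V]

theorem contDiff_galleryProfile (hb : ContDiff ℝ (⊤ : ℕ∞) b) (hc₀ : 0 < c₀) (hc₁ : 0 < c₁)
    (s : ℝ) : ContDiff ℝ (⊤ : ℕ∞) (galleryProfile b c₀ c₁ s : V → ℝ) := by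
  rw [galleryProfile_eq_comp_regularizedNorm b hc₀ hc₁]
  exact (hb.comp ((contDiff_regularizedNorm (by positivity) _).mul contDiff_const)).mul
    (contDiff_annularCutoff c₀ c₁)

variable [FiniteDimensional ℝ V]

variable (V) in
theorem HasRapidDecay.exists_derivsBoundedOn_galleryProfile (hdec : HasRapidDecay b)
    (hb : ContDiff ℝ (⊤ : ℕ∞) b) (hc₀ : 0 < c₀) (hc₁ : 0 < c₁) (N : ℕ) :
    ∃ A, ∀ s, 0 ≤ s →
      DerivsBoundedOn Set.univ N A fun η : V => (galleryProfile b c₀ c₁ s η : ℂ) := by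
  have hν := contDiff_regularizedNorm (V := V) (show 0 < c₀ / 8 by positivity) (4 * c₁)
  have hχ := contDiff_annularCutoff (V := V) c₀ c₁
  obtain ⟨A, hA⟩ := hdec.exists_derivsBoundedOn_comp_mul hb (show 0 < c₀ / 8 / 2 by positivity) N
  obtain ⟨D, hD⟩ := exists_derivsBoundedOn_comp_regularizedNorm (f := fun ρ => ρ)
    (show 0 < 4 * c₁ by positivity) hν N
  obtain ⟨X, hX⟩ := exists_derivsBoundedOn_of_hasCompactSupport hχ
    (hasCompactSupport_annularCutoff c₀ hc₁) N
  refine ⟨2 ^ N * (N.factorial * A * max 1 D ^ N) * X, fun s hs => ?_⟩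
  have hbs : ContDiff ℝ (⊤ : ℕ∞) fun ρ => b (ρ * s) := hb.comp (contDiff_id.mul contDiff_const)
  have hprofile : DerivsBoundedOn Set.univ N (N.factorial * A * max 1 D ^ N)
      fun η : V => b (regularizedNorm (c₀ / 8) (4 * c₁) η * s) :=
    DerivsBoundedOn.comp (g := fun ρ => b (ρ * s)) hbs (hA s hs) hν
      (fun η _ => half_le_regularizedNorm _ _ η) (le_max_left 1 D)
      fun k _ hk η hη => (hD k hk η hη).trans (le_max_right 1 D)
  rw [galleryProfile_eq_comp_regularizedNorm b hc₀ hc₁]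
  exact DerivsBoundedOn.ofReal ((hbs.comp hν).mul hχ)
    (DerivsBoundedOn.mul (hbs.comp hν) hχ hprofile hX)

variable [MeasurableSpace V] [BorelSpace V]

variable (V) in
/-- The gradient of the phase `√‖η‖` is injective with Lipschitz inverse on the annulus, which gives
the decay rate of a phase with nondegenerate Hessian. -/
theorem HasRapidDecay.exists_norm_fourierSynthesis_modulate_sqrt_norm_le (hdec : HasRapidDecay b)
    (hb : ContDiff ℝ (⊤ : ℕ∞) b) (hc₀ : 0 < c₀) (hc₀₁ : c₀ ≤ c₁) :
    ∃ D, ∀ s₁ s₂ : ℝ, 0 ≤ s₁ → 0 ≤ s₂ → ∀ (z : V) (τ : ℝ), τ ≠ 0 →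
      ‖fourierSynthesis (modulate τ (fun η => √‖η‖) fun η =>
          (galleryProfile b c₀ c₁ s₁ η : ℂ) * galleryProfile b c₀ c₁ s₂ η) z‖
        ≤ D * |τ| ^ (-(Module.finrank ℝ V : ℝ) / 2) := by
  have hc₁ : 0 < c₁ := hc₀.trans_le hc₀₁
  have hφ := contDiff_sqrt_regularizedNorm (V := V) (show 0 < c₀ / 8 by positivity) (4 * c₁)
  obtain ⟨C, hC⟩ := exists_derivsBoundedOn_comp_regularizedNorm (show 0 < 4 * c₁ by positivity) hφ
    (Module.finrank ℝ V + 2)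
  obtain ⟨A, hA⟩ := hdec.exists_derivsBoundedOn_galleryProfile V hb hc₀ hc₁ (Module.finrank ℝ V + 1)
  have hK : IsCompact {η : V | ‖η‖ ∈ Set.Icc (c₀ / 4) (3 * c₁)} :=
    (isCompact_closedBall (0 : V) (3 * c₁)).of_isClosed_subset
      (isClosed_Icc.preimage continuous_norm) fun η hη => mem_closedBall_zero_iff.2 hη.2
  obtain ⟨D, hD⟩ := exists_norm_fourierSynthesis_modulate_le hφ hC hK
    (show 0 < 2 * √(3 * c₁) ^ 3 + 6 * √(3 * c₁) ^ 4 / √(c₀ / 4) by positivity)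
    (fun y hy y' hy' => norm_sub_le_norm_gradient_sqrt_regularizedNorm_sub (by positivity)
      (by linarith) (by linarith) hy hy')
    (show 0 < c₀ / 4 by positivity) (2 ^ (Module.finrank ℝ V + 1) * A * A)
  refine ⟨D, fun s₁ s₂ hs₁ hs₂ z τ hτ => ?_⟩
  have hsmooth (s : ℝ) : ContDiff ℝ (⊤ : ℕ∞) fun η : V => (galleryProfile b c₀ c₁ s η : ℂ) :=
    Complex.ofRealCLM.contDiff.comp (contDiff_galleryProfile hb hc₀ hc₁ s)
  have hne (η : V) (hη : (galleryProfile b c₀ c₁ s₁ η : ℂ) * galleryProfile b c₀ c₁ s₂ η ≠ 0) :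
      galleryProfile b c₀ c₁ s₁ η ≠ 0 :=
    Complex.ofReal_ne_zero.1 (left_ne_zero_of_mul hη)
  rw [modulate_sqrt_norm_eq hc₀ hc₁ fun η hη => right_ne_zero_of_mul (hne η hη)]
  exact hD _ ((hsmooth s₁).mul (hsmooth s₂))
    (.mul (hsmooth s₁) (hsmooth s₂) (hA s₁ hs₁) (hA s₂ hs₂))
    (fun η hη => closedBall_subset_of_galleryProfile_ne_zero hc₁ (by linarith) (hne η hη)) z τ hτ

end GalleryProfile

section CosineModulation

theorem cos_mul_cos_mul_eq_modulate {V : Type*} (α β : ℝ) (φ : V → ℝ) (a : V → ℂ) :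
    (fun η => (cos (α * φ η) : ℂ) * cos (β * φ η) * a η)
      = fun η => 1 / 4 * (modulate (α - β) φ a + modulate (β - α) φ a
          + (modulate (α + β) φ a + modulate (-(α + β)) φ a)) η := by
  funext η
  simp only [modulate, Complex.ofReal_cos, Complex.cos, Pi.add_apply]
  push_cast
  simp only [mul_comm Complex.I, add_mul, neg_mul, sub_eq_add_neg, neg_add, Complex.exp_add]
  ring

variable {V : Type*} [NormedAddCommGroup V] [InnerProductSpace ℝ V] [FiniteDimensional ℝ V]
  [MeasurableSpace V] [BorelSpace V] {φ : V → ℝ} {a : V → ℂ}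

theorem integrable_modulate (ha : Integrable a) (hφ : Continuous φ) (τ : ℝ) :
    Integrable (modulate τ φ a) :=
  ha.bdd_mul (by fun_prop) (.of_forall fun ξ => (norm_cexp_I_mul_ofReal _).le)

theorem norm_fourierSynthesis_cos_mul_cos_mul_le (ha : Integrable a) (hφ : Continuous φ)
    {α β E : ℝ} (hα : 0 ≤ α) (hβ : 0 ≤ β) {z : V}
    (hE : ∀ τ, |α - β| ≤ |τ| → ‖fourierSynthesis (modulate τ φ a) z‖ ≤ E) :
    ‖fourierSynthesis (fun η => (cos (α * φ η) : ℂ) * cos (β * φ η) * a η) z‖ ≤ E := by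
  have hint := integrable_modulate ha hφ
  have hsum : |α - β| ≤ |α + β| := by
    rw [abs_of_nonneg (add_nonneg hα hβ), abs_le]
    constructor <;> linarith
  rw [cos_mul_cos_mul_eq_modulate, fourierSynthesis_const_mul,
    fourierSynthesis_add ((hint _).add (hint _)) ((hint _).add (hint _)),
    fourierSynthesis_add (hint _) (hint _), fourierSynthesis_add (hint _) (hint _), norm_mul]
  have hnorm (w₁ w₂ w₃ w₄ : ℂ) :
      ‖w₁ + w₂ + (w₃ + w₄)‖ ≤ ‖w₁‖ + ‖w₂‖ + (‖w₃‖ + ‖w₄‖) :=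
    norm_add_le_of_le (norm_add_le _ _) (norm_add_le _ _)
  have hdiff := hE (α - β) le_rfl
  have hdiff' := hE (β - α) (abs_sub_comm α β).le
  have hadd := hE (α + β) hsum
  have hadd' := hE (-(α + β)) (hsum.trans_eq (abs_neg _).symm)
  refine (mul_le_mul_of_nonneg_left (hnorm _ _ _ _) (norm_nonneg _)).trans ?_
  rw [show ‖(1 / 4 : ℂ)‖ = 1 / 4 by norm_num]
  linarith

end CosineModulation

section GalleryAmplitude

variable {V : Type*} [NormedAddCommGroup V] [InnerProductSpace ℝ V] {b : ℝ → ℝ} {c₀ c₁ μ l : ℝ}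

/-- The amplitude `b(‖ξ‖|x|) cos(t√μ√‖ξ‖)` of a gallery wave at time and height `y = (t, x)`, cut
off to frequencies of size `l`; the absolute value is there because `b` is controlled only on
`[0, ∞)`. -/
def galleryAmplitude (b : ℝ → ℝ) (c₀ c₁ μ l : ℝ) (y : ℝ × ℝ) (ξ : V) : ℝ :=
  galleryProfile b c₀ c₁ (l * |y.2|) (l⁻¹ • ξ) * cos (y.1 * √μ * √‖ξ‖)

theorem galleryAmplitude_smul (b : ℝ → ℝ) (c₀ c₁ μ : ℝ) (hl : 0 < l) (t x : ℝ) (η : V) :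
    galleryAmplitude b c₀ c₁ μ l (t, x) (l • η)
      = galleryProfile b c₀ c₁ (l * |x|) η * cos (t * √(l * μ) * √‖η‖) := by
  rw [galleryAmplitude, inv_smul_smul₀ hl.ne', norm_smul, norm_of_nonneg hl.le, sqrt_mul hl.le,
    sqrt_mul hl.le]
  ring_nf

theorem galleryAmplitude_eq {ξ : V} (hc₀ : 0 < c₀) (hc₁ : 0 < c₁) (hl : 0 < l)
    (hξ₀ : c₀ * l ≤ ‖ξ‖) (hξ₁ : ‖ξ‖ ≤ c₁ * l) (t : ℝ) {x : ℝ} (hx : 0 ≤ x) :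
    galleryAmplitude b c₀ c₁ μ l (t, x) ξ = b (‖ξ‖ * x) * cos (t * √μ * √‖ξ‖) := by
  have hnorm : ‖l⁻¹ • ξ‖ = ‖ξ‖ / l := by
    rw [norm_smul, norm_inv, norm_of_nonneg hl.le, inv_mul_eq_div]
  rw [galleryAmplitude, galleryProfile, annularCutoff_eq_one hc₀ hc₁, mul_one, abs_of_nonneg hx,
    hnorm, div_mul_eq_mul_div, mul_left_comm, mul_div_cancel_left₀ _ hl.ne']
  · rwa [hnorm, le_div_iff₀ hl]
  · rwa [hnorm, div_le_iff₀ hl]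

theorem continuous_uncurry_galleryAmplitude (hb : Continuous b) :
    Continuous (Function.uncurry (galleryAmplitude b c₀ c₁ μ l : ℝ × ℝ → V → ℝ)) := by
  have hcut := (contDiff_annularCutoff (V := V) c₀ c₁).continuous
  unfold Function.uncurry galleryAmplitude galleryProfile
  fun_prop

theorem isAmplitude_galleryAmplitude [FiniteDimensional ℝ V] (hb : Continuous b) (hc₁ : 0 < c₁)
    (hl : 0 < l) :
    IsAmplitude (Metric.closedBall (0 : V) (2 * c₁ * l)) (galleryAmplitude b c₀ c₁ μ l) where
  isCompact := isCompact_closedBall _ _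
  continuous_uncurry := continuous_uncurry_galleryAmplitude hb
  support_subset y ξ hξ := by
    have hcut := norm_le_of_annularCutoff_ne_zero hc₁
      (right_ne_zero_of_mul (left_ne_zero_of_mul hξ))
    rwa [norm_smul, norm_inv, norm_of_nonneg hl.le, inv_mul_le_iff₀ hl, mul_comm l,
      ← mem_closedBall_zero_iff] at hcut

theorem HasRapidDecay.exists_abs_le_div (hdec : HasRapidDecay b) :
    ∃ C, 0 ≤ C ∧ ∀ y, 0 ≤ y → |b y| ≤ C / (1 + y) := by
  obtain ⟨C, hC⟩ := hdec 1 0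
  simp only [pow_one, iteratedDeriv_zero] at hC
  refine ⟨C, le_trans (by positivity) (hC 0 le_rfl), fun y hy => ?_⟩
  rw [le_div_iff₀' (by positivity)]
  exact hC y hy

theorem sq_galleryAmplitude_le {C : ℝ} (hC : 0 ≤ C) (hbC : ∀ y, 0 ≤ y → |b y| ≤ C / (1 + y))
    (hc₀ : 0 < c₀) (hl : 0 < l) (y : ℝ × ℝ) (ξ : V) :
    galleryAmplitude b c₀ c₁ μ l y ξ ^ 2 ≤ C ^ 2 * ((1 + c₀ / 2 * l * |y.2|) ^ 2)⁻¹ := by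
  rcases eq_or_ne (annularCutoff c₀ c₁ (l⁻¹ • ξ)) 0 with hcut | hcut
  · rw [galleryAmplitude, galleryProfile, hcut, mul_zero, zero_mul, zero_pow two_ne_zero]
    positivity
  have hξ := le_norm_of_annularCutoff_ne_zero hcut
  have hprofile : |b (‖l⁻¹ • ξ‖ * (l * |y.2|))| ≤ C / (1 + c₀ / 2 * l * |y.2|) := by
    refine (hbC _ (by positivity)).trans ?_
    rw [← mul_assoc]
    gcongr
  rw [← div_eq_mul_inv, ← div_pow, ← sq_abs, galleryAmplitude, galleryProfile, abs_mul, abs_mul,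
    abs_of_nonneg (annularCutoff_nonneg _ _ _)]
  refine pow_le_pow_left₀ (mul_nonneg (mul_nonneg (abs_nonneg _) (annularCutoff_nonneg _ _ _))
    (abs_nonneg _)) ?_ 2
  calc |b (‖l⁻¹ • ξ‖ * (l * |y.2|))| * annularCutoff c₀ c₁ (l⁻¹ • ξ) * |cos (y.1 * √μ * √‖ξ‖)|
      ≤ |b (‖l⁻¹ • ξ‖ * (l * |y.2|))| * 1 * 1 := by
        gcongr
        · exact annularCutoff_le_one _ _ _
        · exact abs_cos_le_one _
    _ ≤ C / (1 + c₀ / 2 * l * |y.2|) := by rwa [mul_one, mul_one]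

theorem abs_galleryAmplitude_le {C : ℝ} (hC : 0 ≤ C) (hbC : ∀ y, 0 ≤ y → |b y| ≤ C / (1 + y))
    (hc₀ : 0 < c₀) (hl : 0 < l) (y : ℝ × ℝ) (ξ : V) :
    |galleryAmplitude b c₀ c₁ μ l y ξ| ≤ C := by
  refine abs_le_of_sq_le_sq ((sq_galleryAmplitude_le hC hbC hc₀ hl y ξ).trans
    (mul_le_of_le_one_right (sq_nonneg C) ?_)) hC
  have : 0 ≤ c₀ / 2 * l * |y.2| := by positivity
  exact inv_le_one_of_one_le₀ (one_le_pow₀ (by linarith))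

variable [FiniteDimensional ℝ V] [MeasurableSpace V] [BorelSpace V]

theorem integrable_galleryProfile_mul_galleryProfile (hb : Continuous b) (hc₁ : 0 < c₁)
    (s₁ s₂ : ℝ) : Integrable fun η : V =>
      (galleryProfile b c₀ c₁ s₁ η : ℂ) * galleryProfile b c₀ c₁ s₂ η := by
  have hcut := (contDiff_annularCutoff (V := V) c₀ c₁).continuous
  refine Continuous.integrable_of_hasCompactSupport (by unfold galleryProfile; fun_prop) ?_
  refine (hasCompactSupport_annularCutoff c₀ hc₁).mono fun η hη => ?_
  exact right_ne_zero_of_mul (Complex.ofReal_ne_zero.1 (left_ne_zero_of_mul hη))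

theorem fourierSynthesis_galleryAmplitude_mul_galleryAmplitude (b : ℝ → ℝ) (c₀ c₁ μ : ℝ)
    (hl : 0 < l) (t s x y : ℝ) (z : V) :
    fourierSynthesis (fun ξ => (galleryAmplitude b c₀ c₁ μ l (t, x) ξ : ℂ)
        * galleryAmplitude b c₀ c₁ μ l (s, y) ξ) z
      = (l ^ Module.finrank ℝ V : ℝ) * fourierSynthesis (fun η =>
          (cos (t * √(l * μ) * √‖η‖) : ℂ) * cos (s * √(l * μ) * √‖η‖)
            * (galleryProfile b c₀ c₁ (l * |x|) η * galleryProfile b c₀ c₁ (l * |y|) η))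
          (l • z) := by
  rw [fourierSynthesis_eq_pow_mul_comp_smul _ hl]
  congr 2
  funext η
  simp only [galleryAmplitude_smul b c₀ c₁ μ hl, Complex.ofReal_mul]
  ring

theorem pow_mul_mul_sqrt_rpow (hl : 0 < l) (hμ : 0 ≤ μ) {w : ℝ} (hw : 0 ≤ w) (n : ℕ) :
    l ^ n * (w * √(l * μ)) ^ (-(n : ℝ) / 2)
      = μ ^ (-(n : ℝ) / 4) * l ^ (3 * (n : ℝ) / 4) * w ^ (-((n : ℝ) / 2)) := by
  have hexp : l ^ (3 * (n : ℝ) / 4) = l ^ n * l ^ (-(n : ℝ) / 4) := by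
    rw [← rpow_natCast, ← rpow_add hl]
    ring_nf
  rw [mul_rpow hw (sqrt_nonneg _), sqrt_eq_rpow, ← rpow_mul (by positivity), mul_rpow hl.le hμ,
    hexp, show 1 / 2 * (-(n : ℝ) / 2) = -n / 4 by ring, neg_div]
  ring

variable (V) in
theorem HasRapidDecay.exists_norm_fourierSynthesis_galleryAmplitude_le (hdec : HasRapidDecay b)
    (hb : ContDiff ℝ (⊤ : ℕ∞) b) (hc₀ : 0 < c₀) (hc₀₁ : c₀ ≤ c₁) (hμ : 0 < μ) :
    ∃ A, 0 < A ∧ ∀ l, 0 < l → ∀ t, 0 ≤ t → ∀ s, 0 ≤ s → t ≠ s → ∀ (x y : ℝ) (z : V),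
      ‖fourierSynthesis (fun ξ => (galleryAmplitude b c₀ c₁ μ l (t, x) ξ : ℂ)
          * galleryAmplitude b c₀ c₁ μ l (s, y) ξ) z‖
        ≤ A * l ^ (3 * (Module.finrank ℝ V : ℝ) / 4)
          * |t - s| ^ (-((Module.finrank ℝ V : ℝ) / 2)) := by
  set n := Module.finrank ℝ V
  obtain ⟨D, hD⟩ := hdec.exists_norm_fourierSynthesis_modulate_sqrt_norm_le V hb hc₀ hc₀₁
  have : 0 < max D 1 := lt_max_of_lt_right one_pos
  refine ⟨max D 1 * μ ^ (-(n : ℝ) / 4), by positivity, fun l hl t ht s hs hts x y z => ?_⟩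
  have hts₀ : 0 < |t - s| := abs_pos.2 (sub_ne_zero.2 hts)
  have hfreq : |t * √(l * μ) - s * √(l * μ)| = |t - s| * √(l * μ) := by
    rw [← sub_mul, abs_mul, abs_of_nonneg (sqrt_nonneg _)]
  have hsynth := norm_fourierSynthesis_cos_mul_cos_mul_le
    (integrable_galleryProfile_mul_galleryProfile (V := V) (c₀ := c₀) hb.continuous
      (hc₀.trans_le hc₀₁) (l * |x|) (l * |y|))
    (by fun_prop : Continuous fun η : V => √‖η‖) (mul_nonneg ht (sqrt_nonneg (l * μ)))
    (mul_nonneg hs (sqrt_nonneg (l * μ))) (z := l • z)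
    (E := max D 1 * (|t - s| * √(l * μ)) ^ (-(n : ℝ) / 2)) fun τ hτ => by
      rw [hfreq] at hτ
      have hτ₀ : 0 < |τ| := lt_of_lt_of_le (by positivity) hτ
      refine (hD _ _ (by positivity) (by positivity) _ τ (abs_pos.1 hτ₀)).trans ?_
      gcongr ?_ * ?_
      · exact le_max_left D 1
      · exact rpow_le_rpow_of_nonpos (by positivity) hτ (by linarith [n.cast_nonneg (α := ℝ)])
  rw [fourierSynthesis_galleryAmplitude_mul_galleryAmplitude b c₀ c₁ μ hl, norm_mul,
    Complex.norm_real, norm_of_nonneg (by positivity)]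
  refine (mul_le_mul_of_nonneg_left hsynth (by positivity)).trans_eq ?_
  rw [mul_left_comm, pow_mul_mul_sqrt_rpow hl hμ.le hts₀.le]
  ring

/-- The gallery wave with normal profile `b`, mode `μ` and Fourier data `h`. -/
def galleryWave (b : ℝ → ℝ) (μ : ℝ) (h : V → ℂ) (t x : ℝ) : V → ℂ :=
  fourierSynthesis fun ξ => b (‖ξ‖ * x) * cos (t * √μ * √‖ξ‖) * h ξ

theorem galleryWave_eq_fourierSynthesis_galleryAmplitude {h : V → ℂ} (hc₀ : 0 < c₀) (hc₁ : 0 < c₁)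
    (hl : 0 < l) (hh : ∀ ξ, h ξ ≠ 0 → c₀ * l ≤ ‖ξ‖ ∧ ‖ξ‖ ≤ c₁ * l) (t : ℝ) {x : ℝ} (hx : 0 ≤ x) :
    galleryWave b μ h t x
      = fourierSynthesis fun ξ => galleryAmplitude b c₀ c₁ μ l (t, x) ξ * h ξ := by
  unfold galleryWave
  congr 1
  funext ξ
  rcases eq_or_ne (h ξ) 0 with hξ | hξ
  · rw [hξ, mul_zero, mul_zero]
  · rw [galleryAmplitude_eq hc₀ hc₁ hl (hh ξ hξ).1 (hh ξ hξ).2 t hx, Complex.ofReal_mul]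

theorem lintegral_Ioi_inv_one_add_mul_sq {k : ℝ} (hk : 0 < k) :
    ∫⁻ x in Set.Ioi (0 : ℝ), ENNReal.ofReal ((1 + k * x) ^ 2)⁻¹ = ENNReal.ofReal k⁻¹ := by
  have hderiv (x : ℝ) (hx : x ∈ Set.Ici (0 : ℝ)) :
      HasDerivAt (fun x => -(k * (1 + k * x))⁻¹) ((1 + k * x) ^ 2)⁻¹ x := by
    have hx : 0 ≤ x := hx
    have hlin : HasDerivAt (fun x : ℝ => k * (1 + k * x)) (k * (k * 1)) x :=
      (((hasDerivAt_id x).const_mul k).const_add 1).const_mul k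
    refine (hlin.inv (by positivity)).neg.congr_deriv ?_
    have : 1 + k * x ≠ 0 := by positivity
    field_simp
  have hpos (x : ℝ) (_ : x ∈ Set.Ioi (0 : ℝ)) : 0 ≤ ((1 + k * x) ^ 2)⁻¹ := by positivity
  have htendsto : Filter.Tendsto (fun x => -(k * (1 + k * x))⁻¹) Filter.atTop (nhds 0) := by
    have hlin : Filter.Tendsto (fun x => k * (1 + k * x)) Filter.atTop Filter.atTop :=
      (Filter.tendsto_atTop_add_const_left _ _
        (Filter.tendsto_id.const_mul_atTop hk)).const_mul_atTop hk
    simpa using (tendsto_inv_atTop_zero.comp hlin).neg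
  rw [← ofReal_integral_eq_lintegral_ofReal (integrableOn_Ioi_deriv_of_nonneg' hderiv hpos htendsto)
      ((ae_restrict_iff' measurableSet_Ioi).2 (.of_forall hpos)),
    integral_Ioi_of_hasDerivAt_of_nonneg' hderiv hpos htendsto]
  simp

theorem lintegral_Ioi_const_mul_inv_one_add_mul_abs_sq {C k : ℝ} (hC : 0 ≤ C) (hk : 0 < k) :
    ∫⁻ x in Set.Ioi (0 : ℝ), ENNReal.ofReal (C * ((1 + k * |x|) ^ 2)⁻¹)
      = ENNReal.ofReal (C * k⁻¹) := by
  rw [ENNReal.ofReal_mul hC, ← lintegral_Ioi_inv_one_add_mul_sq hk,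
    ← lintegral_const_mul' _ _ ENNReal.ofReal_ne_top]
  refine setLIntegral_congr_fun measurableSet_Ioi fun x hx => ?_
  rw [abs_of_pos hx, ENNReal.ofReal_mul hC]

theorem strichartzConst_mul_mul {q r A B α β : ℝ} (hA : 0 ≤ A) (hB : 0 ≤ B) (hα : 0 ≤ α)
    (hβ : 0 ≤ β) : strichartzConst q r (A * α) (B * β)
      = strichartzConst q r A B * (β ^ (2 / r) * α ^ (1 - 2 / r)) := by
  rw [strichartzConst, strichartzConst, interpolationConst, interpolationConst, ← mul_assoc 2,
    mul_rpow hB hβ, mul_rpow (by positivity) hα]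
  ring

variable (V) in
theorem HasRapidDecay.exists_lintegral_galleryWave_le (hdec : HasRapidDecay b)
    (hb : ContDiff ℝ (⊤ : ℕ∞) b) (hc₀ : 0 < c₀) (hc₀₁ : c₀ ≤ c₁) (hμ : 0 < μ) {q r : ℝ}
    (hq : 2 < q) (hr : 2 < r) (hqr : 1 / q = (Module.finrank ℝ V : ℝ) / 2 * (1 / 2 - 1 / r)) :
    ∃ C, 0 ≤ C ∧ ∀ I : Set ℝ, MeasurableSet I → volume I ≠ ⊤ → I ⊆ Set.Ici 0 → ∀ l, 0 < l →
      ∀ h : V → ℂ, MemLp h 2 volume → (∀ ξ, h ξ ≠ 0 → c₀ * l ≤ ‖ξ‖ ∧ ‖ξ‖ ≤ c₁ * l) →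
        ∫⁻ t in I, (∫⁻ z : ℝ × V, ‖galleryWave b μ h t z.1 z.2‖ₑ ^ r
            ∂(volume.restrict (Set.Ioi 0)).prod volume) ^ (q / r)
          ≤ ENNReal.ofReal ((C * l ^ (-(2 / r) + 3 * (Module.finrank ℝ V : ℝ) / 4 * (1 - 2 / r))
              * ∫ ξ, ‖h ξ‖ ^ 2) ^ (q / 2)) := by
  set n := Module.finrank ℝ V
  have hc₁ : 0 < c₁ := hc₀.trans_le hc₀₁
  obtain ⟨C, hC, hbC⟩ := hdec.exists_abs_le_div
  obtain ⟨A, hA, hdisp⟩ :=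
    hdec.exists_norm_fourierSynthesis_galleryAmplitude_le V hb hc₀ hc₀₁ hμ
  have hB : 0 ≤ C ^ 2 * (c₀ / 2)⁻¹ * (2 * π) ^ n := by positivity
  refine ⟨_, strichartzConst_nonneg hq hr hA.le hB, fun I hI hI' hI₀ l hl h hh hhl => ?_⟩
  have hsq := sq_galleryAmplitude_le (V := V) (c₁ := c₁) (μ := μ) hC hbC hc₀ hl
  have hstr := (isAmplitude_galleryAmplitude (V := V) (c₀ := c₀) (μ := μ) hb.continuous hc₁
    hl).lintegral_fourierSynthesis_le (ν := volume.restrict (Set.Ioi 0))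
    (abs_galleryAmplitude_le hC hbC hc₀ hl) hI hI' hq hr hqr
    (by positivity) (by positivity) (fun t _ => .of_forall fun x => hsq (t, x))
    (lintegral_Ioi_const_mul_inv_one_add_mul_abs_sq (sq_nonneg C) (by positivity)).le
    (fun t ht s hs hts => hdisp l hl t (hI₀ ht) s (hI₀ hs) hts) hh
  have hscale : strichartzConst q r (A * l ^ (3 * (n : ℝ) / 4))
      (C ^ 2 * (c₀ / 2 * l)⁻¹ * (2 * π) ^ n)
        = strichartzConst q r A (C ^ 2 * (c₀ / 2)⁻¹ * (2 * π) ^ n)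
          * l ^ (-(2 / r) + 3 * (n : ℝ) / 4 * (1 - 2 / r)) := by
    rw [mul_inv, ← mul_assoc, mul_right_comm _ l⁻¹,
      strichartzConst_mul_mul hA.le hB (by positivity) (by positivity), rpow_add hl,
      rpow_mul hl.le, rpow_neg hl.le, inv_rpow hl.le]
  rw [← hscale]
  refine le_trans (lintegral_mono fun t => ?_) hstr
  gcongr ?_ ^ (q / r)
  have hIoi : ∀ᵐ z : ℝ × V ∂(volume.restrict (Set.Ioi 0)).prod volume, 0 < z.1 :=
    Measure.quasiMeasurePreserving_fst.ae (ae_restrict_mem measurableSet_Ioi)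
  refine lintegral_mono_ae (hIoi.mono fun z hz => ?_)
  rw [galleryWave_eq_fourierSynthesis_galleryAmplitude hc₀ hc₁ hl hhl t hz.le]

end GalleryAmplitude

section WeightedDilations

theorem rpow_mul_comp_mul_left_eq (G : ℝ → ℝ) (p : ℝ) {a x : ℝ} (ha : 0 < a) (hx : 0 ≤ x) :
    x ^ p * G (a * x) = a ^ (-p) * ((a * x) ^ p * G (a * x)) := by
  rw [mul_rpow ha.le hx, rpow_neg ha.le]
  field_simp

theorem integrableOn_Ioi_rpow_mul_comp_mul_left {G : ℝ → ℝ} {p a : ℝ} (ha : 0 < a)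
    (hG : IntegrableOn (fun x => x ^ p * G x) (Set.Ioi 0)) :
    IntegrableOn (fun x => x ^ p * G (a * x)) (Set.Ioi 0) := by
  rw [← mul_zero a, ← integrableOn_Ioi_comp_mul_left_iff _ 0 ha] at hG
  exact IntegrableOn.congr_fun (hG.const_mul (a ^ (-p)))
    (fun x hx => (rpow_mul_comp_mul_left_eq G p ha (le_of_lt hx)).symm) measurableSet_Ioi

theorem integral_Ioi_rpow_mul_comp_mul_left (G : ℝ → ℝ) (p : ℝ) {a : ℝ} (ha : 0 < a) :
    ∫ x in Set.Ioi 0, x ^ p * G (a * x) = a ^ (-(p + 1)) * ∫ x in Set.Ioi 0, x ^ p * G x := by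
  rw [setIntegral_congr_fun measurableSet_Ioi
      fun x hx => rpow_mul_comp_mul_left_eq G p ha (le_of_lt hx), integral_const_mul,
    integral_comp_mul_left_Ioi (fun s => s ^ p * G s) 0 ha, mul_zero, smul_eq_mul, ← mul_assoc,
    neg_add, rpow_add ha, rpow_neg_one]

variable {V : Type*} [NormedAddCommGroup V] {G : ℝ → ℝ} {p : ℝ} {w : V → ℝ}

theorem integral_Ioi_rpow_mul_comp_norm_mul (hw₀ : w 0 = 0) (ξ : V) :
    ∫ x in Set.Ioi 0, x ^ p * (G (‖ξ‖ * x) * w ξ)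
      = (∫ x in Set.Ioi 0, x ^ p * G x) * (‖ξ‖ ^ (-(p + 1)) * w ξ) := by
  rcases eq_or_ne ξ 0 with rfl | hξ
  · simp [hw₀]
  · simp_rw [← mul_assoc]
    rw [integral_mul_const, integral_Ioi_rpow_mul_comp_mul_left G p (norm_pos_iff.2 hξ)]
    ring

variable [MeasurableSpace V] [BorelSpace V] {ν : Measure V} [SFinite ν]

theorem integrable_uncurry_rpow_mul_comp_norm_mul (hG : Continuous G)
    (hG' : IntegrableOn (fun x => x ^ p * G x) (Set.Ioi 0)) (hw₀ : w 0 = 0) (hw : Measurable w)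
    (hw' : Integrable (fun ξ => ‖ξ‖ ^ (-(p + 1)) * w ξ) ν) :
    Integrable (fun z : ℝ × V => z.1 ^ p * (G (‖z.2‖ * z.1) * w z.2))
      ((volume.restrict (Set.Ioi 0)).prod ν) := by
  have hmeas : Measurable fun z : ℝ × V => z.1 ^ p * (G (‖z.2‖ * z.1) * w z.2) := by fun_prop
  refine (integrable_prod_iff' hmeas.aestronglyMeasurable).2 ⟨.of_forall fun ξ => ?_, ?_⟩
  · rcases eq_or_ne ξ 0 with rfl | hξ
    · simp [hw₀]
    · simp_rw [← mul_assoc]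
      exact (integrableOn_Ioi_rpow_mul_comp_mul_left (norm_pos_iff.2 hξ) hG').mul_const _
  · refine (hw'.norm.const_mul (∫ x in Set.Ioi 0, x ^ p * ‖G x‖)).congr (.of_forall fun ξ => ?_)
    have hslice : ∫ x in Set.Ioi 0, ‖x ^ p * (G (‖ξ‖ * x) * w ξ)‖
        = ∫ x in Set.Ioi 0, x ^ p * (‖G (‖ξ‖ * x)‖ * ‖w ξ‖) :=
      setIntegral_congr_fun measurableSet_Ioi fun x hx => by
        rw [norm_mul, norm_mul, norm_of_nonneg (rpow_nonneg (le_of_lt hx) p)]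
    beta_reduce
    rw [hslice, integral_Ioi_rpow_mul_comp_norm_mul (G := fun s => ‖G s‖)
      (w := fun ξ => ‖w ξ‖) (by simp [hw₀]), norm_mul, norm_of_nonneg (by positivity)]

theorem integral_Ioi_rpow_mul_integral_comp_norm_mul (hG : Continuous G)
    (hG' : IntegrableOn (fun x => x ^ p * G x) (Set.Ioi 0)) (hw₀ : w 0 = 0) (hw : Measurable w)
    (hw' : Integrable (fun ξ => ‖ξ‖ ^ (-(p + 1)) * w ξ) ν) :
    ∫ x in Set.Ioi 0, x ^ p * ∫ ξ, G (‖ξ‖ * x) * w ξ ∂ν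
      = (∫ x in Set.Ioi 0, x ^ p * G x) * ∫ ξ, ‖ξ‖ ^ (-(p + 1)) * w ξ ∂ν := by
  simp_rw [← integral_const_mul]
  rw [integral_integral_swap (integrable_uncurry_rpow_mul_comp_norm_mul hG hG' hw₀ hw hw')]
  simp_rw [integral_Ioi_rpow_mul_comp_norm_mul hw₀]

end WeightedDilations

section ProfileMoments

variable {b : ℝ → ℝ}

theorem HasRapidDecay.sq_iteratedDeriv_isBigO {b : ℝ → ℝ} (hdec : HasRapidDecay b) (N k : ℕ) :
    (fun y => iteratedDeriv k b y ^ 2) =O[Filter.atTop] fun y => y ^ (-(N : ℝ)) := by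
  obtain ⟨C, hC⟩ := hdec N k
  refine Asymptotics.IsBigO.of_bound (C ^ 2) ?_
  filter_upwards [Filter.eventually_ge_atTop 1] with y hy
  have hy₀ : 0 < y := by linarith
  have hpow : 1 ≤ (1 + y) ^ N := one_le_pow₀ (by linarith)
  rw [norm_of_nonneg (by positivity), norm_of_nonneg (by positivity), rpow_neg hy₀.le,
    rpow_natCast, ← div_eq_mul_inv, le_div_iff₀ (by positivity)]
  calc iteratedDeriv k b y ^ 2 * y ^ N
      ≤ iteratedDeriv k b y ^ 2 * ((1 + y) ^ N * (1 + y) ^ N) := by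
        gcongr
        calc y ^ N ≤ (1 + y) ^ N := by gcongr; linarith
          _ ≤ (1 + y) ^ N * (1 + y) ^ N := le_mul_of_one_le_left (by positivity) hpow
    _ = ((1 + y) ^ N * |iteratedDeriv k b y|) ^ 2 := by rw [mul_pow, sq_abs]; ring
    _ ≤ C ^ 2 := by gcongr; exact hC y hy₀.le

theorem HasRapidDecay.integrableOn_rpow_mul (hdec : HasRapidDecay b)
    (hb : ContDiff ℝ 1 b) {p : ℝ} (hp : -1 < p) :
    IntegrableOn (fun y => y ^ p * (b y ^ 2 + deriv b y ^ 2)) (Set.Ioi 0) := by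
  have hcont : Continuous fun y => b y ^ 2 + deriv b y ^ 2 :=
    (hb.continuous.pow 2).add ((hb.continuous_deriv le_rfl).pow 2)
  obtain ⟨N, hN⟩ := exists_nat_gt (p + 1)
  have htop := (hdec.sq_iteratedDeriv_isBigO N 0).add (hdec.sq_iteratedDeriv_isBigO N 1)
  simp only [iteratedDeriv_zero, iteratedDeriv_one] at htop
  have hbot : (fun y => b y ^ 2 + deriv b y ^ 2) =O[nhdsWithin 0 (Set.Ioi 0)]
      fun y => y ^ (-(0 : ℝ)) := by
    simp only [neg_zero, rpow_zero]
    exact (hcont.continuousAt.mono_left nhdsWithin_le_nhds).isBigO_one ℝ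
  simpa only [add_sub_cancel_right] using mellin_convergent_of_isBigO_scalar
    (hcont.locallyIntegrable.locallyIntegrableOn _) htop hN hbot (by linarith : 0 < p + 1)

theorem integral_Ioi_rpow_mul_sq_add_sq_deriv_pos {p : ℝ} (hb : Continuous b)
    (hb₀ : ∃ y, 0 ≤ y ∧ b y ≠ 0)
    (hint : IntegrableOn (fun y => y ^ p * (b y ^ 2 + deriv b y ^ 2)) (Set.Ioi 0)) :
    0 < ∫ y in Set.Ioi 0, y ^ p * (b y ^ 2 + deriv b y ^ 2) := by
  obtain ⟨y, hy, hby⟩ := hb₀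
  have hopen : IsOpen ({y | b y ≠ 0} ∩ Set.Ioi 0) :=
    (isOpen_ne_fun hb continuous_const).inter isOpen_Ioi
  have hne : ({y | b y ≠ 0} ∩ Set.Ioi 0).Nonempty :=
    mem_closure_iff.1 (by rwa [closure_Ioi]) _ (isOpen_ne_fun hb continuous_const) hby
  rw [setIntegral_pos_iff_support_of_nonneg_ae _ hint]
  · refine (hopen.measure_pos volume hne).trans_le (measure_mono ?_)
    rintro x ⟨hbx, hx : 0 < x⟩
    have hbx : b x ≠ 0 := hbx
    exact ⟨ne_of_gt (by positivity), hx⟩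
  · filter_upwards [ae_restrict_mem measurableSet_Ioi] with x (hx : 0 < x)
    simp only [Pi.zero_apply]
    positivity

end ProfileMoments

section InitialData

theorem tsupport_subset_annulus {V M : Type*} [NormedAddCommGroup V] [Zero M] {h : V → M}
    {r₀ r₁ : ℝ}
    (hh : ∀ ξ, h ξ ≠ 0 → r₀ ≤ ‖ξ‖ ∧ ‖ξ‖ ≤ r₁) : tsupport h ⊆ {ξ | r₀ ≤ ‖ξ‖ ∧ ‖ξ‖ ≤ r₁} :=
  closure_minimal hh ((isClosed_le continuous_const continuous_norm).inter
    (isClosed_le continuous_norm continuous_const))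

variable {V : Type*} [NormedAddCommGroup V] [InnerProductSpace ℝ V] [FiniteDimensional ℝ V]
  [MeasurableSpace V] [BorelSpace V] {b : ℝ → ℝ} {h : V → ℂ}

theorem galleryWave_zero (b : ℝ → ℝ) (μ : ℝ) (h : V → ℂ) (x : ℝ) :
    galleryWave b μ h 0 x = fourierSynthesis fun ξ => b (‖ξ‖ * x) * h ξ := by
  simp [galleryWave]

theorem deriv_galleryWave_zero {C : ℝ} (hb : ContDiff ℝ 1 b) (hC : ∀ y, 0 ≤ y → |deriv b y| ≤ C)
    (hh : Continuous h) (hhc : HasCompactSupport h) (μ : ℝ) {x : ℝ} (hx : 0 < x) (y : V) :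
    deriv (fun s => galleryWave b μ h 0 s y) x
      = fourierSynthesis (fun ξ => (‖ξ‖ * deriv b (‖ξ‖ * x) : ℝ) * h ξ) y := by
  have := hb.continuous
  have := hb.continuous_deriv le_rfl
  simp only [galleryWave_zero]
  refine (hasDerivAt_integral_of_dominated_loc_of_deriv_le (Ioi_mem_nhds hx)
    (F' := fun s ξ => Complex.exp (Complex.I * (⟪y, ξ⟫ : ℝ)) *
      ((‖ξ‖ * deriv b (‖ξ‖ * s) : ℝ) * h ξ))
    (bound := fun ξ => ‖ξ‖ * C * ‖h ξ‖) (.of_forall fun s => ?_) ?_ ?_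
    (.of_forall fun ξ s (hs : 0 < s) => ?_) ?_ (.of_forall fun ξ s _ => ?_)).2.deriv
  · exact Continuous.aestronglyMeasurable (by fun_prop)
  · exact Continuous.integrable_of_hasCompactSupport (by fun_prop) hhc.mul_left.mul_left
  · exact Continuous.aestronglyMeasurable (by fun_prop)
  · rw [norm_mul, norm_cexp_I_mul_ofReal, one_mul, norm_mul, Complex.norm_real, norm_mul,
      norm_norm]
    gcongr
    exact hC _ (by positivity)
  · exact Continuous.integrable_of_hasCompactSupport (by fun_prop) hhc.norm.mul_left
  · have hchain := ((hb.differentiable one_ne_zero).differentiableAt (x := ‖ξ‖ * s)).hasDerivAt.comp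
      s ((hasDerivAt_id s).const_mul ‖ξ‖)
    rw [mul_one, mul_comm] at hchain
    exact (hchain.ofReal_comp.mul_const (h ξ)).const_mul _

theorem integrable_norm_rpow_mul_sq (hh : Continuous h) (hhc : HasCompactSupport h)
    (hh₀ : 0 ∉ tsupport h) (s : ℝ) : Integrable fun ξ => ‖ξ‖ ^ s * ‖h ξ‖ ^ 2 := by
  have hsupp : tsupport (fun ξ => ‖ξ‖ ^ s * ‖h ξ‖ ^ 2) ⊆ tsupport h :=
    closure_mono fun ξ hξ => by
      contrapose! hξ
      simp [Function.notMem_support.1 hξ]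
  refine (continuous_of_tsupport fun ξ hξ => ?_).integrable_of_hasCompactSupport
    (hhc.of_isClosed_subset (isClosed_tsupport _) hsupp)
  have hξ₀ : ‖ξ‖ ≠ 0 := norm_ne_zero_iff.2 fun hξ₀ => hh₀ (hξ₀ ▸ hsupp hξ)
  exact (continuous_norm.continuousAt.rpow_const (.inl hξ₀)).mul (hh.norm.pow 2).continuousAt

end InitialData

section Energy

variable {d : ℕ} {b : ℝ → ℝ} {h : EuclideanSpace ℝ (Fin (d - 1)) → ℂ}

theorem gradSq_galleryWave_zero {C : ℝ} (hb : ContDiff ℝ 1 b)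
    (hC : ∀ y, 0 ≤ y → |deriv b y| ≤ C) (hh : Continuous h) (hhc : HasCompactSupport h) (μ : ℝ)
    {x : ℝ} (hx : 0 < x) (y : EuclideanSpace ℝ (Fin (d - 1))) :
    gradSq d (galleryWave b μ h 0) x y
      = ∑ i, ‖fourierSynthesis (fun ξ => Complex.I * ξ i * b (‖ξ‖ * x) * h ξ) y‖ ^ 2
        + ‖fourierSynthesis (fun ξ => (‖ξ‖ * deriv b (‖ξ‖ * x) : ℝ) * h ξ) y‖ ^ 2 := by
  have := hb.continuous
  have hfderiv (i : Fin (d - 1)) :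
      fderiv ℝ (galleryWave b μ h 0 x) y (EuclideanSpace.single i 1)
        = fourierSynthesis (fun ξ => Complex.I * ξ i * b (‖ξ‖ * x) * h ξ) y := by
    rw [galleryWave_zero, fderiv_fourierSynthesis_apply]
    · simp [EuclideanSpace.inner_single_left, mul_assoc]
    · exact Continuous.integrable_of_hasCompactSupport (by fun_prop) hhc.mul_left
    · exact Continuous.integrable_of_hasCompactSupport (by fun_prop) hhc.mul_left.norm.mul_left
  simp_rw [gradSq, hfderiv, deriv_galleryWave_zero hb hC hh hhc μ hx]

theorem integral_gradSq_galleryWave_zero {C : ℝ} (hb : ContDiff ℝ 1 b)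
    (hC : ∀ y, 0 ≤ y → |deriv b y| ≤ C) (hh : Continuous h) (hhc : HasCompactSupport h) (μ : ℝ)
    {x : ℝ} (hx : 0 < x) :
    ∫ y, gradSq d (galleryWave b μ h 0) x y = (2 * π) ^ (d - 1) *
      ∫ ξ, (b (‖ξ‖ * x) ^ 2 + deriv b (‖ξ‖ * x) ^ 2) * (‖ξ‖ ^ 2 * ‖h ξ‖ ^ 2) := by
  have := hb.continuous
  have := hb.continuous_deriv le_rfl
  have hint {f : EuclideanSpace ℝ (Fin (d - 1)) → ℂ} (hf : Continuous f) :
      Integrable fun ξ => f ξ * h ξ :=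
    (hf.mul hh).integrable_of_hasCompactSupport hhc.mul_left
  have hint₂ {f : EuclideanSpace ℝ (Fin (d - 1)) → ℂ} (hf : Continuous f) :
      MemLp (fun ξ => f ξ * h ξ) 2 volume :=
    (hf.mul hh).memLp_of_hasCompactSupport hhc.mul_left
  have hsq {f : EuclideanSpace ℝ (Fin (d - 1)) → ℂ} (hf : Continuous f) :
      Integrable fun ξ => ‖f ξ * h ξ‖ ^ 2 := (hint₂ hf).integrable_norm_pow two_ne_zero
  have hplancherel {f : EuclideanSpace ℝ (Fin (d - 1)) → ℂ} (hf : Continuous f) :=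
    integral_norm_sq_fourierSynthesis (hint hf) (hint₂ hf)
  have hf₁ (i : Fin (d - 1)) : Continuous fun ξ : EuclideanSpace ℝ (Fin (d - 1)) =>
      Complex.I * ξ i * b (‖ξ‖ * x) := by fun_prop
  have hf₂ : Continuous fun ξ : EuclideanSpace ℝ (Fin (d - 1)) =>
      ((‖ξ‖ * deriv b (‖ξ‖ * x) : ℝ) : ℂ) := by fun_prop
  have hint' {f : EuclideanSpace ℝ (Fin (d - 1)) → ℂ} (hf : Continuous f) :=
    integrable_norm_sq_fourierSynthesis (hint hf) (hint₂ hf)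
  simp_rw [gradSq_galleryWave_zero hb hC hh hhc μ hx]
  rw [integral_add (integrable_finsetSum _ fun i _ => hint' (hf₁ i)) (hint' hf₂),
    integral_finsetSum _ fun i _ => hint' (hf₁ i), hplancherel hf₂]
  simp_rw [fun i => hplancherel (hf₁ i)]
  rw [← Finset.mul_sum, ← mul_add, ← integral_finsetSum _ fun i _ => hsq (hf₁ i),
    ← integral_add (integrable_finsetSum _ fun i _ => hsq (hf₁ i)) (hsq hf₂),
    finrank_euclideanSpace_fin]
  congr 2
  funext ξ
  simp only [norm_mul, Complex.norm_I, Complex.norm_real, norm_eq_abs, mul_pow, sq_abs, one_mul,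
    ← Finset.sum_mul, ← EuclideanSpace.real_norm_sq_eq, abs_norm]
  ring

theorem HasRapidDecay.integral_energy_galleryWave_zero (hdec : HasRapidDecay b)
    (hb : ContDiff ℝ 1 b) (hh : Continuous h) (hhc : HasCompactSupport h) (hh₀ : 0 ∉ tsupport h)
    (μ : ℝ) {κ : ℝ} (hκ : 0 < κ) :
    ∫ x in Set.Ioi (0 : ℝ), ∫ y, x ^ (1 / κ - 1) * (κ * x * gradSq d (galleryWave b μ h 0) x y)
      = κ * (2 * π) ^ (d - 1) * ((∫ x in Set.Ioi 0, x ^ (1 / κ) * (b x ^ 2 + deriv b x ^ 2)) *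
          ∫ ξ, ‖ξ‖ ^ (1 - 1 / κ) * ‖h ξ‖ ^ 2) := by
  have := hb.continuous
  have := hb.continuous_deriv le_rfl
  obtain ⟨C, hC⟩ := hdec 0 1
  simp only [pow_zero, one_mul, iteratedDeriv_one] at hC
  have hweight : (fun ξ => ‖ξ‖ ^ (-(1 / κ + 1)) * (‖ξ‖ ^ 2 * ‖h ξ‖ ^ 2))
      = fun ξ => ‖ξ‖ ^ (1 - 1 / κ) * ‖h ξ‖ ^ 2 := by
    funext ξ
    rcases eq_or_ne ξ 0 with rfl | hξ
    · simp [image_eq_zero_of_notMem_tsupport hh₀]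
    · rw [← mul_assoc, ← rpow_natCast ‖ξ‖ 2, ← rpow_add (norm_pos_iff.2 hξ)]
      congr 2
      push_cast
      ring
  have hinner : ∀ x ∈ Set.Ioi (0 : ℝ),
      ∫ y, x ^ (1 / κ - 1) * (κ * x * gradSq d (galleryWave b μ h 0) x y)
        = κ * (2 * π) ^ (d - 1) * (x ^ (1 / κ) *
          ∫ ξ, (b (‖ξ‖ * x) ^ 2 + deriv b (‖ξ‖ * x) ^ 2) * (‖ξ‖ ^ 2 * ‖h ξ‖ ^ 2)) := by
    intro x (hx : 0 < x)
    rw [integral_const_mul, integral_const_mul, integral_gradSq_galleryWave_zero hb hC hh hhc μ hx,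
      rpow_sub_one hx.ne']
    field_simp
  rw [setIntegral_congr_fun measurableSet_Ioi hinner, integral_const_mul,
    integral_Ioi_rpow_mul_integral_comp_norm_mul (G := fun s => b s ^ 2 + deriv b s ^ 2)
      (by fun_prop) (hdec.integrableOn_rpow_mul hb (neg_one_lt_zero.trans (by positivity)))
      (by simp) (by fun_prop) (hweight ▸ integrable_norm_rpow_mul_sq hh hhc hh₀ _), hweight]

theorem min_rpow_le_rpow {x₀ x x₁ : ℝ} (hx₀ : 0 < x₀) (h₀ : x₀ ≤ x) (h₁ : x ≤ x₁) (s : ℝ) :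
    min (x₀ ^ s) (x₁ ^ s) ≤ x ^ s := by
  rcases le_total 0 s with hs | hs
  · exact (min_le_left _ _).trans (rpow_le_rpow hx₀.le h₀ hs)
  · exact (min_le_right _ _).trans (rpow_le_rpow_of_nonpos (hx₀.trans_le h₀) h₁ hs)

variable (d) in
theorem HasRapidDecay.exists_le_integral_energy_galleryWave_zero (hdec : HasRapidDecay b)
    (hb : ContDiff ℝ 1 b) (hb₀ : ∃ y, 0 ≤ y ∧ b y ≠ 0) {c₀ c₁ : ℝ} (hc₀ : 0 < c₀)
    (hc₀₁ : c₀ ≤ c₁) (μ : ℝ) {κ : ℝ} (hκ : 0 < κ) :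
    ∃ c, 0 < c ∧ ∀ l, 0 < l → ∀ h : EuclideanSpace ℝ (Fin (d - 1)) → ℂ, Continuous h →
      (∀ ξ, h ξ ≠ 0 → c₀ * l ≤ ‖ξ‖ ∧ ‖ξ‖ ≤ c₁ * l) →
        c * l ^ (1 - 1 / κ) * ∫ ξ, ‖h ξ‖ ^ 2 ≤ ∫ x in Set.Ioi (0 : ℝ), ∫ y,
          x ^ (1 / κ - 1) * (κ * x * gradSq d (galleryWave b μ h 0) x y) := by
  have hc₁ : 0 < c₁ := hc₀.trans_le hc₀₁
  have hK := integral_Ioi_rpow_mul_sq_add_sq_deriv_pos hb.continuous hb₀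
    (hdec.integrableOn_rpow_mul hb (p := 1 / κ) (neg_one_lt_zero.trans (by positivity)))
  set K := ∫ x in Set.Ioi 0, x ^ (1 / κ) * (b x ^ 2 + deriv b x ^ 2)
  set m := min (c₀ ^ (1 - 1 / κ)) (c₁ ^ (1 - 1 / κ))
  have : 0 < m := lt_min (by positivity) (by positivity)
  refine ⟨κ * (2 * π) ^ (d - 1) * (K * m), by positivity, fun l hl h hh hhl => ?_⟩
  have hsupp := tsupport_subset_annulus hhl
  have hhc : HasCompactSupport h := .of_support_subset_isCompact (isCompact_closedBall 0 (c₁ * l))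
    fun ξ hξ => mem_closedBall_zero_iff.2 (hhl ξ hξ).2
  have hh₀ : 0 ∉ tsupport h := fun h₀ => by
    have : c₀ * l ≤ ‖(0 : EuclideanSpace ℝ (Fin (d - 1)))‖ := (hsupp h₀).1
    rw [norm_zero] at this
    exact this.not_gt (by positivity)
  rw [hdec.integral_energy_galleryWave_zero hb hh hhc hh₀ μ hκ]
  have hlower : m * l ^ (1 - 1 / κ) * ∫ ξ, ‖h ξ‖ ^ 2 ≤ ∫ ξ, ‖ξ‖ ^ (1 - 1 / κ) * ‖h ξ‖ ^ 2 := by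
    rw [← integral_const_mul]
    refine integral_mono ((hh.memLp_of_hasCompactSupport hhc).integrable_norm_pow
      two_ne_zero |>.const_mul _) (integrable_norm_rpow_mul_sq hh hhc hh₀ _) fun ξ => ?_
    rcases eq_or_ne (h ξ) 0 with hξ | hξ
    · simp [hξ]
    · beta_reduce
      gcongr
      rw [min_mul_of_nonneg _ _ (by positivity), ← mul_rpow hc₀.le hl.le, ← mul_rpow hc₁.le hl.le]
      exact min_rpow_le_rpow (by positivity) (hhl ξ hξ).1 (hhl ξ hξ).2 _
  calc κ * (2 * π) ^ (d - 1) * (K * m) * l ^ (1 - 1 / κ) * ∫ ξ, ‖h ξ‖ ^ 2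
      = κ * (2 * π) ^ (d - 1) * (K * (m * l ^ (1 - 1 / κ) * ∫ ξ, ‖h ξ‖ ^ 2)) := by ring
    _ ≤ _ := by gcongr

end Energy

section MixedNorm

theorem ofReal_integral_le_lintegral_ofReal {α : Type*} [MeasurableSpace α] {ν : Measure α}
    {f : α → ℝ} (hf : ∀ x, 0 ≤ f x) :
    ENNReal.ofReal (∫ x, f x ∂ν) ≤ ∫⁻ x, ENNReal.ofReal (f x) ∂ν := by
  have h := enorm_integral_le_lintegral_enorm (μ := ν) f
  simp_rw [enorm_of_nonneg (integral_nonneg hf), enorm_of_nonneg (hf _)] at h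
  exact h

variable {T X Y E : Type*} [MeasurableSpace T] [MeasurableSpace X] [MeasurableSpace Y]
  [NormedAddCommGroup E] {τ : Measure T} {ν : Measure X} {σ : Measure Y} [SFinite σ]

theorem ofReal_integral_integral_norm_rpow_le {f : X × Y → E}
    (hf : AEStronglyMeasurable f (ν.prod σ)) {r : ℝ} (hr : 0 ≤ r) :
    ENNReal.ofReal (∫ x, ∫ y, ‖f (x, y)‖ ^ r ∂σ ∂ν) ≤ ∫⁻ z, ‖f z‖ₑ ^ r ∂ν.prod σ := by
  rw [lintegral_prod _ (hf.enorm.pow_const r)]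
  refine (ofReal_integral_le_lintegral_ofReal fun x => by positivity).trans
    (lintegral_mono fun x => (ofReal_integral_le_lintegral_ofReal fun y => by positivity).trans
      (lintegral_mono fun y => ?_))
  rw [← ENNReal.ofReal_rpow_of_nonneg (norm_nonneg _) hr, ofReal_norm]

theorem rpow_integral_rpow_integral_norm_rpow_le_sqrt {f : T → X × Y → E}
    (hf : ∀ t, AEStronglyMeasurable (f t) (ν.prod σ)) {q r M : ℝ} (hq : 0 < q) (hr : 0 < r)
    (hM : 0 ≤ M) (hle : ∫⁻ t, (∫⁻ z, ‖f t z‖ₑ ^ r ∂ν.prod σ) ^ (q / r) ∂τ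
      ≤ ENNReal.ofReal (M ^ (q / 2))) :
    (∫ t, ((∫ x, ∫ y, ‖f t (x, y)‖ ^ r ∂σ ∂ν) ^ (1 / r)) ^ q ∂τ) ^ (1 / q) ≤ √M := by
  have hnonneg (t : T) : 0 ≤ ∫ x, ∫ y, ‖f t (x, y)‖ ^ r ∂σ ∂ν := by positivity
  have hint : ∫ t, ((∫ x, ∫ y, ‖f t (x, y)‖ ^ r ∂σ ∂ν) ^ (1 / r)) ^ q ∂τ ≤ M ^ (q / 2) := by
    rw [← ENNReal.ofReal_le_ofReal_iff (by positivity)]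
    refine (ofReal_integral_le_lintegral_ofReal fun t => by positivity).trans
      (le_trans (lintegral_mono fun t => ?_) hle)
    rw [← rpow_mul (hnonneg t), one_div_mul_eq_div,
      ← ENNReal.ofReal_rpow_of_nonneg (hnonneg t) (by positivity)]
    gcongr
    exact ofReal_integral_integral_norm_rpow_le (hf t) hr.le
  calc _ ≤ (M ^ (q / 2)) ^ (1 / q) := by gcongr
    _ = √M := by
      rw [← rpow_mul hM, sqrt_eq_rpow]
      congr 1
      field_simp

end MixedNorm

section GalleryWaveStrichartz

variable {V : Type*} [NormedAddCommGroup V] [InnerProductSpace ℝ V] [FiniteDimensional ℝ V]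
  [MeasurableSpace V] [BorelSpace V] {b : ℝ → ℝ} {h : V → ℂ}

theorem continuous_uncurry_galleryWave (hb : Continuous b) (hh : Continuous h)
    (hhc : HasCompactSupport h) (μ t : ℝ) :
    Continuous fun z : ℝ × V => galleryWave b μ h t z.1 z.2 := by
  have hset (z : ℝ × V) : galleryWave b μ h t z.1 z.2
      = ∫ ξ in tsupport h, Complex.exp (Complex.I * (⟪z.2, ξ⟫ : ℝ)) *
          (b (‖ξ‖ * z.1) * cos (t * √μ * √‖ξ‖) * h ξ) :=
    (setIntegral_eq_integral_of_forall_compl_eq_zero fun ξ hξ => by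
      simp only [image_eq_zero_of_notMem_tsupport hξ, mul_zero]).symm
  simp_rw [hset]
  refine continuous_parametric_integral_of_continuous ?_ hhc
  simp only [Function.uncurry_def]
  fun_prop

theorem mixedNorm_galleryWave_eq_zero (hb : ∀ y, 0 ≤ y → b y = 0) (μ : ℝ) (h : V → ℂ)
    {q r : ℝ} (hq : 0 < q) (hr : 0 < r) (I : Set ℝ) :
    (∫ t in I, ((∫ x in Set.Ioi (0 : ℝ), ∫ y,
      ‖galleryWave b μ h t x y‖ ^ r) ^ (1 / r)) ^ q) ^ (1 / q) = 0 := by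
  have hzero (t : ℝ) : ∫ x in Set.Ioi (0 : ℝ), ∫ y, ‖galleryWave b μ h t x y‖ ^ r = 0 :=
    setIntegral_eq_zero_of_forall_eq_zero fun x hx => by
      simp [galleryWave, fourierSynthesis, hb _ (mul_nonneg (norm_nonneg _) (le_of_lt hx)),
        zero_rpow hr.ne']
  simp [hzero, zero_rpow, hq.ne', hr.ne']

theorem sqrt_mul_rpow_mul_le {C c l α β γ I En : ℝ} (hC : 0 ≤ C) (hc : 0 < c) (hl : 0 < l)
    (hα : α = 2 * γ + β) (hI : c * l ^ β * I ≤ En) :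
    √(C * l ^ α * I) ≤ √(C / c) * l ^ γ * √En := by
  have hsq : C * l ^ α * I = C / c * (l ^ γ) ^ 2 * (c * l ^ β * I) := by
    rw [hα, rpow_add hl, mul_comm 2 γ, rpow_mul hl.le, rpow_two]
    field_simp
  calc √(C * l ^ α * I) ≤ √(C / c * (l ^ γ) ^ 2 * En) := by rw [hsq]; gcongr
    _ = √(C / c) * l ^ γ * √En := by
      rw [sqrt_mul (by positivity), sqrt_mul (by positivity), sqrt_sq (by positivity)]

variable {d : ℕ} {μ κ c₀ c₁ q r : ℝ}

theorem HasRapidDecay.exists_strichartz_galleryWave (hdec : HasRapidDecay b)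
    (hb : ContDiff ℝ (⊤ : ℕ∞) b) (hb₀ : ∃ y, 0 ≤ y ∧ b y ≠ 0) (hκ : 0 < κ) (hμ : 0 < μ)
    (hc₀ : 0 < c₀) (hc₀₁ : c₀ ≤ c₁) (hd : 1 ≤ d) (hq : 2 < q) (hr : 2 < r)
    (hqr : 1 / q = ((d : ℝ) - 1) / 2 * (1 / 2 - 1 / r)) :
    ∃ C, 0 < C ∧ ∀ I : Set ℝ, MeasurableSet I → volume I ≠ ⊤ → I ⊆ Set.Ici 0 → ∀ l, 0 < l →
      ∀ h : EuclideanSpace ℝ (Fin (d - 1)) → ℂ, Continuous h →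
        (∀ ξ, h ξ ≠ 0 → c₀ * l ≤ ‖ξ‖ ∧ ‖ξ‖ ≤ c₁ * l) →
          (∫ t in I, ((∫ x in Set.Ioi (0 : ℝ), ∫ y,
              ‖galleryWave b μ h t x y‖ ^ r) ^ (1 / r)) ^ q) ^ (1 / q)
            ≤ C * l ^ ((3 * (d : ℝ) + 1) / 4 * (1 / 2 - 1 / r) + 1 / (2 * κ) - 1) *
              √(∫ x in Set.Ioi (0 : ℝ), ∫ y,
                x ^ (1 / κ - 1) * (κ * x * gradSq d (galleryWave b μ h 0) x y)) := by
  have hdim : (Module.finrank ℝ (EuclideanSpace ℝ (Fin (d - 1))) : ℝ) = d - 1 := by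
    rw [finrank_euclideanSpace_fin, Nat.cast_sub hd, Nat.cast_one]
  obtain ⟨C, hC, hupper⟩ := hdec.exists_lintegral_galleryWave_le
    (EuclideanSpace ℝ (Fin (d - 1))) hb hc₀ hc₀₁ hμ hq hr (by rw [hdim, hqr])
  obtain ⟨c, hc, hlower⟩ := hdec.exists_le_integral_energy_galleryWave_zero d
    (hb.of_le (mod_cast le_top)) hb₀ hc₀ hc₀₁ μ hκ
  refine ⟨√(C / c) + 1, by positivity, fun I hI hI' hI₀ l hl h hh hhl => ?_⟩
  have hhc : HasCompactSupport h := .of_support_subset_isCompact (isCompact_closedBall 0 (c₁ * l))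
    fun ξ hξ => mem_closedBall_zero_iff.2 (hhl ξ hξ).2
  refine (rpow_integral_rpow_integral_norm_rpow_le_sqrt
    (f := fun t z => galleryWave b μ h t z.1 z.2)
    (fun t => (continuous_uncurry_galleryWave hb.continuous hh hhc μ t).aestronglyMeasurable)
    (by linarith) (by linarith) (by positivity)
    (hupper I hI hI' hI₀ l hl h (hh.memLp_of_hasCompactSupport hhc) hhl)).trans ?_
  have hexp : -(2 / r) + 3 * (Module.finrank ℝ (EuclideanSpace ℝ (Fin (d - 1))) : ℝ) / 4 *
      (1 - 2 / r) = 2 * ((3 * (d : ℝ) + 1) / 4 * (1 / 2 - 1 / r) + 1 / (2 * κ) - 1)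
        + (1 - 1 / κ) := by
    rw [hdim]
    field_simp
    ring
  refine (sqrt_mul_rpow_mul_le hC hc hl hexp (hlower l hl h hh hhl)).trans ?_
  gcongr
  exact le_add_of_nonneg_right zero_le_one

end GalleryWaveStrichartz

section GalleryWaveData

/-- The Fourier data `(2π)^{1−d} ψ(2^{−2j} ξ) φ̂₀(ξ)` of the gallery wave `gw`. -/
def gwData (d : ℕ) (ψ : EuclideanSpace ℝ (Fin (d - 1)) → ℝ) (j : ℕ)
    (φ₀ : EuclideanSpace ℝ (Fin (d - 1)) → ℂ) (ξ : EuclideanSpace ℝ (Fin (d - 1))) : ℂ :=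
  (((2 * π) ^ ((1 : ℤ) - (d : ℤ)) : ℝ) : ℂ) * (ψ (((2 : ℝ) ^ (2 * j))⁻¹ • ξ) * fhat φ₀ ξ)

variable {d : ℕ} {ψ : EuclideanSpace ℝ (Fin (d - 1)) → ℝ}
  {φ₀ : EuclideanSpace ℝ (Fin (d - 1)) → ℂ}

theorem gw_eq_galleryWave (d : ℕ) (μ : ℝ) (b : ℝ → ℝ) (ψ : EuclideanSpace ℝ (Fin (d - 1)) → ℝ)
    (j : ℕ) (φ₀ : EuclideanSpace ℝ (Fin (d - 1)) → ℂ) :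
    gw d μ b ψ j φ₀ = galleryWave b μ (gwData d ψ j φ₀) := by
  funext t x y
  rw [gw, galleryWave, fourierSynthesis, ← integral_const_mul]
  congr 1
  funext ξ
  rw [gwData]
  ring

theorem continuous_gwData (hψ : Continuous ψ) (j : ℕ) (hφ₀ : Integrable φ₀) :
    Continuous (gwData d ψ j φ₀) := by
  have := continuous_fhat hφ₀
  unfold gwData
  fun_prop

theorem norm_mem_annulus_of_gwData_ne_zero {c₀ c₁ : ℝ}
    (hψ : ∀ η, ψ η ≠ 0 → c₀ ≤ ‖η‖ ∧ ‖η‖ ≤ c₁) {j : ℕ} {ξ : EuclideanSpace ℝ (Fin (d - 1))}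
    (hξ : gwData d ψ j φ₀ ξ ≠ 0) : c₀ * 2 ^ (2 * j) ≤ ‖ξ‖ ∧ ‖ξ‖ ≤ c₁ * 2 ^ (2 * j) := by
  have hψξ := hψ _ (Complex.ofReal_ne_zero.1 (left_ne_zero_of_mul (right_ne_zero_of_mul hξ)))
  rwa [norm_smul, norm_inv, norm_of_nonneg (by positivity), inv_mul_eq_div,
    le_div_iff₀ (by positivity), div_le_iff₀ (by positivity)] at hψξ

theorem one_lt_dim_and_two_lt_of_admissible {q r : ℝ} (hq : 2 < q) (hr : 2 ≤ r)
    (hqr : 1 / q = ((d : ℝ) - 1) / 2 * (1 / 2 - 1 / r)) : 1 < d ∧ 2 < r := by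
  have hpos : 0 < ((d : ℝ) - 1) / 2 * (1 / 2 - 1 / r) := hqr ▸ by positivity
  have hr' : 1 / r ≤ 1 / 2 := by gcongr
  have hgap : 1 / r < 1 / 2 := by
    refine hr'.lt_of_ne fun h => ?_
    simp [h] at hpos
  refine ⟨?_, (one_div_lt_one_div (by linarith) two_pos).1 hgap⟩
  have := pos_of_mul_pos_left hpos (by linarith)
  exact_mod_cast (by linarith : (1 : ℝ) < d)

theorem stmt15_general {κ μ : ℝ} (hκ : 0 < κ) (hμ : 0 < μ) {b : ℝ → ℝ}
    (hb : ContDiff ℝ (⊤ : ℕ∞) b) (hbdec : HasRapidDecay b) {c₀ c₁ : ℝ} (hc₀ : 0 < c₀)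
    (hc₀₁ : c₀ ≤ c₁) {q r : ℝ} (hq : 2 < q) (hr : 2 ≤ r)
    (hqr : 1 / q = ((d : ℝ) - 1) / 2 * (1 / 2 - 1 / r)) :
    ∃ C : ℝ, 0 < C ∧ ∀ I : Set ℝ, MeasurableSet I → volume I ≠ ⊤ → I ⊆ Set.Ici 0 →
      ∀ ψ : EuclideanSpace ℝ (Fin (d - 1)) → ℝ, Continuous ψ →
      (∀ η, ψ η ≠ 0 → c₀ ≤ ‖η‖ ∧ ‖η‖ ≤ c₁) →
      ∀ (j : ℕ) (φ₀ : EuclideanSpace ℝ (Fin (d - 1)) → ℂ), Integrable φ₀ →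
        (∫ t in I, ((∫ xd in Set.Ioi (0 : ℝ), ∫ x',
            ‖gw d μ b ψ j φ₀ t xd x'‖ ^ r) ^ (1 / r)) ^ q) ^ (1 / q)
          ≤ C * ((2 : ℝ) ^ (2 * j)) ^
              ((3 * (d : ℝ) + 1) / 4 * (1 / 2 - 1 / r) + 1 / (2 * κ) - 1) *
            √(∫ xd in Set.Ioi (0 : ℝ), ∫ x',
              xd ^ (1 / κ - 1) * (κ * xd * gradSq d (gw d μ b ψ j φ₀ 0) xd x')) := by
  obtain ⟨hd, hr₂⟩ := one_lt_dim_and_two_lt_of_admissible hq hr hqr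
  simp_rw [gw_eq_galleryWave]
  by_cases hb₀ : ∃ y, 0 ≤ y ∧ b y ≠ 0
  · obtain ⟨C, hC, hstr⟩ :=
      hbdec.exists_strichartz_galleryWave hb hb₀ hκ hμ hc₀ hc₀₁ hd.le hq hr₂ hqr
    exact ⟨C, hC, fun I hI hI' hI₀ ψ hψ hψ' j φ₀ hφ₀ => hstr I hI hI' hI₀ _ (by positivity) _
      (continuous_gwData hψ j hφ₀) fun ξ => norm_mem_annulus_of_gwData_ne_zero hψ'⟩
  · push Not at hb₀
    refine ⟨1, one_pos, fun I _ _ _ ψ _ _ j φ₀ _ => ?_⟩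
    rw [mixedNorm_galleryWave_eq_zero hb₀ _ _ (by linarith) (by linarith)]
    positivity

end GalleryWaveData

/-- Strichartz estimates for whispering gallery modes,
`‖u‖_{L^q([0,1];L^r(Ω))} ≲ (2^{2j})^{((3d+1)/4)(1/2−1/r)+1/(2κ)−1}‖(0,∇ₓu₀)‖_ℋ`. -/
theorem stmt15 {d : ℕ} (hd : 2 ≤ d) (κ μ : ℝ) (hκ : 0 < κ) (hμ : 0 < μ)
    (b : ℝ → ℝ) (hb : ContDiff ℝ (⊤ : ℕ∞) b) (hb0 : 0 < b 0)
    (hODE : ∀ y : ℝ, 0 < y →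
      κ * y * deriv (deriv b) y + deriv b y + (μ - κ * y) * b y = 0)
    (hbdec : ∀ N k : ℕ, ∃ C : ℝ, ∀ y : ℝ, 0 ≤ y →
      (1 + y) ^ N * |iteratedDeriv k b y| ≤ C)
    (c₀ c₁ : ℝ) (hc₀ : 0 < c₀) (hc₀₁ : c₀ ≤ c₁)
    (ψ : EuclideanSpace ℝ (Fin (d - 1)) → ℝ)
    (hψ : ContDiff ℝ (⊤ : ℕ∞) ψ) (hψc : HasCompactSupport ψ)
    (hsupp : tsupport ψ ⊆
      {η : EuclideanSpace ℝ (Fin (d - 1)) | c₀ ≤ ‖η‖ ∧ ‖η‖ ≤ c₁})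
    (q r : ℝ) (hq : 2 < q) (hr : 2 ≤ r)
    (hqr : 1 / q = (((d : ℝ) - 1) / 2) * (1 / 2 - 1 / r)) :
    ∃ C : ℝ, 0 < C ∧
      ∀ j : ℕ, ∀ φ₀ : SchwartzMap (EuclideanSpace ℝ (Fin (d - 1))) ℂ,
        (∫ t in Set.Icc (0 : ℝ) 1,
            ((∫ xd in Set.Ioi (0 : ℝ), ∫ x' : EuclideanSpace ℝ (Fin (d - 1)),
              ‖gw d μ b ψ j (fun x => φ₀ x) t xd x'‖ ^ r) ^ (1 / r)) ^ q) ^ (1 / q)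
          ≤ C * ((2 : ℝ) ^ (2 * j)) ^
                ((3 * (d : ℝ) + 1) / 4 * (1 / 2 - 1 / r) + 1 / (2 * κ) - 1) *
              Real.sqrt (∫ xd in Set.Ioi (0 : ℝ),
                ∫ x' : EuclideanSpace ℝ (Fin (d - 1)),
                  xd ^ (1 / κ - 1) * (κ * xd *
                    gradSq d (gw d μ b ψ j (fun x => φ₀ x) 0) xd x')) := by
  obtain ⟨C, hC, hstr⟩ := stmt15_general hκ hμ hb hbdec hc₀ hc₀₁ hq hr hqr
  exact ⟨C, hC, fun j φ₀ => hstr _ measurableSet_Icc (by simp) Set.Icc_subset_Ici_self ψ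
    hψ.continuous (fun η hη => hsupp (subset_tsupport _ hη)) j _ φ₀.integrable⟩

end
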